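/- Let a be a ribbon with n ≥ 4 nodes p_1, …, p_n in cyclic order whose levels l_i = φ(p_i), when listed in increasing order, are l_1, l_3, l_2, l_5, l_4, l_7, l_6, …, l_{n−1}, l_{n−2}, l_n (so the cyclic sequence of levels realizes the zig-zag permutation (1, 3, 2, 5, 4, 7, 6, …, n−2, n); such a ribbon is a ladder, with p_1 its value-minimal node and p_n its value-maximal node). Suppose the minimal node p_1 and the maximal node p_n are positive: ν(p_1) = ν(p_n) = +1. Then γ(a) equals the number of indices k ∈ {1, …, n/2 − 1} with ν(p_{2k}) = ν(p_{2k+1}). -/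

import Mathlib

open scoped RealInnerProductSpace

noncomputable section

abbrev E2 : Type := EuclideanSpace ℝ (Fin 2)

/-- The point (cos t, sin t) on the unit circle in ℝ². -/
def sphPt (t : ℝ) : E2 := (EuclideanSpace.equiv (Fin 2) ℝ).symm ![Real.cos t, Real.sin t]

/-- A ribbon with `n` nodes, encoded via the angle parametrization `g = φ ∘ (cos, sin)`
of a C^∞ function `φ : S¹ → ℝ` whose critical points on the circle are exactly the `n`
nondegenerate local extrema (nodes) at angles `θ 0 < θ 1 < ⋯ < θ (n-1)` in `[0, 2π)`,
with pairwise distinct critical values, together with a marking `ν` of the nodes by `±1`. -/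
structure Ribbon (n : ℕ) : Type where
  g : ℝ → ℝ
  θ : Fin n → ℝ
  ν : Fin n → ℤ
  n_even : Even n
  n_pos : 0 < n
  smooth_g : ContDiff ℝ (⊤ : ℕ∞) g
  periodic_g : Function.Periodic g (2 * Real.pi)
  theta_mem : ∀ i, θ i ∈ Set.Ico (0 : ℝ) (2 * Real.pi)
  theta_mono : StrictMono θ
  node_crit : ∀ i, deriv g (θ i) = 0
  node_nondeg : ∀ i, deriv (deriv g) (θ i) ≠ 0
  crit_only : ∀ t ∈ Set.Ico (0 : ℝ) (2 * Real.pi), deriv g t = 0 → ∃ i, t = θ i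
  values_distinct : ∀ i j, g (θ i) = g (θ j) → i = j
  nu_sign : ∀ i, ν i = 1 ∨ ν i = -1

/-- The signature σ = s₊ − s₋ of a ribbon. -/
def Ribbon.sigma {n : ℕ} (a : Ribbon n) : ℤ := ∑ i, a.ν i

/-- Critical points of `f` in the open unit disk. -/
def critPts (f : E2 → ℝ) : Set E2 :=
  {x | x ∈ Metric.ball (0 : E2) 1 ∧ fderiv ℝ f x = 0}

/-- `f : ℝ² → ℝ` is an extension of the ribbon `a`: it is C^∞, agrees with `φ` on the unit
circle, has nowhere-vanishing gradient on the circle, and at each node the radial derivative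
`⟪∇f(p), p⟫` has sign `ν p` if `p` is a local maximum of `φ` (second derivative of `g`
negative there) and sign `−ν p` if `p` is a local minimum of `φ`. -/
def IsExtension {n : ℕ} (a : Ribbon n) (f : E2 → ℝ) : Prop :=
  ContDiff ℝ (⊤ : ℕ∞) f ∧
  (∀ t : ℝ, f (sphPt t) = a.g t) ∧
  (∀ x ∈ Metric.sphere (0 : E2) 1, fderiv ℝ f x ≠ 0) ∧
  (∀ i : Fin n,
    (deriv (deriv a.g) (a.θ i) < 0 →
      0 < (a.ν i : ℝ) * ⟪gradient f (sphPt (a.θ i)), sphPt (a.θ i)⟫) ∧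
    (0 < deriv (deriv a.g) (a.θ i) →
      (a.ν i : ℝ) * ⟪gradient f (sphPt (a.θ i)), sphPt (a.θ i)⟫ < 0))

/-- The ribbon invariant γ: the infimum, over all extensions `f` of `a`, of the number of
critical points of `f` in the open unit disk (a value in `ℕ∞`). -/
def gammaR {n : ℕ} (a : Ribbon n) : ℕ∞ :=
  sInf {k : ℕ∞ | ∃ f : E2 → ℝ, IsExtension a f ∧ (critPts f).encard = k}

/-- The position-to-index map of the ladder: the levels of a ladder, listed in increasing
order, are `l 0, l 2, l 1, l 4, l 3, …, l (n−2), l (n−3), l (n−1)` (0-indexed), i.e. the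
level occupying position `j` in increasing order is that of the node `zigFin n j`. -/
def zigFin (n : ℕ) (j : Fin n) : Fin n :=
  if _h0 : (j : ℕ) = 0 then j
  else if _h1 : (j : ℕ) = n - 1 then j
  else if _h2 : (j : ℕ) % 2 = 1 then ⟨(j : ℕ) + 1, by have := j.isLt; omega⟩
  else ⟨(j : ℕ) - 1, by have := j.isLt; omega⟩

/-!
The nodes of the ladder are, in cyclic order, a valley `v 0`, a peak `p 0`, a valley `v 1`, …, a
peak `p K`; the valley `v (k + 1)` is lower than the peak `p k`, and the values on the two sides of
such a pair are separated by its two levels.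

*Every pair with equal signs costs a critical point.* If both nodes are negative, follow the
component of the superlevel set of the extension that leaves `p k` inwards and the component of the
sublevel set that leaves `v (k + 1)` inwards. If one of them does not reach the circle elsewhere, it
encloses a local extremum. Otherwise the two reach the circle at interlaced points, so they cross,
although one lies above the level of `p k` and the other below the lower level of `v (k + 1)`.
If both nodes are positive, `p k` is a strict local maximum of the extension on the closed disk, and
the mountain pass between `p k` and `p K` is a saddle whose level lies between those of `v (k + 1)`
and `p k`. The critical points of distinct pairs are distinct, because these level intervals are
disjoint and an enclosed extremum determines its node.

*Nothing else costs one.* Start with a function without critical points on the disk, with boundary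
values `G` increasing from `v 0` to `p K` along both arcs, and blend `G` into the given boundary
function `g` in a collar of the circle, as `G + (τ + q t * ψ τ) * (g - G)` at the time `τ` and the
angle `t`. Where `q = 0`, critical points lie over angles with `g = G` and have
`τ * g' + (1 - τ) * G' = 0`. The sign of `g - G` at a node governs the sign of the radial derivative
there, and choosing `G` accordingly leaves one crossing with `g' < 0` for each pair of positive
nodes and none for a pair of opposite signs. At a peak of a negative pair, `q` has a plateau on
which the weight overshoots `1`: this reverses the radial derivative and creates one maximum.
-/

section

open Set Filter Metric
open scoped Topology ContDiff Real

/-! ### Derivatives on the line -/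

theorem contDiff_infty_deriv {g : ℝ → ℝ} (hg : ContDiff ℝ ∞ g) : ContDiff ℝ ∞ (deriv g) :=
  (contDiff_infty_iff_deriv.1 hg).2

theorem periodic_deriv {g : ℝ → ℝ} {c : ℝ} (hg : Function.Periodic g c) :
    Function.Periodic (deriv g) c := fun t => by
  rw [← deriv_comp_add_const, funext hg]

theorem deriv_pos_of_deriv_ne_zero {g : ℝ → ℝ} (hg : Differentiable ℝ g) {a b : ℝ} (hab : a < b)
    (hne : ∀ t ∈ Ioo a b, deriv g t ≠ 0) (hlt : g a < g b) : ∀ t ∈ Ioo a b, 0 < deriv g t := by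
  refine (hasDerivWithinAt_forall_lt_or_forall_gt_of_forall_ne (convex_Ioo a b)
    (fun t _ => (hg t).hasDerivAt.hasDerivWithinAt) hne).resolve_left fun hneg => ?_
  have hanti : StrictAntiOn g (Icc a b) :=
    strictAntiOn_of_deriv_neg (convex_Icc a b) hg.continuous.continuousOn
      (by simpa only [interior_Icc] using hneg)
  exact (hanti (left_mem_Icc.2 hab.le) (right_mem_Icc.2 hab.le) hab).not_gt hlt

theorem deriv_neg_of_deriv_ne_zero {g : ℝ → ℝ} (hg : Differentiable ℝ g) {a b : ℝ} (hab : a < b)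
    (hne : ∀ t ∈ Ioo a b, deriv g t ≠ 0) (hlt : g b < g a) : ∀ t ∈ Ioo a b, deriv g t < 0 := by
  simpa only [deriv.neg, neg_pos] using
    deriv_pos_of_deriv_ne_zero hg.neg hab (by simpa only [deriv.neg, neg_ne_zero] using hne)
      (neg_lt_neg hlt)

theorem deriv_nonneg_of_pos_right {u : ℝ → ℝ} {a b : ℝ} (hu : DifferentiableAt ℝ u a)
    (hab : a < b) (hua : u a = 0) (hpos : ∀ t ∈ Ioo a b, 0 < u t) : 0 ≤ deriv u a := by
  have hslope : Tendsto (slope u a) (𝓝[>] a) (𝓝 (deriv u a)) :=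
    hu.hasDerivAt.tendsto_slope.mono_left (nhdsWithin_mono a fun t ht => ht.ne')
  refine ge_of_tendsto hslope ?_
  filter_upwards [Ioo_mem_nhdsGT hab] with t ht
  rw [slope_def_field, hua, sub_zero]
  exact div_nonneg (hpos t ht).le (sub_pos.2 ht.1).le

theorem deriv_nonpos_of_pos_left {u : ℝ → ℝ} {a b : ℝ} (hu : DifferentiableAt ℝ u b)
    (hab : a < b) (hub : u b = 0) (hpos : ∀ t ∈ Ioo a b, 0 < u t) : deriv u b ≤ 0 := by
  have hslope : Tendsto (slope u b) (𝓝[<] b) (𝓝 (deriv u b)) :=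
    hu.hasDerivAt.tendsto_slope.mono_left (nhdsWithin_mono b fun t ht => ht.ne)
  refine le_of_tendsto hslope ?_
  filter_upwards [Ioo_mem_nhdsLT hab] with t ht
  rw [slope_def_field, hub, sub_zero]
  exact div_nonpos_of_nonneg_of_nonpos (hpos t ht).le (sub_neg.2 ht.2).le

/-! ### Ladders -/

/-- A ladder with `K + 1` valleys and `K + 1` peaks: a `2π`-periodic function `g` of the angle
which on a period increases from the valley `v k` to the peak `p k` and decreases from `p k` to
`v (k + 1)`, `k ≤ K`, where `v (K + 1) = v 0 + 2π` closes the circle. The levels of the nodes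
interleave as `v 0 < v 1 < p 0 < v 2 < p 1 < ⋯ < v K < p (K - 1) < p K`. -/
structure IsLadder (g : ℝ → ℝ) (K : ℕ) (v p : ℕ → ℝ) : Prop where
  contDiff : ContDiff ℝ ∞ g
  periodic : Function.Periodic g (2 * π)
  valley_lt_peak : ∀ k ≤ K, v k < p k
  peak_lt_valley : ∀ k ≤ K, p k < v (k + 1)
  closing : v (K + 1) = v 0 + 2 * π
  deriv_pos : ∀ k ≤ K, ∀ t ∈ Ioo (v k) (p k), 0 < deriv g t
  deriv_neg : ∀ k ≤ K, ∀ t ∈ Ioo (p k) (v (k + 1)), deriv g t < 0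
  deriv_valley : ∀ k ≤ K, deriv g (v k) = 0
  deriv_peak : ∀ k ≤ K, deriv g (p k) = 0
  deriv2_valley : ∀ k ≤ K, 0 < deriv (deriv g) (v k)
  deriv2_peak : ∀ k ≤ K, deriv (deriv g) (p k) < 0
  valley_lt_valley : ∀ k < K, g (v k) < g (v (k + 1))
  valley_lt_prev_peak : ∀ k < K, g (v (k + 1)) < g (p k)
  peak_lt_peak : ∀ k < K, g (p k) < g (p (k + 1))
  peak_lt_second_valley : ∀ k, k + 1 < K → g (p k) < g (v (k + 2))

theorem exists_mem_Ico_succ {v : ℕ → ℝ} {t : ℝ} (h0 : v 0 ≤ t) :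
    ∀ {N : ℕ}, t < v N → ∃ k < N, t ∈ Ico (v k) (v (k + 1))
  | 0, hN => absurd h0 hN.not_ge
  | N + 1, hN => by
    rcases le_or_gt (v N) t with h | h
    · exact ⟨N, N.lt_succ_self, h, hN⟩
    · obtain ⟨k, hk, ht⟩ := exists_mem_Ico_succ h0 h
      exact ⟨k, hk.trans N.lt_succ_self, ht⟩

theorem strictMonoOn_Iic_nat {u : ℕ → ℝ} {N : ℕ} (h : ∀ k < N, u k < u (k + 1)) :
    StrictMonoOn u (Iic N) :=
  strictMonoOn_of_lt_succ ordConnected_Iic fun k _ _ hk => h k hk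

namespace IsLadder

variable {g : ℝ → ℝ} {K : ℕ} {v p : ℕ → ℝ} (h : IsLadder g K v p)
include h

theorem differentiable : Differentiable ℝ g := h.contDiff.differentiable (by simp)

theorem contDiff_deriv : ContDiff ℝ ∞ (deriv g) := contDiff_infty_deriv h.contDiff

theorem valley_lt_valley_succ {k : ℕ} (hk : k ≤ K) : v k < v (k + 1) :=
  (h.valley_lt_peak k hk).trans (h.peak_lt_valley k hk)

theorem valley_strictMonoOn : StrictMonoOn v (Iic (K + 1)) :=
  strictMonoOn_Iic_nat fun _ hk => h.valley_lt_valley_succ (Nat.lt_succ_iff.1 hk)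

theorem peak_strictMonoOn : StrictMonoOn p (Iic K) :=
  strictMonoOn_Iic_nat fun k hk => (h.peak_lt_valley k hk.le).trans (h.valley_lt_peak _ hk)

theorem level_valley_strictMonoOn : StrictMonoOn (fun k => g (v k)) (Iic K) :=
  strictMonoOn_Iic_nat h.valley_lt_valley

theorem level_peak_strictMonoOn : StrictMonoOn (fun k => g (p k)) (Iic K) :=
  strictMonoOn_Iic_nat h.peak_lt_peak

theorem strictMonoOn_Icc {k : ℕ} (hk : k ≤ K) : StrictMonoOn g (Icc (v k) (p k)) :=
  strictMonoOn_of_deriv_pos (convex_Icc _ _) h.differentiable.continuous.continuousOn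
    (by simpa only [interior_Icc] using h.deriv_pos k hk)

theorem strictAntiOn_Icc {k : ℕ} (hk : k ≤ K) : StrictAntiOn g (Icc (p k) (v (k + 1))) :=
  strictAntiOn_of_deriv_neg (convex_Icc _ _) h.differentiable.continuous.continuousOn
    (by simpa only [interior_Icc] using h.deriv_neg k hk)

theorem lt_peak {k : ℕ} (hk : k ≤ K) {t : ℝ} (ht : t ∈ Icc (v k) (v (k + 1))) (hne : t ≠ p k) :
    g t < g (p k) := by
  rcases hne.lt_or_gt with hlt | hgt
  · exact h.strictMonoOn_Icc hk ⟨ht.1, hlt.le⟩ ⟨(h.valley_lt_peak k hk).le, le_rfl⟩ hlt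
  · exact h.strictAntiOn_Icc hk ⟨le_rfl, (h.peak_lt_valley k hk).le⟩ ⟨hgt.le, ht.2⟩ hgt

theorem level_le_peak {k : ℕ} (hk : k ≤ K) {t : ℝ} (ht : t ∈ Icc (v 0) (p k)) :
    g t ≤ g (p k) := by
  obtain ⟨j, hj, htj⟩ := exists_mem_Ico_succ ht.1 (ht.2.trans_lt (h.peak_lt_valley k hk))
  have hjk : j ≤ k := Nat.lt_succ_iff.1 hj
  have htp : g t ≤ g (p j) := by
    rcases eq_or_ne t (p j) with rfl | hne
    · exact le_rfl
    · exact (h.lt_peak (hjk.trans hk) (Ico_subset_Icc_self htj) hne).le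
  exact htp.trans (h.level_peak_strictMonoOn.monotoneOn (mem_Iic.2 (hjk.trans hk)) hk hjk)

theorem valley_le_level {k : ℕ} (hk : k ≤ K) {t : ℝ} (ht : t ∈ Icc (v k) (p K)) :
    g (v k) ≤ g t := by
  have hv0 : v 0 ≤ v k := h.valley_strictMonoOn.monotoneOn
    (mem_Iic.2 (Nat.zero_le _)) (mem_Iic.2 (by omega)) (Nat.zero_le k)
  obtain ⟨j, hj, htj⟩ :=
    exists_mem_Ico_succ (hv0.trans ht.1) (ht.2.trans_lt (h.peak_lt_valley K le_rfl))
  have hkj : k ≤ j := by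
    have := (h.valley_strictMonoOn.lt_iff_lt (mem_Iic.2 (by omega)) (mem_Iic.2 (by omega))).1
      (ht.1.trans_lt htj.2)
    omega
  have hmono := h.level_valley_strictMonoOn.monotoneOn
  rcases le_or_gt t (p j) with hle | hgt
  · calc g (v k) ≤ g (v j) := hmono (mem_Iic.2 hk) (mem_Iic.2 (by omega)) hkj
      _ ≤ g t := (h.strictMonoOn_Icc (by omega)).monotoneOn
          ⟨le_rfl, htj.1.trans hle⟩ ⟨htj.1, hle⟩ htj.1
  · have hjK : j < K :=
      (h.peak_strictMonoOn.lt_iff_lt (mem_Iic.2 (by omega)) (mem_Iic.2 le_rfl)).1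
        (hgt.trans_le ht.2)
    calc g (v k) ≤ g (v (j + 1)) := hmono (mem_Iic.2 hk) (mem_Iic.2 hjK) (by omega)
      _ ≤ g t := (h.strictAntiOn_Icc hjK.le).antitoneOn
          ⟨hgt.le, htj.2.le⟩ ⟨(hgt.trans htj.2).le, le_rfl⟩ htj.2.le

theorem peak_lt_valley_level {j k : ℕ} (hjk : j < k) (hk : k < K) :
    g (p j) < g (v (k + 1)) :=
  (h.peak_lt_second_valley j (by omega)).trans_le
    (h.level_valley_strictMonoOn.monotoneOn (mem_Iic.2 (by omega)) (mem_Iic.2 hk) (by omega))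

end IsLadder

/-! ### The ladder of a ribbon -/

namespace Ribbon

variable {n : ℕ} (a : Ribbon n)

/-- The angles of the nodes, indexed by `ℕ`; the value at the index `n` is the angle of the
first node one turn later, so that the `n` arcs between consecutive nodes are treated alike. -/
def angle (i : ℕ) : ℝ := if hi : i < n then a.θ ⟨i, hi⟩ else a.θ ⟨0, a.n_pos⟩ + 2 * π

variable {a}

theorem angle_of_lt {i : ℕ} (hi : i < n) : a.angle i = a.θ ⟨i, hi⟩ := dif_pos hi

theorem angle_of_not_lt {i : ℕ} (hi : ¬ i < n) : a.angle i = a.θ ⟨0, a.n_pos⟩ + 2 * π :=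
  dif_neg hi

theorem angle_self : a.angle n = a.angle 0 + 2 * π := by
  rw [angle_of_not_lt (lt_irrefl n), angle_of_lt a.n_pos]

theorem angle_lt_angle_succ {i : ℕ} (hi : i < n) : a.angle i < a.angle (i + 1) := by
  rw [angle_of_lt hi]
  rcases lt_or_ge (i + 1) n with h | h
  · rw [angle_of_lt h]
    exact a.theta_mono (Fin.mk_lt_mk.2 i.lt_succ_self)
  · rw [angle_of_not_lt h.not_gt]
    linarith [(a.theta_mem ⟨i, hi⟩).2, (a.theta_mem ⟨0, a.n_pos⟩).1]

theorem deriv_ne_zero_of_mem_arc {i : ℕ} (hi : i < n) {t : ℝ}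
    (ht : t ∈ Ioo (a.angle i) (a.angle (i + 1))) : deriv a.g t ≠ 0 := by
  intro h0
  rw [angle_of_lt hi] at ht
  have hpos : 0 ≤ t := (a.theta_mem _).1.trans ht.1.le
  rcases lt_or_ge t (2 * π) with hlt | hge
  · obtain ⟨j, rfl⟩ := a.crit_only t ⟨hpos, hlt⟩ h0
    have hij : i < j := Fin.lt_def.1 (a.theta_mono.lt_iff_lt.1 ht.1)
    have hji := ht.2
    rw [angle_of_lt (by omega)] at hji
    have := Fin.lt_def.1 (a.theta_mono.lt_iff_lt.1 hji)
    simp only at this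
    omega
  · have hlast : ¬ i + 1 < n := fun hlt => by
      have := ht.2
      rw [angle_of_lt hlt] at this
      linarith [(a.theta_mem ⟨i + 1, hlt⟩).2]
    have ht2 := ht.2
    rw [angle_of_not_lt hlast] at ht2
    have hfirst := (a.theta_mem ⟨0, a.n_pos⟩).2
    obtain ⟨j, hj⟩ := a.crit_only (t - 2 * π) ⟨by linarith, by linarith⟩
      (by rw [(periodic_deriv a.periodic_g).sub_eq, h0])
    have := a.theta_mono.lt_iff_lt.1 (show a.θ j < a.θ ⟨0, a.n_pos⟩ by linarith)
    simp only [Fin.lt_def] at this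
    omega

theorem zigFin_valley {K k : ℕ} (hn : n = 2 * K + 2) (hk : k ≤ K) :
    zigFin n ⟨2 * k - 1, by omega⟩ = ⟨2 * k, by omega⟩ := by
  rcases Nat.eq_zero_or_pos k with rfl | hpos
  · simp [zigFin]
  · unfold zigFin
    rw [dif_neg (by simp only; omega), dif_neg (by simp only; omega), dif_pos (by simp only; omega)]
    exact Fin.ext (by simp only; omega)

theorem zigFin_peak {K k : ℕ} (hn : n = 2 * K + 2) (hk : k ≤ K) :
    zigFin n ⟨min (2 * k + 2) (2 * K + 1), by omega⟩ = ⟨2 * k + 1, by omega⟩ := by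
  unfold zigFin
  rw [dif_neg (by simp only; omega)]
  rcases hk.lt_or_eq with hlt | rfl
  · rw [dif_neg (by simp only; omega), dif_neg (by simp only; omega)]
    exact Fin.ext (by simp only; omega)
  · rw [dif_pos (by simp only; omega)]
    exact Fin.ext (by simp only; omega)

/-- The valley angles of a ribbon whose first node is its minimum. -/
def valley (a : Ribbon n) (k : ℕ) : ℝ := a.angle (2 * k)

/-- The peak angles of a ribbon whose first node is its minimum. -/
def peak (a : Ribbon n) (k : ℕ) : ℝ := a.angle (2 * k + 1)

theorem deriv_angle {i : ℕ} (hi : i < n) : deriv a.g (a.angle i) = 0 := by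
  rw [angle_of_lt hi, a.node_crit]

theorem deriv2_angle_ne_zero {i : ℕ} (hi : i < n) : deriv (deriv a.g) (a.angle i) ≠ 0 := by
  rw [angle_of_lt hi]
  exact a.node_nondeg _

theorem deriv_pos_of_ascent {i : ℕ} (hi : i < n) (hlt : a.g (a.angle i) < a.g (a.angle (i + 1))) :
    ∀ t ∈ Ioo (a.angle i) (a.angle (i + 1)), 0 < deriv a.g t :=
  deriv_pos_of_deriv_ne_zero (a.smooth_g.differentiable (by simp)) (angle_lt_angle_succ hi)
    (fun _ => deriv_ne_zero_of_mem_arc hi) hlt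

theorem deriv_neg_of_descent {i : ℕ} (hi : i < n)
    (hlt : a.g (a.angle (i + 1)) < a.g (a.angle i)) :
    ∀ t ∈ Ioo (a.angle i) (a.angle (i + 1)), deriv a.g t < 0 :=
  deriv_neg_of_deriv_ne_zero (a.smooth_g.differentiable (by simp)) (angle_lt_angle_succ hi)
    (fun _ => deriv_ne_zero_of_mem_arc hi) hlt

theorem deriv2_pos_of_ascent {i : ℕ} (hi : i < n)
    (hlt : a.g (a.angle i) < a.g (a.angle (i + 1))) : 0 < deriv (deriv a.g) (a.angle i) :=
  (deriv_nonneg_of_pos_right ((contDiff_infty_deriv a.smooth_g).differentiable (by simp) _)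
    (angle_lt_angle_succ hi) (deriv_angle hi) (deriv_pos_of_ascent hi hlt)).lt_of_ne'
    (deriv2_angle_ne_zero hi)

theorem deriv2_neg_of_ascent {i : ℕ} (hi : i + 1 < n)
    (hlt : a.g (a.angle i) < a.g (a.angle (i + 1))) : deriv (deriv a.g) (a.angle (i + 1)) < 0 :=
  (deriv_nonpos_of_pos_left ((contDiff_infty_deriv a.smooth_g).differentiable (by simp) _)
    (angle_lt_angle_succ (i.lt_succ_self.trans hi)) (deriv_angle hi)
    (deriv_pos_of_ascent (i.lt_succ_self.trans hi) hlt)).lt_of_ne (deriv2_angle_ne_zero hi)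

theorem isLadder {K : ℕ} (hn : n = 2 * K + 2) (hK : 0 < K)
    (hladder : StrictMono fun j : Fin n => a.g (a.θ (zigFin n j))) :
    IsLadder a.g K a.valley a.peak := by
  have level_lt {i j : ℕ} (hi : i < n) (hj : j < n) (hij : i < j) :
      a.g (a.θ (zigFin n ⟨i, hi⟩)) < a.g (a.θ (zigFin n ⟨j, hj⟩)) :=
    hladder (Fin.mk_lt_mk.2 hij)
  have valley_eq {k : ℕ} (hk : k ≤ K) : a.valley k = a.θ (zigFin n ⟨2 * k - 1, by omega⟩) := by
    rw [zigFin_valley hn hk, valley, angle_of_lt (by omega)]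
  have peak_eq {k : ℕ} (hk : k ≤ K) :
      a.peak k = a.θ (zigFin n ⟨min (2 * k + 2) (2 * K + 1), by omega⟩) := by
    rw [zigFin_peak hn hk, peak, angle_of_lt (by omega)]
  have closing : a.valley (K + 1) = a.valley 0 + 2 * π := by
    rw [valley, show 2 * (K + 1) = n by omega, angle_self, valley]
  have ascent (k : ℕ) (hk : k ≤ K) : a.g (a.valley k) < a.g (a.peak k) := by
    rw [valley_eq hk, peak_eq hk]
    exact level_lt _ _ (by omega)
  have descent (k : ℕ) (hk : k ≤ K) : a.g (a.valley (k + 1)) < a.g (a.peak k) := by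
    rcases hk.lt_or_eq with hlt | rfl
    · rw [valley_eq hlt, peak_eq hk]
      exact level_lt _ _ (by omega)
    · rw [closing, a.periodic_g, valley_eq (Nat.zero_le _), peak_eq le_rfl]
      exact level_lt _ _ (by omega)
  exact
    { contDiff := a.smooth_g
      periodic := a.periodic_g
      valley_lt_peak := fun k hk => angle_lt_angle_succ (by omega)
      peak_lt_valley := fun k hk => angle_lt_angle_succ (by omega)
      closing := closing
      deriv_pos := fun k hk => deriv_pos_of_ascent (by omega) (ascent k hk)
      deriv_neg := fun k hk => deriv_neg_of_descent (by omega) (descent k hk)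
      deriv_valley := fun k hk => deriv_angle (by omega)
      deriv_peak := fun k hk => deriv_angle (by omega)
      deriv2_valley := fun k hk => deriv2_pos_of_ascent (by omega) (ascent k hk)
      deriv2_peak := fun k hk => deriv2_neg_of_ascent (by omega) (ascent k hk)
      valley_lt_valley := fun k hk => by
        rw [valley_eq hk.le, valley_eq hk]
        exact level_lt _ _ (by omega)
      valley_lt_prev_peak := fun k hk => descent k hk.le
      peak_lt_peak := fun k hk => by
        rw [peak_eq hk.le, peak_eq hk]
        exact level_lt _ _ (by omega)
      peak_lt_second_valley := fun k hk => by
        rw [peak_eq (by omega), valley_eq hk]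
        exact level_lt _ _ (by omega) }

end Ribbon

/-! ### Crossing paths in the unit disk -/

theorem abs_sub_lt_pi_of_cos_pos {h : ℝ → ℝ} (hh : Continuous h) {c : ℝ}
    (hcos : ∀ t, 0 < Real.cos (h t - c)) (a b : ℝ) : |h b - h a| < π := by
  have no_half_turn (a b : ℝ) : h b < h a + π := by
    by_contra! hle
    obtain ⟨t, -, ht⟩ := intermediate_value_uIcc (hh.continuousOn (s := uIcc a b))
      (mem_uIcc.2 (Or.inl ⟨by linarith [Real.pi_pos], hle⟩) : h a + π ∈ uIcc (h a) (h b))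
    have := hcos t
    rw [ht, add_sub_right_comm, Real.cos_add_pi] at this
    linarith [hcos a]
  exact abs_sub_lt_iff.2 ⟨by linarith [no_half_turn a b], by linarith [no_half_turn b a]⟩

theorem sub_eq_of_angle_eq {h : ℝ → ℝ} (hh : Continuous h) {c : ℝ}
    (hcos : ∀ t, 0 < Real.cos (h t - c)) {a b y : ℝ} (hy : |y| < π)
    (hangle : ((h b : ℝ) : Real.Angle) - (h a : ℝ) = y) : h b - h a = y := by
  have toReal_eq {x : ℝ} (hx : |x| < π) : (x : Real.Angle).toReal = x :=
    Real.Angle.toReal_coe_eq_self_iff.2 ⟨(abs_lt.1 hx).1, (abs_lt.1 hx).2.le⟩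
  rw [← toReal_eq (abs_sub_lt_pi_of_cos_pos hh hcos a b), Real.Angle.coe_sub, hangle, toReal_eq hy]

theorem re_one_sub_pos {w : ℂ} (hw : ‖w‖ ≤ 1) (hne : w ≠ 1) : 0 < (1 - w).re := by
  rw [Complex.sub_re, Complex.one_re, sub_pos]
  refine ((Complex.re_le_norm w).trans hw).lt_of_ne fun hre => hne ?_
  have hnorm : ‖w‖ = 1 := hw.antisymm (hre ▸ Complex.re_le_norm w)
  have := Complex.re_eq_norm.1 (hre.trans hnorm.symm)
  rw [Complex.eq_coe_norm_of_nonneg this, hnorm, Complex.ofReal_one]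

theorem cos_im_sub_pos {z w : ℂ} {c : ℝ} (hw : ‖w‖ ≤ 1)
    (hz : Complex.exp z = Complex.exp (c * Complex.I) - w) : 0 < Real.cos (z.im - c) := by
  set w' : ℂ := w / Complex.exp (c * Complex.I)
  have hw' : ‖w'‖ ≤ 1 := by
    simpa only [w', norm_div, Complex.norm_exp_ofReal_mul_I, div_one] using hw
  have hexp : Complex.exp (z - c * Complex.I) = 1 - w' := by
    rw [Complex.exp_sub, hz, sub_div, div_self (Complex.exp_ne_zero _)]
  have hre := re_one_sub_pos hw' fun h1 => Complex.exp_ne_zero _ (hexp.trans (by rw [h1, sub_self]))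
  rw [← hexp, Complex.exp_re] at hre
  simpa using pos_of_mul_pos_right hre (Real.exp_pos _).le

theorem cos_im_sub_sub_pi_pos {z w : ℂ} {c : ℝ} (hw : ‖w‖ ≤ 1)
    (hz : Complex.exp z = w - Complex.exp (c * Complex.I)) : 0 < Real.cos (z.im - (c - π)) := by
  have hexp : Complex.exp (z + π * Complex.I) = Complex.exp (c * Complex.I) - w := by
    rw [Complex.exp_add, hz, Complex.exp_pi_mul_I]
    ring
  convert cos_im_sub_pos hw hexp using 2
  rw [Complex.add_im, Complex.im_ofReal_mul, Complex.I_im]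
  ring

theorem exp_sub_exp_eq (A B : ℝ) :
    Complex.exp (A * Complex.I) - Complex.exp (B * Complex.I) =
      (2 * Real.sin ((B - A) / 2) : ℝ) *
        Complex.exp (((A + B) / 2 - π / 2 : ℝ) * Complex.I) := by
  have hA : A = (A + B) / 2 - (B - A) / 2 := by ring
  have hB : B = (A + B) / 2 + (B - A) / 2 := by ring
  generalize (A + B) / 2 = m at hA hB ⊢
  generalize (B - A) / 2 = d at hA hB ⊢
  subst hA hB
  apply Complex.ext
  · simp only [Complex.sub_re, Complex.exp_ofReal_mul_I_re, Complex.re_ofReal_mul,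
      Real.cos_sub, Real.cos_add, Real.cos_pi_div_two, Real.sin_pi_div_two]
    ring
  · simp only [Complex.sub_im, Complex.exp_ofReal_mul_I_im, Complex.im_ofReal_mul,
      Real.sin_sub, Real.sin_add, Real.cos_pi_div_two, Real.sin_pi_div_two]
    ring

theorem angle_arg_exp (z : ℂ) : ((Complex.arg (Complex.exp z) : ℝ) : Real.Angle) = z.im := by
  rw [Complex.arg_exp, Real.Angle.coe_toIocMod]

theorem angle_im_of_exp_eq_chord {A B : ℝ} (hAB : A < B) (hBA : B < A + 2 * π) {z : ℂ}
    (hz : Complex.exp z = Complex.exp (A * Complex.I) - Complex.exp (B * Complex.I)) :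
    (z.im : Real.Angle) = ((A + B) / 2 - π / 2 : ℝ) := by
  have hsin : 0 < 2 * Real.sin ((B - A) / 2) :=
    mul_pos two_pos (Real.sin_pos_of_pos_of_lt_pi (by linarith) (by linarith))
  rw [← angle_arg_exp, hz, exp_sub_exp_eq, Complex.arg_real_mul _ hsin, angle_arg_exp]
  simp

-- The direction of `α s - β t`, lifted to a continuous angle on the square, turns by less than `π`
-- along each side, where one of the two points stays on the circle. These four turns are therefore
-- determined by the endpoints, and they do not add up to zero around the square.
theorem exists_eq_of_crossing {A B C D : ℝ} (hAB : A < B) (hBC : B < C) (hCD : C < D)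
    (hDA : D < A + 2 * π) {α β : ℝ → ℂ} (hα : Continuous α) (hβ : Continuous β)
    (α_le : ∀ s, ‖α s‖ ≤ 1) (β_le : ∀ t, ‖β t‖ ≤ 1)
    (α_zero : α 0 = Complex.exp (A * Complex.I)) (α_one : α 1 = Complex.exp (C * Complex.I))
    (β_zero : β 0 = Complex.exp (B * Complex.I)) (β_one : β 1 = Complex.exp (D * Complex.I)) :
    ∃ s t, α s = β t := by
  by_contra! hne
  let F : C(ℝ × ℝ, ℂ) := ⟨fun x => α x.1 - β x.2, by fun_prop⟩
  have hF (x : ℝ × ℝ) : F x ≠ 0 := sub_ne_zero.2 (hne _ _)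
  obtain ⟨G, ⟨-, hG⟩, -⟩ := Complex.isCoveringMapOn_exp.existsUnique_continuousMap_lifts F
    (a₀ := (0, 0)) (Complex.exp_log (hF (0, 0))) hF
  have exp_G (s t : ℝ) : Complex.exp (G (s, t)) = α s - β t := congrFun hG (s, t)
  have angle₀₀ := angle_im_of_exp_eq_chord hAB (by linarith) (z := G (0, 0))
    (by rw [exp_G, α_zero, β_zero])
  have angle₀₁ := angle_im_of_exp_eq_chord (hAB.trans (hBC.trans hCD)) hDA (z := G (0, 1))
    (by rw [exp_G, α_zero, β_one])
  have angle₁₀ := angle_im_of_exp_eq_chord (show C < B + 2 * π by linarith) (by linarith)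
    (z := G (1, 0)) (by
      rw [exp_G, α_one, β_zero]
      simpa using (Complex.exp_mul_I_periodic B).symm)
  have angle₁₁ := angle_im_of_exp_eq_chord hCD (by linarith) (z := G (1, 1))
    (by rw [exp_G, α_one, β_one])
  have left : (G (0, 1)).im - (G (0, 0)).im = (D - B) / 2 :=
    sub_eq_of_angle_eq (h := fun t => (G (0, t)).im) (c := A) (by fun_prop)
      (fun t => cos_im_sub_pos (β_le t) (by rw [exp_G, α_zero]))
      (abs_lt.2 ⟨by linarith, by linarith⟩)
      (by rw [angle₀₀, angle₀₁, ← Real.Angle.coe_sub]; congr 1; ring)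
  have right : (G (1, 1)).im - (G (1, 0)).im = (D - B) / 2 - π :=
    sub_eq_of_angle_eq (h := fun t => (G (1, t)).im) (c := C) (by fun_prop)
      (fun t => cos_im_sub_pos (β_le t) (by rw [exp_G, α_one]))
      (abs_lt.2 ⟨by linarith, by linarith⟩)
      (by rw [angle₁₀, angle₁₁, ← Real.Angle.coe_sub]; congr 1; ring)
  have bottom : (G (1, 0)).im - (G (0, 0)).im = (C - A) / 2 - π :=
    sub_eq_of_angle_eq (h := fun s => (G (s, 0)).im) (by fun_prop)
      (fun s => cos_im_sub_sub_pi_pos (α_le s) (by rw [exp_G, β_zero]))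
      (abs_lt.2 ⟨by linarith, by linarith⟩)
      (by
        rw [angle₀₀, angle₁₀, ← Real.Angle.coe_sub, Real.Angle.angle_eq_iff_two_pi_dvd_sub]
        exact ⟨1, by push_cast; ring⟩)
  have top : (G (1, 1)).im - (G (0, 1)).im = (C - A) / 2 :=
    sub_eq_of_angle_eq (h := fun s => (G (s, 1)).im) (by fun_prop)
      (fun s => cos_im_sub_sub_pi_pos (α_le s) (by rw [exp_G, β_one]))
      (abs_lt.2 ⟨by linarith, by linarith⟩)
      (by rw [angle₀₁, angle₁₁, ← Real.Angle.coe_sub]; congr 1; ring)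
  linarith [Real.pi_pos]

/-- The standard isometry of `ℝ²` with the complex plane. -/
def toComplex : E2 ≃ₗᵢ[ℝ] ℂ := Complex.orthonormalBasisOneI.repr.symm

theorem toComplex_apply (x : E2) : toComplex x = x 0 + x 1 * Complex.I := by
  rw [toComplex, ← Complex.orthonormalBasisOneI.sum_repr_symm]
  simp

theorem sphPt_zero (t : ℝ) : sphPt t 0 = Real.cos t := by simp [sphPt]

theorem sphPt_one (t : ℝ) : sphPt t 1 = Real.sin t := by simp [sphPt]

theorem toComplex_sphPt (t : ℝ) : toComplex (sphPt t) = Complex.exp (t * Complex.I) := by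
  rw [toComplex_apply, sphPt_zero, sphPt_one, Complex.exp_mul_I, Complex.ofReal_cos,
    Complex.ofReal_sin]

theorem norm_sphPt (t : ℝ) : ‖sphPt t‖ = 1 := by
  rw [← toComplex.norm_map, toComplex_sphPt, Complex.norm_exp_ofReal_mul_I]

theorem exists_eq_of_crossing_paths {A B C D : ℝ} (hAB : A < B) (hBC : B < C) (hCD : C < D)
    (hDA : D < A + 2 * π) (α : Path (sphPt A) (sphPt C)) (β : Path (sphPt B) (sphPt D))
    (α_le : ∀ s, ‖α s‖ ≤ 1) (β_le : ∀ t, ‖β t‖ ≤ 1) : ∃ s t, α s = β t := by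
  obtain ⟨s, t, hst⟩ := exists_eq_of_crossing hAB hBC hCD hDA
    (toComplex.continuous.comp α.continuous_extend) (toComplex.continuous.comp β.continuous_extend)
    (fun s => (toComplex.norm_map _).trans_le (α_le (projIcc 0 1 zero_le_one s)))
    (fun t => (toComplex.norm_map _).trans_le (β_le (projIcc 0 1 zero_le_one t)))
    (by simp [toComplex_sphPt]) (by simp [toComplex_sphPt])
    (by simp [toComplex_sphPt]) (by simp [toComplex_sphPt])
  exact ⟨_, _, toComplex.injective hst⟩

/-! ### Superlevel sets and the mountain pass -/

section Superlevel

variable {E : Type*} {C : Set E} {f : E → ℝ} {c : ℝ}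

/-- The points of `C` where `f` is at least `c`. -/
def superlevel (C : Set E) (f : E → ℝ) (c : ℝ) : Set E := {x | x ∈ C ∧ c ≤ f x}

/-- The points of `C` where `f` exceeds `c`. -/
def strictSuperlevel (C : Set E) (f : E → ℝ) (c : ℝ) : Set E := {x | x ∈ C ∧ c < f x}

theorem strictSuperlevel_subset_superlevel : strictSuperlevel C f c ⊆ superlevel C f c :=
  fun _ hx => ⟨hx.1, hx.2.le⟩

theorem strictSuperlevel_anti {b : ℝ} (h : b ≤ c) :
    strictSuperlevel C f c ⊆ strictSuperlevel C f b :=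
  fun _ hx => ⟨hx.1, h.trans_lt hx.2⟩

variable [TopologicalSpace E]

theorem isClosed_superlevel (hC : IsClosed C) (hf : Continuous f) :
    IsClosed (superlevel C f c) :=
  hC.inter (isClosed_le continuous_const hf)

theorem joinedIn_of_mapsTo_Icc {Y : Type*} [TopologicalSpace Y] {S : Set Y} {γ : ℝ → Y} {a b : ℝ}
    (hab : a ≤ b) (hγ : ContinuousOn γ (Icc a b)) (h : MapsTo γ (Icc a b) S) :
    JoinedIn S (γ a) (γ b) :=
  (((convex_Icc a b).isPathConnected ⟨a, left_mem_Icc.2 hab⟩).image' hγ).joinedIn _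
    ⟨a, left_mem_Icc.2 hab, rfl⟩ _ ⟨b, right_mem_Icc.2 hab, rfl⟩ |>.mono h.image_subset

theorem exists_strictSuperlevel_subset_union (hC : IsCompact C) (hf : Continuous f) {U : Set E}
    (hU : IsOpen U) (h : superlevel C f c ⊆ U) : ∃ ε > 0, strictSuperlevel C f (c - ε) ⊆ U := by
  rcases (C \ U).eq_empty_or_nonempty with hempty | hne
  · exact ⟨1, one_pos, fun x hx => sdiff_eq_empty.1 hempty hx.1⟩
  · obtain ⟨x, hx, hmax⟩ := (hC.diff hU).exists_isMaxOn hne hf.continuousOn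
    have hlt : f x < c := lt_of_not_ge fun hle => hx.2 (h ⟨hx.1, hle⟩)
    refine ⟨c - f x, sub_pos.2 hlt, fun y hy => ?_⟩
    by_contra hyU
    exact absurd (hmax ⟨hy.1, hyU⟩) (by simpa using hy.2)

theorem exists_not_joinedIn_strictSuperlevel [T2Space E] (hC : IsCompact C)
    (hf : Continuous f) {Y : Set E} {M Q : E} (Y_closed : IsClosed Y)
    (Y_subset : Y ⊆ superlevel C f c) (Y_open : ∀ x ∈ Y, Y ∈ 𝓝[superlevel C f c] x)
    (hM : M ∈ Y) (hQ : Q ∈ superlevel C f c \ Y) :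
    ∃ ε > 0, ¬JoinedIn (strictSuperlevel C f (c - ε)) M Q := by
  have hK : IsCompact (superlevel C f c) :=
    hC.of_isClosed_subset (isClosed_superlevel hC.isClosed hf) fun _ hx => hx.1
  have rest_closed : IsClosed (superlevel C f c \ Y) := by
    refine isClosed_of_closure_subset fun x hx =>
      ⟨hK.isClosed.closure_subset (closure_mono sdiff_subset hx), fun hxY => ?_⟩
    obtain ⟨y, hy, hyK, hyY⟩ :=
      mem_closure_iff_nhds.1 hx _ (mem_nhdsWithin_iff_eventually.1 (Y_open x hxY))
    exact hyY (hy hyK)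
  obtain ⟨A, B, hA, hB, hYA, hB', hAB⟩ :=
    SeparatedNhds.of_isCompact_isCompact (hK.of_isClosed_subset Y_closed Y_subset)
      (hK.of_isClosed_subset rest_closed sdiff_subset) disjoint_sdiff_right
  obtain ⟨ε, hε, hsub⟩ := exists_strictSuperlevel_subset_union hC hf (hA.union hB)
    (c := c) fun x hx => by
      by_cases hxY : x ∈ Y
      exacts [Or.inl (hYA hxY), Or.inr (hB' ⟨hx, hxY⟩)]
  refine ⟨ε, hε, fun ⟨γ, hγ⟩ => ?_⟩
  obtain ⟨x, -, hxA, hxB⟩ := isPreconnected_range γ.continuous A B hA hB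
    (range_subset_iff.2 fun s => hsub (hγ s)) ⟨M, ⟨0, γ.source⟩, hYA hM⟩
    ⟨Q, ⟨1, γ.target⟩, hB' hQ⟩
  exact disjoint_left.1 hAB hxA hxB

theorem exists_lt_joinedIn_strictSuperlevel (hf : Continuous f) {x y : E}
    (h : JoinedIn (strictSuperlevel C f c) x y) :
    ∃ b > c, JoinedIn (strictSuperlevel C f b) x y := by
  obtain ⟨γ, hγ⟩ := h
  obtain ⟨s, -, hs⟩ := isCompact_univ.exists_isMinOn univ_nonempty
    (hf.comp γ.continuous).continuousOn
  obtain ⟨b, hb, hbs⟩ := exists_between (hγ s).2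
  exact ⟨b, hb, γ, fun t => ⟨(hγ t).1, hbs.trans_le (hs (mem_univ t))⟩⟩

theorem exists_pass_level (hf : Continuous f) {M Q : E} {l : ℝ}
    (hl : ∀ c < l, JoinedIn (strictSuperlevel C f c) M Q) :
    ∃ c, l ≤ c ∧ c ≤ f M ∧ ¬JoinedIn (strictSuperlevel C f c) M Q ∧
      ∀ b < c, JoinedIn (strictSuperlevel C f b) M Q := by
  set S : Set ℝ := {c | JoinedIn (strictSuperlevel C f c) M Q}
  have le_M : f M ∈ upperBounds S := fun c hc => hc.source_mem.2.le
  have S_nonempty : S.Nonempty := ⟨l - 1, hl _ (by linarith)⟩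
  refine ⟨sSup S, le_of_forall_lt fun c hc => ?_, csSup_le S_nonempty le_M, fun hjoin => ?_,
    fun b hb => ?_⟩
  · obtain ⟨d, hcd, hdl⟩ := exists_between hc
    exact hcd.trans_le (le_csSup ⟨_, le_M⟩ (hl d hdl))
  · obtain ⟨b, hb, hbjoin⟩ := exists_lt_joinedIn_strictSuperlevel hf hjoin
    exact (le_csSup ⟨_, le_M⟩ hbjoin).not_gt hb
  · obtain ⟨c, hc, hbc⟩ := exists_lt_of_lt_csSup S_nonempty hb
    exact hc.mono (strictSuperlevel_anti hbc.le)

end Superlevel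

section Regular

variable {E : Type*} [NormedAddCommGroup E] [NormedSpace ℝ E] {C : Set E} {f : E → ℝ} {c : ℝ}
  {x : E}

/-- Near `x`, the part of `C` strictly above the level of `x` lies in a single path component of
the strict superlevel set, and it is dense in the part weakly above that level. At such a point
the connectivity of the superlevel sets cannot change. -/
def IsRegularAbove (C : Set E) (f : E → ℝ) (x : E) : Prop :=
  ∃ N ∈ 𝓝 x,
    (∀ y ∈ N ∩ strictSuperlevel C f (f x), ∀ z ∈ N ∩ strictSuperlevel C f (f x),
      JoinedIn (strictSuperlevel C f (f x)) y z) ∧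
    N ∩ superlevel C f (f x) ⊆ closure (N ∩ strictSuperlevel C f (f x))

theorem joinedIn_of_convex {S T : Set E} (hS : Convex ℝ S) (hST : S ⊆ T) {y z : E} (hy : y ∈ S)
    (hz : z ∈ S) : JoinedIn T y z :=
  JoinedIn.of_segment_subset ((hS.segment_subset hy hz).trans hST)

theorem eventually_joinedIn_strictSuperlevel (hC : Convex ℝ C) (hf : Continuous f)
    (hx : x ∈ strictSuperlevel C f c) :
    ∀ᶠ y in 𝓝[C] x, JoinedIn (strictSuperlevel C f c) x y := by
  obtain ⟨r, hr, hb⟩ := eventually_nhds_iff_ball.1 (hf.continuousAt.eventually (lt_mem_nhds hx.2))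
  filter_upwards [inter_mem_nhdsWithin C (ball_mem_nhds x hr)] with y hy
  exact joinedIn_of_convex (hC.inter (convex_ball x r))
    (show C ∩ ball x r ⊆ strictSuperlevel C f c from fun w hw => ⟨hw.1, hb w hw.2⟩)
    ⟨hx.1, mem_ball_self hr⟩ hy

theorem mem_pathComponentIn_of_mem_closure (hC : Convex ℝ C) (hf : Continuous f)
    (hx : x ∈ strictSuperlevel C f c) {M : E}
    (h : x ∈ closure (pathComponentIn (strictSuperlevel C f c) M)) :
    x ∈ pathComponentIn (strictSuperlevel C f c) M := by
  obtain ⟨y, hy, hyM⟩ := mem_closure_iff_nhds.1 h _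
    (mem_nhdsWithin_iff_eventually.1 (eventually_joinedIn_strictSuperlevel hC hf hx))
  exact JoinedIn.trans hyM (hy hyM.target_mem.1).symm

omit [NormedSpace ℝ E] in
theorem IsRegularAbove.closure_pathComponentIn_mem_nhdsWithin (hx : IsRegularAbove C f x) {M : E}
    (h : x ∈ closure (pathComponentIn (strictSuperlevel C f (f x)) M)) :
    closure (pathComponentIn (strictSuperlevel C f (f x)) M) ∈ 𝓝[superlevel C f (f x)] x := by
  obtain ⟨N, hN, joined, dense⟩ := hx
  obtain ⟨v, hvN, hv⟩ := mem_closure_iff_nhds.1 h N hN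
  filter_upwards [inter_mem_nhdsWithin _ hN] with y hy
  exact closure_mono (fun z hz => JoinedIn.trans hv (joined v ⟨hvN, hv.target_mem⟩ z hz))
    (dense hy.symm)

/-- Mountain pass: `q` lies at the highest level below which `M` and `Q` are joined. -/
theorem exists_not_isRegularAbove (hC : IsCompact C) (hCc : Convex ℝ C) (hf : Continuous f)
    {M Q : E} {l : ℝ} (hMC : M ∈ C) (hQC : Q ∈ C) (hM : ∀ᶠ y in 𝓝[C] M, y ≠ M → f y < f M)
    (hMQ : f M < f Q) (hl : ∀ c < l, JoinedIn (strictSuperlevel C f c) M Q) :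
    ∃ q ∈ C, l ≤ f q ∧ f q < f M ∧ ¬IsLocalMaxOn f C q ∧ ¬IsRegularAbove C f q := by
  obtain ⟨c, hlc, hcM, not_joined, joined⟩ := exists_pass_level hf hl
  have no_separation : ∀ Y, IsClosed Y → Y ⊆ superlevel C f c → M ∈ Y → Q ∉ Y →
      ∃ x ∈ Y, Y ∉ 𝓝[superlevel C f c] x := fun Y hY hYc hMY hQY => by
    by_contra! hopen
    obtain ⟨ε, hε, hε'⟩ := exists_not_joinedIn_strictSuperlevel hC hf hY hYc hopen hMY
      ⟨⟨hQC, hcM.trans hMQ.le⟩, hQY⟩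
    exact hε' (joined _ (sub_lt_self c hε))
  rcases hcM.eq_or_lt with rfl | hcM
  · obtain ⟨x, rfl, hx⟩ := no_separation {M} isClosed_singleton
      (singleton_subset_iff.2 ⟨hMC, le_rfl⟩) rfl fun h => hMQ.ne (congrArg f h.symm)
    refine absurd ?_ hx
    filter_upwards [nhdsWithin_mono x (fun y hy => hy.1) hM, self_mem_nhdsWithin] with y hy hyx
    exact by_contra fun hne => (hy hne).not_ge hyx.2
  · set V := pathComponentIn (strictSuperlevel C f c) M
    have V_subset : closure V ⊆ superlevel C f c :=
      closure_minimal (pathComponentIn_subset.trans strictSuperlevel_subset_superlevel)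
        (isClosed_superlevel hC.isClosed hf)
    obtain ⟨q, hqV, hq⟩ := no_separation (closure V) isClosed_closure V_subset
      (subset_closure (mem_pathComponentIn_self ⟨hMC, hcM⟩)) fun hQ => not_joined
        (mem_pathComponentIn_of_mem_closure hCc hf ⟨hQC, hcM.trans hMQ⟩ hQ)
    obtain ⟨hqC, hcq⟩ := V_subset hqV
    obtain rfl : c = f q := hcq.eq_of_not_lt fun hlt => hq <| by
      have hqV := mem_pathComponentIn_of_mem_closure hCc hf ⟨hqC, hlt⟩ hqV
      filter_upwards [nhdsWithin_mono q (fun y hy => hy.1)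
        (eventually_joinedIn_strictSuperlevel hCc hf ⟨hqC, hlt⟩)] with y hy
      exact subset_closure (JoinedIn.trans hqV hy)
    refine ⟨q, hqC, hlc, hcM, fun hmax => ?_, fun hreg =>
      hq (hreg.closure_pathComponentIn_mem_nhdsWithin hqV)⟩
    obtain ⟨v, hv, hvV⟩ := mem_closure_iff_nhds.1 hqV _ (mem_nhdsWithin_iff_eventually.1 hmax)
    exact (hv hvV.target_mem.1).not_gt hvV.target_mem.2

theorem exists_isLocalMaxOn_joinedIn (hC : IsCompact C) (hCc : Convex ℝ C) (hf : Continuous f)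
    {y : E} (hy : y ∈ strictSuperlevel C f c) :
    ∃ q, JoinedIn (strictSuperlevel C f c) y q ∧ IsLocalMaxOn f C q := by
  set U := pathComponentIn (strictSuperlevel C f c) y
  have hyU : y ∈ closure U := subset_closure (mem_pathComponentIn_self hy)
  have U_subset : closure U ⊆ C :=
    closure_minimal (pathComponentIn_subset.trans fun _ hx => hx.1) hC.isClosed
  obtain ⟨q, hqU, hmax⟩ := (hC.of_isClosed_subset isClosed_closure U_subset).exists_isMaxOn
    ⟨y, hyU⟩ hf.continuousOn
  have hq : q ∈ strictSuperlevel C f c := ⟨U_subset hqU, hy.2.trans_le (hmax hyU)⟩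
  have hqU := mem_pathComponentIn_of_mem_closure hCc hf hq hqU
  refine ⟨q, hqU, ?_⟩
  filter_upwards [eventually_joinedIn_strictSuperlevel hCc hf hq] with z hz
  exact hmax (subset_closure (JoinedIn.trans hqU hz))

theorem IsRegularAbove.of_ascending_flow (hC : Convex ℝ C) (hf : Continuous f) {L : ℝ}
    (hL : 0 < L) {Φ : ℝ → E → E} (hΦ : Continuous fun p : ℝ × E => Φ p.1 p.2)
    (Φ_zero : ∀ y, Φ 0 y = y) (mapsTo : ∀ᶠ y in 𝓝 x, y ∈ C → ∀ s ∈ Icc 0 L, Φ s y ∈ C)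
    (ascending : ∀ᶠ y in 𝓝 x, StrictMonoOn (fun s => f (Φ s y)) (Icc 0 L)) :
    IsRegularAbove C f x := by
  have zero_mem : (0 : ℝ) ∈ Icc 0 L := left_mem_Icc.2 hL.le
  have L_mem : L ∈ Icc 0 L := right_mem_Icc.2 hL.le
  have hΦL : Continuous (Φ L) := hΦ.comp (by fun_prop : Continuous fun y : E => (L, y))
  have hΦy (y : E) : Continuous (fun s => Φ s y) :=
    hΦ.comp (by fun_prop : Continuous fun s : ℝ => (s, y))
  have higher : f x < f (Φ L x) := by
    simpa only [Φ_zero] using ascending.self_of_nhds zero_mem L_mem hL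
  obtain ⟨r, hr, ball_above⟩ := eventually_nhds_iff_ball.1
    (hf.continuousAt.eventually (lt_mem_nhds higher))
  obtain ⟨N, hN, N_open, hxN⟩ := _root_.eventually_nhds_iff.1
    (mapsTo.and (ascending.and (hΦL.continuousAt.eventually (ball_mem_nhds (Φ L x) hr))))
  have to_end : ∀ y ∈ N ∩ strictSuperlevel C f (f x),
      JoinedIn (strictSuperlevel C f (f x)) y (Φ L y) := fun y ⟨hyN, hyC, hyf⟩ => by
    obtain ⟨hyM, hyA, -⟩ := hN y hyN
    have hmaps : MapsTo (Φ · y) (Icc 0 L) (strictSuperlevel C f (f x)) := fun s hs =>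
      ⟨hyM hyC s hs, hyf.trans_le (by simpa only [Φ_zero] using hyA.monotoneOn zero_mem hs hs.1)⟩
    simpa only [Φ_zero] using joinedIn_of_mapsTo_Icc hL.le (hΦy y).continuousOn hmaps
  refine ⟨N, N_open.mem_nhds hxN, fun y hy z hz => ?_, fun y ⟨hyN, hyC, hyf⟩ => ?_⟩
  · refine (to_end y hy).trans (JoinedIn.trans ?_ (to_end z hz).symm)
    have above : ball (Φ L x) r ∩ C ⊆ strictSuperlevel C f (f x) :=
      fun w hw => ⟨hw.2, ball_above w hw.1⟩
    exact joinedIn_of_convex ((convex_ball (Φ L x) r).inter hC) above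
      ⟨(hN y hy.1).2.2, (hN y hy.1).1 hy.2.1 L L_mem⟩
      ⟨(hN z hz.1).2.2, (hN z hz.1).1 hz.2.1 L L_mem⟩
  · obtain ⟨hyM, hyA, -⟩ := hN y hyN
    have tendsto : Tendsto (fun s => Φ s y) (𝓝[>] 0) (𝓝 y) := by
      simpa only [Φ_zero] using ((hΦy y).tendsto 0).mono_left nhdsWithin_le_nhds
    refine mem_closure_of_tendsto tendsto ?_
    filter_upwards [tendsto.eventually (N_open.mem_nhds hyN), Ioo_mem_nhdsGT hL] with s hsN hs
    have hs' : s ∈ Icc 0 L := ⟨hs.1.le, hs.2.le⟩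
    exact ⟨hsN, hyM hyC s hs',
      hyf.trans_lt (by simpa only [Φ_zero] using hyA zero_mem hs' hs.1)⟩

theorem IsRegularAbove.of_fderiv_pos (hC : Convex ℝ C) (hf : ContDiff ℝ 1 f) {Φ : ℝ → E → E}
    {X : E → E} (hX : Continuous X) (hΦ : Continuous fun p : ℝ × E => Φ p.1 p.2)
    (Φ_zero : ∀ y, Φ 0 y = y) (hasDerivAt : ∀ s y, HasDerivAt (fun s => Φ s y) (X (Φ s y)) s)
    (mapsTo : ∀ᶠ p : ℝ × E in 𝓝 (0, x), p.2 ∈ C → Φ p.1 p.2 ∈ C)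
    (hpos : 0 < fderiv ℝ f x (X x)) : IsRegularAbove C f x := by
  have ascent : ∀ᶠ p : ℝ × E in 𝓝 (0, x), 0 < fderiv ℝ f (Φ p.1 p.2) (X (Φ p.1 p.2)) := by
    have hcont : Continuous fun y => fderiv ℝ f y (X y) :=
      (hf.continuous_fderiv one_ne_zero).clm_apply hX
    exact (hcont.comp hΦ).continuousAt.eventually
      (lt_mem_nhds (by simpa only [Function.comp, Φ_zero] using hpos))
  obtain ⟨r, hr, hb⟩ := eventually_nhds_iff_ball.1 (ascent.and mapsTo)
  have mem_ball' : ∀ y ∈ ball x r, ∀ s ∈ Icc 0 (r / 2), ((s, y) : ℝ × E) ∈ ball (0, x) r :=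
    fun y hy s hs => by
      rw [← ball_prod_same]
      refine ⟨?_, hy⟩
      rw [mem_ball, Real.dist_eq, sub_zero, abs_of_nonneg hs.1]
      linarith [hs.2]
  refine .of_ascending_flow hC hf.continuous (half_pos hr) hΦ Φ_zero ?_ ?_
  · filter_upwards [ball_mem_nhds x hr] with y hy hyC s hs
    exact (hb _ (mem_ball' y hy s hs)).2 hyC
  · filter_upwards [ball_mem_nhds x hr] with y hy
    have hder (s : ℝ) :
        HasDerivAt (fun s => f (Φ s y)) (fderiv ℝ f (Φ s y) (X (Φ s y))) s :=
      ((hf.differentiable one_ne_zero _).hasFDerivAt).comp_hasDerivAt s (hasDerivAt s y)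
    refine strictMonoOn_of_deriv_pos (convex_Icc _ _)
      (fun s _ => (hder s).continuousAt.continuousWithinAt) fun s hs => ?_
    rw [(hder s).deriv]
    exact (hb _ (mem_ball' y hy s (interior_subset hs))).1

theorem IsRegularAbove.of_mem_interior (hC : Convex ℝ C) (hf : ContDiff ℝ 1 f)
    (hx : C ∈ 𝓝 x) (hcrit : fderiv ℝ f x ≠ 0) : IsRegularAbove C f x := by
  obtain ⟨v, hv⟩ : ∃ v, 0 < fderiv ℝ f x v := by
    by_contra! hle
    refine hcrit (ContinuousLinearMap.ext fun v => (hle v).antisymm ?_)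
    simpa using hle (-v)
  refine .of_fderiv_pos hC hf (Φ := fun s y => y + s • v) continuous_const (by fun_prop) (by simp)
    (fun s y => by simpa using ((hasDerivAt_id s).smul_const v).const_add y) ?_ hv
  have hcont : ContinuousAt (fun p : ℝ × E => p.2 + p.1 • v) (0, x) := by fun_prop
  filter_upwards [hcont.eventually_mem (by simpa using hx)] with p hp _ using hp

omit [NormedSpace ℝ E] in
theorem IsRegularAbove.of_strict_min (hmin : ∀ᶠ y in 𝓝[C] x, y ≠ x → f x < f y)
    (hconn : ∀ᶠ r in 𝓝[>] 0, IsPathConnected (ball x r ∩ (C \ {x}))) :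
    IsRegularAbove C f x := by
  obtain ⟨ρ, hρ, above⟩ := eventually_nhds_iff_ball.1 (eventually_nhdsWithin_iff.1 hmin)
  obtain ⟨r, hpath, hr, hrρ⟩ := (hconn.and (Ioo_mem_nhdsGT hρ)).exists
  have sub : ball x r ∩ (C \ {x}) ⊆ ball x r ∩ strictSuperlevel C f (f x) := fun y hy =>
    ⟨hy.1, hy.2.1, above y (ball_subset_ball hrρ.le hy.1) hy.2.1 hy.2.2⟩
  have ne_of_above {y : E} (hy : y ∈ strictSuperlevel C f (f x)) : y ∈ C \ {x} :=
    ⟨hy.1, by rintro rfl; exact hy.2.false⟩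
  refine ⟨ball x r, ball_mem_nhds x hr, fun y hy z hz => ?_, fun y hy => ?_⟩
  · exact (hpath.joinedIn y ⟨hy.1, ne_of_above hy.2⟩ z ⟨hz.1, ne_of_above hz.2⟩).mono
      (sub.trans inter_subset_right)
  · by_cases hyx : y = x
    · rw [hyx]
      refine Metric.mem_closure_iff.2 fun ε hε => ?_
      obtain ⟨δ, hδ, -, hδr⟩ := (hconn.and (Ioo_mem_nhdsGT (lt_min hε hr))).exists
      obtain ⟨z, hz, hzC⟩ := hδ.nonempty
      exact ⟨z, sub ⟨ball_subset_ball (hδr.le.trans (min_le_right _ _)) hz, hzC⟩,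
        mem_ball'.1 (ball_subset_ball (hδr.le.trans (min_le_left _ _)) hz)⟩
    · exact subset_closure (sub ⟨hy.1, hy.2.1, hyx⟩)

theorem IsRegularAbove.of_strict_min_extremePoint (hx : x ∈ C.extremePoints ℝ) (hC : Convex ℝ C)
    (hacc : (𝓝[C \ {x}] x).NeBot) (hmin : ∀ᶠ y in 𝓝[C] x, y ≠ x → f x < f y) :
    IsRegularAbove C f x := by
  refine .of_strict_min hmin ?_
  filter_upwards [self_mem_nhdsWithin] with r hr
  have hne : (ball x r ∩ (C \ {x})).Nonempty := by
    rw [inter_comm]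
    exact hacc.nonempty_of_mem (inter_mem_nhdsWithin _ (ball_mem_nhds x hr))
  exact ((convex_ball x r).inter (hC.mem_extremePoints_iff_convex_sdiff.1 hx).2).isPathConnected hne

theorem isPathConnected_ball_diff_singleton (hdim : 1 < Module.rank ℝ E) (x : E) {r : ℝ}
    (hr : 0 < r) : IsPathConnected (ball x r \ {x}) := by
  set φ := OpenPartialHomeomorph.univBall x r
  have φ_bijOn : BijOn φ univ (ball x r) := by
    simpa only [φ, OpenPartialHomeomorph.univBall_source,
      OpenPartialHomeomorph.univBall_target x hr] using φ.bijOn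
  have himage : φ '' {0}ᶜ = ball x r \ {x} := by
    simpa only [φ, OpenPartialHomeomorph.univBall_apply_zero, ← compl_eq_univ_sdiff] using
      (φ_bijOn.sdiff_singleton (mem_univ 0)).image_eq
  exact himage ▸ (isPathConnected_compl_singleton_of_one_lt_rank hdim 0).image
    (OpenPartialHomeomorph.continuous_univBall x r)

theorem IsRegularAbove.of_strict_min_interior (hdim : 1 < Module.rank ℝ E) (hC : C ∈ 𝓝 x)
    (hmin : ∀ᶠ y in 𝓝 x, y ≠ x → f x < f y) : IsRegularAbove C f x := by
  refine .of_strict_min (hmin.filter_mono nhdsWithin_le_nhds) ?_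
  obtain ⟨ρ, hρ, hsub⟩ := Metric.mem_nhds_iff.1 hC
  filter_upwards [Ioo_mem_nhdsGT hρ] with r hr
  rw [← inter_sdiff_assoc, inter_eq_left.2 ((ball_subset_ball hr.2.le).trans hsub)]
  exact isPathConnected_ball_diff_singleton hdim x hr.1

end Regular

/-! ### The unit circle -/

theorem contDiff_sphPt : ContDiff ℝ ∞ sphPt := by
  have heq : sphPt = fun t : ℝ => toComplex.symm (Complex.exp (t * Complex.I)) :=
    funext fun t => (toComplex.symm_apply_eq.2 (toComplex_sphPt t).symm).symm
  rw [heq]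
  exact toComplex.symm.contDiff.comp (Complex.ofRealCLM.contDiff.mul contDiff_const).cexp

theorem continuous_sphPt : Continuous sphPt := contDiff_sphPt.continuous

theorem periodic_sphPt : Function.Periodic sphPt (2 * π) := fun t =>
  toComplex.injective <| by
    rw [toComplex_sphPt, toComplex_sphPt]
    push_cast
    rw [add_mul, Complex.exp_periodic]

theorem exists_sphPt_eq (a : ℝ) {y : E2} (hy : ‖y‖ = 1) :
    ∃ t ∈ Ico a (a + 2 * π), sphPt t = y := by
  have harg : sphPt (toComplex y).arg = y := toComplex.injective <| by
    rw [toComplex_sphPt]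
    simpa [hy] using Complex.norm_mul_exp_arg_mul_I (toComplex y)
  obtain ⟨t, ht, h⟩ := periodic_sphPt.exists_mem_Ico Real.two_pi_pos (toComplex y).arg a
  exact ⟨t, ht, h.symm.trans harg⟩

theorem exists_angle_chart (θ : ℝ) :
    ∃ φ : E2 → ℝ, (∀ x, ‖x‖ • sphPt (φ x) = x) ∧ φ (sphPt θ) = θ ∧
      ∀ r : ℝ, 0 < r → ContDiffAt ℝ ∞ φ (r • sphPt θ) := by
  set w : E2 → ℂ := fun x => toComplex x * Complex.exp (-(θ * Complex.I))
  have norm_w (x : E2) : ‖w x‖ = ‖x‖ := by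
    rw [norm_mul, toComplex.norm_map, ← neg_mul, ← Complex.ofReal_neg,
      Complex.norm_exp_ofReal_mul_I, mul_one]
  have w_smul (r : ℝ) : w (r • sphPt θ) = r := by
    simp only [w, map_smul, toComplex_sphPt, Complex.real_smul, mul_assoc, ← Complex.exp_add,
      add_neg_cancel, Complex.exp_zero, mul_one]
  refine ⟨fun x => θ + (Complex.log (w x)).im, fun x => toComplex.injective ?_, ?_, fun r hr => ?_⟩
  · beta_reduce
    have hlog : ‖x‖ * Complex.exp ((w x).arg * Complex.I) = w x := by
      simpa only [norm_w] using Complex.norm_mul_exp_arg_mul_I (w x)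
    rw [map_smul, toComplex_sphPt, Complex.log_im, Complex.ofReal_add, add_mul, Complex.exp_add,
      Complex.real_smul, mul_left_comm, hlog, mul_left_comm, ← Complex.exp_add, add_neg_cancel,
      Complex.exp_zero, mul_one]
  · have := w_smul 1
    rw [one_smul] at this
    simp [this]
  · have hw : ContDiff ℝ ∞ w := toComplex.contDiff.mul contDiff_const
    have hlog : ContDiffAt ℝ ∞ Complex.log (w (r • sphPt θ)) := by
      rw [w_smul]
      exact (Complex.contDiffAt_log (Complex.ofReal_mem_slitPlane.2 hr)).restrict_scalars ℝ
    exact contDiffAt_const.add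
      (Complex.imCLM.contDiff.contDiffAt.comp _ (hlog.comp _ hw.contDiffAt))

theorem nhdsWithin_sphere_le_map_sphPt (θ : ℝ) :
    𝓝[sphere 0 1] (sphPt θ) ≤ map sphPt (𝓝 θ) := by
  obtain ⟨φ, polar, φ_self, φ_smooth⟩ := exists_angle_chart θ
  have hφ : ContinuousAt φ (sphPt θ) := by simpa using (φ_smooth 1 one_pos).continuousAt
  intro S hS
  have hS' : ∀ᶠ t in 𝓝 (φ (sphPt θ)), sphPt t ∈ S := φ_self.symm ▸ hS
  filter_upwards [nhdsWithin_le_nhds (hφ.eventually hS'), self_mem_nhdsWithin] with y hyS hy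
  have hy' := polar y
  rw [mem_sphere_zero_iff_norm.1 hy, one_smul] at hy'
  exact hy' ▸ hyS

/-- The rotation of the plane by the angle `s`. -/
def rotate (s : ℝ) (y : E2) : E2 :=
  toComplex.symm (Complex.exp (s * Complex.I) * toComplex y)

/-- The rotation of the plane by a right angle, the generator of `rotate`. -/
def quarterTurn (y : E2) : E2 := toComplex.symm (Complex.I * toComplex y)

theorem norm_rotate (s : ℝ) (y : E2) : ‖rotate s y‖ = ‖y‖ := by
  rw [rotate, toComplex.symm.norm_map, norm_mul, Complex.norm_exp_ofReal_mul_I, one_mul,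
    toComplex.norm_map]

theorem hasDerivAt_rotate (s : ℝ) (y : E2) :
    HasDerivAt (fun s => rotate s y) (quarterTurn (rotate s y)) s := by
  have hexp : HasDerivAt (fun s : ℝ => Complex.exp (s * Complex.I))
      (Complex.exp (s * Complex.I) * Complex.I) s := by
    simpa using ((Complex.ofRealCLM.hasDerivAt (x := s)).mul_const Complex.I).cexp
  have h := toComplex.symm.toContinuousLinearEquiv.hasFDerivAt.comp_hasDerivAt s
    (hexp.mul_const (toComplex y))
  have heq : quarterTurn (rotate s y)
      = toComplex.symm (Complex.exp (s * Complex.I) * Complex.I * toComplex y) := by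
    rw [quarterTurn, rotate, toComplex.apply_symm_apply, mul_left_comm, mul_assoc]
  exact heq ▸ h

theorem hasDerivAt_sphPt (t : ℝ) : HasDerivAt sphPt (quarterTurn (sphPt t)) t := by
  have heq : (fun s => rotate s (sphPt 0)) = sphPt := funext fun s =>
    toComplex.symm_apply_eq.2 (by simp [toComplex_sphPt])
  have h := hasDerivAt_rotate t (sphPt 0)
  rwa [congrFun heq t, heq] at h

theorem deriv_comp_sphPt {f : E2 → ℝ} {t : ℝ} (hf : DifferentiableAt ℝ f (sphPt t)) :
    deriv (fun t => f (sphPt t)) t = fderiv ℝ f (sphPt t) (quarterTurn (sphPt t)) :=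
  (hf.hasFDerivAt.comp_hasDerivAt t (hasDerivAt_sphPt t)).deriv

theorem eventually_strictMonoOn_radial {E : Type*} [NormedAddCommGroup E] [NormedSpace ℝ E]
    {f : E → ℝ} (hf : ContDiff ℝ 1 f) {p : E} (hp : ‖p‖ = 1) (hr : 0 < fderiv ℝ f p p) :
    ∀ᶠ y in 𝓝 p, StrictMonoOn (fun s : ℝ => f (s • y)) (Icc 1 ‖y‖⁻¹) := by
  have hcont : Continuous fun z : ℝ × E => fderiv ℝ f (z.1 • z.2) z.2 :=
    ((hf.continuous_fderiv one_ne_zero).comp (by fun_prop)).clm_apply continuous_snd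
  obtain ⟨δ, hδ, hb⟩ := eventually_nhds_iff_ball.1 ((hcont.tendsto (1, p)).eventually
    (lt_mem_nhds (show 0 < fderiv ℝ f ((1 : ℝ) • p) p by rwa [one_smul])))
  have hinv : ∀ᶠ y in 𝓝 p, ‖y‖⁻¹ < 1 + δ := by
    refine (ContinuousAt.inv₀ continuous_norm.continuousAt (by simp [hp])).eventually
      (gt_mem_nhds ?_)
    simpa [hp] using hδ
  filter_upwards [ball_mem_nhds p hδ, hinv] with y hy hyinv
  have hder (s : ℝ) : HasDerivAt (fun s : ℝ => f (s • y)) (fderiv ℝ f (s • y) y) s := by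
    refine (hf.differentiable one_ne_zero _).hasFDerivAt.comp_hasDerivAt s ?_
    simpa using (hasDerivAt_id s).smul_const y
  refine strictMonoOn_of_deriv_pos (convex_Icc _ _)
    (fun s _ => (hder s).continuousAt.continuousWithinAt) fun s hs => ?_
  obtain ⟨hs1, hs2⟩ := interior_subset hs
  rw [(hder s).deriv]
  refine hb (s, y) ?_
  rw [← ball_prod_same]
  refine ⟨?_, hy⟩
  rw [mem_ball, Real.dist_eq, abs_of_nonneg (by linarith)]
  linarith

theorem strict_max_closedBall_of_sphere {E : Type*} [NormedAddCommGroup E] [NormedSpace ℝ E]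
    {f : E → ℝ} (hf : ContDiff ℝ 1 f) {p : E} (hp : ‖p‖ = 1) (hr : 0 < fderiv ℝ f p p)
    (hmax : ∀ᶠ z in 𝓝[sphere 0 1] p, z ≠ p → f z < f p) :
    ∀ᶠ y in 𝓝[closedBall 0 1] p, y ≠ p → f y < f p := by
  have hnorm : ContinuousAt (fun y : E => ‖y‖⁻¹ • y) p :=
    (ContinuousAt.inv₀ continuous_norm.continuousAt (by simp [hp])).smul continuousAt_id
  have hmax' : ∀ᶠ z in 𝓝 (‖p‖⁻¹ • p), z ∈ sphere 0 1 → z ≠ p → f z < f p := by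
    simpa [hp] using eventually_nhdsWithin_iff.1 hmax
  filter_upwards [nhdsWithin_le_nhds (eventually_strictMonoOn_radial hf hp hr),
    nhdsWithin_le_nhds (hnorm.eventually hmax'), self_mem_nhdsWithin,
    nhdsWithin_le_nhds (continuous_norm.continuousAt.eventually
      (lt_mem_nhds (show 0 < ‖p‖ by rw [hp]; exact one_pos)))]
    with y hmono hymax hy1 (hy0 : 0 < ‖y‖) hyp
  have hinv : 1 ≤ ‖y‖⁻¹ := (one_le_inv₀ hy0).2 (mem_closedBall_zero_iff.1 hy1)
  have hle := hmono.monotoneOn (left_mem_Icc.2 hinv) (right_mem_Icc.2 hinv) hinv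
  have hlt (h : 1 < ‖y‖⁻¹) := hmono (left_mem_Icc.2 hinv) (right_mem_Icc.2 hinv) h
  simp only [one_smul] at hle hlt
  by_cases hz : ‖y‖⁻¹ • y = p
  · rw [hz] at hlt
    exact hlt (hinv.lt_of_ne fun h => hyp (by rw [← hz, ← h, one_smul]))
  · refine hle.trans_lt (hymax ?_ hz)
    rw [mem_sphere_zero_iff_norm, norm_smul, norm_inv, norm_norm, inv_mul_cancel₀ hy0.ne']

/-! ### Boundary points of the unit disk -/

/-- The closed unit disk of the plane. -/
abbrev disk : Set E2 := closedBall 0 1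

section Disk

variable {f : E2 → ℝ} {t : ℝ}

theorem sphPt_mem_disk (t : ℝ) : sphPt t ∈ disk := by
  rw [mem_closedBall_zero_iff, norm_sphPt]

theorem strict_max_disk (hf : ContDiff ℝ 1 f)
    (hmax : ∀ᶠ s in 𝓝 t, s ≠ t → f (sphPt s) < f (sphPt t))
    (hr : 0 < fderiv ℝ f (sphPt t) (sphPt t)) :
    ∀ᶠ y in 𝓝[disk] sphPt t, y ≠ sphPt t → f y < f (sphPt t) := by
  refine strict_max_closedBall_of_sphere hf (norm_sphPt t) hr ?_
  refine (eventually_map.2 ?_).filter_mono (nhdsWithin_sphere_le_map_sphPt t)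
  filter_upwards [hmax] with s hs hne
  exact hs fun h => hne (congrArg sphPt h)

theorem strict_min_disk (hf : ContDiff ℝ 1 f)
    (hmin : ∀ᶠ s in 𝓝 t, s ≠ t → f (sphPt t) < f (sphPt s))
    (hr : fderiv ℝ f (sphPt t) (sphPt t) < 0) :
    ∀ᶠ y in 𝓝[disk] sphPt t, y ≠ sphPt t → f (sphPt t) < f y := by
  have h := strict_max_disk (f := -f) hf.neg (by simpa using hmin)
    (by simpa [fderiv_neg] using hr)
  simpa using h

theorem isRegularAbove_disk_of_deriv_ne_zero (hf : ContDiff ℝ 1 f)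
    (ht : deriv (fun t => f (sphPt t)) t ≠ 0) : IsRegularAbove disk f (sphPt t) := by
  set σ := deriv (fun t => f (sphPt t)) t
  refine .of_fderiv_pos (convex_closedBall 0 1) hf (Φ := fun s y => rotate (σ * s) y)
    (X := fun y => σ • quarterTurn y) ?_ ?_ ?_ ?_ ?_ ?_
  · unfold quarterTurn; fun_prop
  · unfold rotate; fun_prop
  · simp [rotate]
  · intro s y
    have hmul : HasDerivAt (fun s : ℝ => σ * s) σ s := by simpa using (hasDerivAt_id s).const_mul σ
    exact (hasDerivAt_rotate (σ * s) y).scomp s hmul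
  · filter_upwards with p hp
    rwa [mem_closedBall_zero_iff, norm_rotate, ← mem_closedBall_zero_iff]
  · rw [map_smul, ← deriv_comp_sphPt (hf.differentiable one_ne_zero _)]
    exact mul_self_pos.2 ht

theorem isRegularAbove_disk_of_strict_min
    (hmin : ∀ᶠ y in 𝓝[disk] sphPt t, y ≠ sphPt t → f (sphPt t) < f y) :
    IsRegularAbove disk f (sphPt t) := by
  have hsphere : sphPt t ∈ sphere (0 : E2) 1 := mem_sphere_zero_iff_norm.2 (norm_sphPt t)
  refine .of_strict_min_extremePoint
    (StrictConvexSpace.sphere_subset_extremePoints_closedBall 0 one_ne_zero hsphere)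
    (convex_closedBall 0 1) ?_ hmin
  refine (mem_closure_iff_nhdsWithin_neBot (s := ball 0 1)).1 ?_ |>.mono (nhdsWithin_mono _ ?_)
  · rw [closure_ball 0 one_ne_zero]
    exact sphPt_mem_disk t
  · refine fun y hy => ⟨ball_subset_closedBall hy, ?_⟩
    rintro rfl
    exact (mem_ball_zero_iff.1 hy).ne (norm_sphPt t)

theorem isRegularAbove_disk_of_strict_min_interior {x : E2} (hx : x ∈ ball (0 : E2) 1)
    (hmin : ∀ᶠ y in 𝓝 x, y ≠ x → f x < f y) : IsRegularAbove disk f x :=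
  .of_strict_min_interior (by rw [← Module.finrank_eq_rank]; norm_num)
    (mem_of_superset (isOpen_ball.mem_nhds hx) ball_subset_closedBall) hmin

end Disk

/-! ### Critical points forced by a pair of consecutive nodes -/

section Forced

variable {f : E2 → ℝ}

theorem strict_min_of_finite_critPts (hfin : (critPts f).Finite) {q : E2}
    (hq : q ∈ ball (0 : E2) 1) (hmin : IsLocalMin f q) : ∀ᶠ y in 𝓝 q, y ≠ q → f q < f y := by
  have isolated : ∀ᶠ y in 𝓝 q, y ∉ critPts f \ {q} :=
    (hfin.subset sdiff_subset).isClosed.isOpen_compl.mem_nhds (by simp)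
  filter_upwards [isolated, isOpen_ball.mem_nhds hq, hmin, eventually_eventually_nhds.2 hmin]
    with y hy hball hle hle' hne
  refine hle.lt_of_ne fun heq => hy ⟨⟨hball, ?_⟩, hne⟩
  rw [heq] at hle'
  exact IsLocalMin.fderiv_eq_zero hle'

theorem not_isLocalMin_of_isLocalMax (hfin : (critPts f).Finite) {q : E2}
    (hq : q ∈ ball (0 : E2) 1) (hmax : IsLocalMax f q) : ¬IsLocalMin f q := fun hmin => by
  have hne : ∀ᶠ y in 𝓝[≠] q, f q < f y :=
    eventually_nhdsWithin_iff.2 (strict_min_of_finite_critPts hfin hq hmin)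
  obtain ⟨y, hlt, hle⟩ := (hne.and (nhdsWithin_le_nhds hmax)).exists
  exact hlt.not_ge hle

/-- A local maximum `q` of `f` enclosed by the boundary point `p`: the component of
`{f > f p}` in the disk containing `q` misses the unit circle, while `q` is joined to `p` in
`{f ≥ f p}`. -/
structure IsTrappedMax (f : E2 → ℝ) (p q : E2) : Prop where
  isLocalMax : IsLocalMax f q
  not_joinedIn : ∀ p', ‖p'‖ = 1 → ¬JoinedIn (strictSuperlevel disk f (f p)) q p'
  joinedIn : JoinedIn (superlevel disk f (f p)) q p

theorem exists_joinedIn_superlevel_of_fderiv_neg (hf : ContDiff ℝ 1 f) {p : E2} (hp : ‖p‖ = 1)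
    (hr : fderiv ℝ f p p < 0) :
    ∃ y ∈ strictSuperlevel disk f (f p), JoinedIn (superlevel disk f (f p)) p y := by
  have hpos : 0 < fderiv ℝ f p (-p) := by rw [map_neg]; exact neg_pos.2 hr
  have hder : HasDerivAt (fun s : ℝ => f (p + s • -p)) (fderiv ℝ f p (-p)) 0 := by
    have hline : HasDerivAt (fun s : ℝ => p + s • -p) (-p) 0 := by
      simpa using ((hasDerivAt_id (0 : ℝ)).smul_const (-p)).const_add p
    exact HasFDerivAt.comp_hasDerivAt 0
      (by simpa using (hf.differentiable one_ne_zero p).hasFDerivAt) hline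
  have above : ∀ᶠ s in 𝓝[>] (0 : ℝ), f p < f (p + s • -p) := by
    have hslope := hder.tendsto_slope.mono_left (nhdsGT_le_nhdsNE 0)
    filter_upwards [hslope.eventually (lt_mem_nhds hpos), self_mem_nhdsWithin] with s hs hs0
    rw [slope_def_field, sub_zero] at hs
    simpa using (div_pos_iff_of_pos_right hs0).1 hs
  obtain ⟨u, hu, hsub⟩ :=
    mem_nhdsGT_iff_exists_Ioo_subset.1 (inter_mem above (Ioo_mem_nhdsGT one_pos))
  have hu0 : 0 < u := hu
  have mem {s : ℝ} (hs : s ∈ Ioo 0 u) : p + s • -p ∈ strictSuperlevel disk f (f p) := by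
    obtain ⟨hfs, hs0, hs1⟩ := hsub hs
    refine ⟨?_, hfs⟩
    rw [mem_closedBall_zero_iff, show p + s • -p = (1 - s) • p by module, norm_smul, hp, mul_one,
      Real.norm_eq_abs, abs_of_pos (sub_pos.2 hs1)]
    linarith
  refine ⟨_, mem ⟨half_pos hu0, half_lt_self hu0⟩, ?_⟩
  have hmaps : MapsTo (fun s : ℝ => p + s • -p) (Icc 0 (u / 2)) (superlevel disk f (f p)) := by
    rintro s ⟨hs0, hsu⟩
    rcases hs0.eq_or_lt with rfl | hs0
    · exact ⟨by simp [hp], by simp⟩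
    · exact strictSuperlevel_subset_superlevel (mem ⟨hs0, hsu.trans_lt (half_lt_self hu0)⟩)
  simpa using joinedIn_of_mapsTo_Icc (half_pos hu0).le (by fun_prop) hmaps

theorem exists_joinedIn_circle_or_isTrappedMax (hf : ContDiff ℝ 1 f) {p : E2} (hp : ‖p‖ = 1)
    (hr : fderiv ℝ f p p < 0) :
    (∃ p', ‖p'‖ = 1 ∧ f p < f p' ∧ JoinedIn (superlevel disk f (f p)) p p') ∨
      ∃ q ∈ ball (0 : E2) 1, IsTrappedMax f p q := by
  obtain ⟨y, hy, hpy⟩ := exists_joinedIn_superlevel_of_fderiv_neg hf hp hr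
  have weaken {x z : E2} (h : JoinedIn (strictSuperlevel disk f (f p)) x z) :
      JoinedIn (superlevel disk f (f p)) x z := h.mono strictSuperlevel_subset_superlevel
  by_cases hreach : ∃ p', ‖p'‖ = 1 ∧ JoinedIn (strictSuperlevel disk f (f p)) y p'
  · obtain ⟨p', hp', hyp'⟩ := hreach
    exact Or.inl ⟨p', hp', hyp'.target_mem.2, hpy.trans (weaken hyp')⟩
  · push Not at hreach
    obtain ⟨q, hyq, hq⟩ := exists_isLocalMaxOn_joinedIn (isCompact_closedBall (0 : E2) 1)
      (convex_closedBall 0 1) hf.continuous hy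
    have hball : q ∈ ball (0 : E2) 1 := by
      have hle : ‖q‖ ≤ 1 := mem_closedBall_zero_iff.1 hyq.target_mem.1
      exact mem_ball_zero_iff.2 (hle.lt_of_ne fun h1 => hreach q h1 hyq)
    exact Or.inr ⟨q, hball,
      hq.isLocalMax (mem_of_superset (isOpen_ball.mem_nhds hball) ball_subset_closedBall),
      fun p' hp' hqp' => hreach p' hp' (hyq.trans hqp'), (hpy.trans (weaken hyq)).symm⟩

/-- The critical point `q` is of a kind that a local maximum `M` and a local minimum `m` of the
boundary values force upon `f`: enclosed by `M` or by `m`, or neither a local maximum nor a local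
minimum, at a level between those of `m` and `M`. -/
def IsForcedCritPt (f : E2 → ℝ) (M m q : E2) : Prop :=
  q ∈ critPts f ∧ (IsTrappedMax f M q ∨ IsTrappedMax (-f) m q ∨
    (f q ∈ Icc (f m) (f M) ∧ ¬IsLocalMax f q ∧ ¬IsLocalMin f q))

theorem isLocalMin_of_isLocalMax_neg {q : E2} (h : IsLocalMax (-f) q) : IsLocalMin f q := by
  simpa using h.neg

theorem IsForcedCritPt.ne (hfin : (critPts f).Finite) {M m M' m' q q' : E2} (hM' : ‖M'‖ = 1)
    (hm : ‖m‖ = 1) (hmM : f m < f M) (hMm' : f M < f m') (hmM' : f m' < f M')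
    (hq : IsForcedCritPt f M m q) (hq' : IsForcedCritPt f M' m' q') : q ≠ q' := by
  rintro rfl
  have not_both : IsLocalMax f q → IsLocalMax (-f) q → False := fun hmax hmin =>
    not_isLocalMin_of_isLocalMax hfin hq.1.1 hmax (isLocalMin_of_isLocalMax_neg hmin)
  rcases hq.2 with hmax | hmin | ⟨hlev, not_max, not_min⟩ <;>
    rcases hq'.2 with hmax' | hmin' | ⟨hlev', not_max', not_min'⟩
  · exact hmax.not_joinedIn M' hM'
      (hmax'.joinedIn.mono fun x hx => ⟨hx.1, (hMm'.trans hmM').trans_le hx.2⟩)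
  · exact not_both hmax.isLocalMax hmin'.isLocalMax
  · exact not_max' hmax.isLocalMax
  · exact not_both hmax'.isLocalMax hmin.isLocalMax
  · exact hmin'.not_joinedIn m hm (hmin.joinedIn.mono fun x hx =>
      ⟨hx.1, (neg_lt_neg (hmM.trans hMm')).trans_le hx.2⟩)
  · exact not_min' (isLocalMin_of_isLocalMax_neg hmin.isLocalMax)
  · exact not_max hmax'.isLocalMax
  · exact not_min (isLocalMin_of_isLocalMax_neg hmin'.isLocalMax)
  · exact (hlev.2.trans_lt hMm').not_ge hlev'.1

theorem exists_saddle (hf : ContDiff ℝ 1 f) (hfin : (critPts f).Finite) {M Q : E2} {l : ℝ}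
    (hMd : M ∈ disk) (hQd : Q ∈ disk) (hM : ∀ᶠ y in 𝓝[disk] M, y ≠ M → f y < f M)
    (hMQ : f M < f Q) (hl : ∀ c < l, JoinedIn (strictSuperlevel disk f c) M Q)
    (hcircle : ∀ x, ‖x‖ = 1 → l ≤ f x → f x < f M → IsRegularAbove disk f x) :
    ∃ q ∈ critPts f, f q ∈ Icc l (f M) ∧ ¬IsLocalMax f q ∧ ¬IsLocalMin f q := by
  obtain ⟨q, hqd, hlq, hqM, not_max, not_regular⟩ := exists_not_isRegularAbove
    (isCompact_closedBall 0 1) (convex_closedBall 0 1) hf.continuous hMd hQd hM hMQ hl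
  have hball : q ∈ ball (0 : E2) 1 := by
    have hle : ‖q‖ ≤ 1 := mem_closedBall_zero_iff.1 hqd
    exact mem_ball_zero_iff.2 (hle.lt_of_ne fun h1 => not_regular (hcircle q h1 hlq hqM))
  have hnhds : disk ∈ 𝓝 q := mem_of_superset (isOpen_ball.mem_nhds hball) ball_subset_closedBall
  refine ⟨q, ⟨hball, ?_⟩, ⟨hlq, hqM.le⟩, fun hmax => not_max (hmax.on disk), fun hmin => ?_⟩
  · by_contra hcrit
    exact not_regular (.of_mem_interior (convex_closedBall 0 1) hf hnhds hcrit)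
  · exact not_regular (isRegularAbove_disk_of_strict_min_interior hball
      (strict_min_of_finite_critPts hfin hball hmin))

end Forced

namespace IsLadder

variable {g : ℝ → ℝ} {K : ℕ} {v p : ℕ → ℝ} (h : IsLadder g K v p) {k : ℕ} (hk : k < K)
include h hk

theorem peak_strict_max : ∀ᶠ t in 𝓝 (p k), t ≠ p k → g t < g (p k) := by
  filter_upwards [Icc_mem_nhds (h.valley_lt_peak k hk.le) (h.peak_lt_valley k hk.le)] with t
  exact h.lt_peak hk.le

theorem valley_succ_strict_min :
    ∀ᶠ t in 𝓝 (v (k + 1)), t ≠ v (k + 1) → g (v (k + 1)) < g t := by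
  have hpv := h.peak_lt_valley k hk.le
  have hvp := h.valley_lt_peak (k + 1) hk
  filter_upwards [Icc_mem_nhds hpv hvp] with t ht hne
  rcases hne.lt_or_gt with hlt | hgt
  · exact h.strictAntiOn_Icc hk.le ⟨ht.1, hlt.le⟩ ⟨hpv.le, le_rfl⟩ hlt
  · exact h.strictMonoOn_Icc hk ⟨le_rfl, hvp.le⟩ ⟨hgt.le, ht.2⟩ hgt

theorem valley_succ_le_level {t : ℝ} (ht : t ∈ Icc (p k) (p K)) : g (v (k + 1)) ≤ g t := by
  have hpv := (h.peak_lt_valley k hk.le).le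
  rcases le_or_gt t (v (k + 1)) with hle | hgt
  · exact (h.strictAntiOn_Icc hk.le).antitoneOn ⟨ht.1, hle⟩ ⟨hpv, le_rfl⟩ hle
  · exact h.valley_le_level hk ⟨hgt.le, ht.2⟩

theorem eq_valley_succ_of_deriv_eq_zero {t : ℝ} (ht : t ∈ Ico (v 0) (v 0 + 2 * π))
    (h0 : deriv g t = 0) (hlow : g (v (k + 1)) ≤ g t) (hhigh : g t < g (p k)) :
    t = v (k + 1) := by
  obtain ⟨j, hjK, htj⟩ := exists_mem_Ico_succ ht.1 (h.closing ▸ ht.2)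
  have hj : j ≤ K := Nat.lt_succ_iff.1 hjK
  rcases htj.1.eq_or_lt with rfl | hvt
  · have hkj := (h.level_valley_strictMonoOn.le_iff_le (mem_Iic.2 hk) (mem_Iic.2 hj)).1 hlow
    rcases hkj.eq_or_lt with rfl | hlt
    · rfl
    · obtain ⟨i, rfl⟩ := Nat.exists_eq_add_of_lt hlt
      exact absurd hhigh (h.peak_lt_valley_level (by omega) (by omega)).not_gt
  rcases lt_trichotomy t (p j) with hlt | rfl | hgt
  · exact absurd h0 (h.deriv_pos j hj t ⟨hvt, hlt⟩).ne'
  · have hjk := (h.level_peak_strictMonoOn.lt_iff_lt (mem_Iic.2 hj) (mem_Iic.2 hk.le)).1 hhigh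
    exact absurd hlow (h.peak_lt_valley_level hjk hk).not_ge
  · exact absurd h0 (h.deriv_neg j hj t ⟨hgt, htj.2⟩).ne

theorem exists_interlaced_angles {c d : ℝ} (hc : c ∈ Ico (v 0) (v 0 + 2 * π))
    (hd : d ∈ Ico (v 0) (v 0 + 2 * π)) (hgc : g (p k) < g c) (hgd : g d < g (v (k + 1))) :
    v (k + 1) < c ∧ ∃ d', sphPt d' = sphPt d ∧ c < d' ∧ d' < p k + 2 * π := by
  have hpv := (h.peak_lt_valley k hk.le).le
  have hvc : v (k + 1) < c := by
    by_contra! hle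
    rcases le_or_gt c (p k) with hcp | hpc
    · exact hgc.not_ge (h.level_le_peak hk.le ⟨hc.1, hcp⟩)
    · exact hgc.not_ge ((h.strictAntiOn_Icc hk.le).antitoneOn ⟨le_rfl, hpv⟩ ⟨hpc.le, hle⟩ hpc.le)
  refine ⟨hvc, ?_⟩
  rcases lt_or_ge d (p k) with hdp | hpd
  · exact ⟨d + 2 * π, periodic_sphPt d, by linarith [hc.2, hd.1], by linarith⟩
  have hlast : p K < d := by
    by_contra! hle
    exact hgd.not_ge (h.valley_succ_le_level hk ⟨hpd, hle⟩)
  have hdv : d < v (K + 1) := h.closing ▸ hd.2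
  have hcv : c < v (K + 1) := h.closing ▸ hc.2
  have hv0 : v 0 < p k := (h.valley_lt_peak 0 (Nat.zero_le _)).trans_le
    (h.peak_strictMonoOn.monotoneOn (mem_Iic.2 (Nat.zero_le _)) (mem_Iic.2 hk.le) (Nat.zero_le k))
  refine ⟨d, rfl, ?_, by linarith [hd.2]⟩
  by_contra! hdc
  have hanti := (h.strictAntiOn_Icc le_rfl).antitoneOn ⟨hlast.le, hdv.le⟩
    ⟨(hlast.trans_le hdc).le, hcv.le⟩ hdc
  linarith [h.valley_lt_prev_peak k hk]

variable {f : E2 → ℝ} (hfg : ∀ t, f (sphPt t) = g t)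
include hfg

theorem not_joinedIn_superlevel_and_sublevel {x y : E2} (hx : ‖x‖ = 1) (hy : ‖y‖ = 1)
    (hxp : f (sphPt (p k)) < f x) (hyv : f y < f (sphPt (v (k + 1))))
    (hpx : JoinedIn (superlevel disk f (f (sphPt (p k)))) (sphPt (p k)) x) :
    ¬JoinedIn (superlevel disk (-f) ((-f) (sphPt (v (k + 1))))) (sphPt (v (k + 1))) y := by
  obtain ⟨c, hc, rfl⟩ := exists_sphPt_eq (v 0) hx
  obtain ⟨d, hd, rfl⟩ := exists_sphPt_eq (v 0) hy
  simp only [hfg] at hxp hyv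
  obtain ⟨hvc, d', hd', hcd', hd'p⟩ := h.exists_interlaced_angles hk hc hd hxp hyv
  rw [← hd']
  rintro ⟨β, hβ⟩
  obtain ⟨α, hα⟩ := hpx
  obtain ⟨s, t, hst⟩ := exists_eq_of_crossing_paths (h.peak_lt_valley k hk.le) hvc hcd' hd'p α β
    (fun s => mem_closedBall_zero_iff.1 (hα s).1) (fun s => mem_closedBall_zero_iff.1 (hβ s).1)
  have above : f (sphPt (p k)) ≤ f (α s) := (hα s).2
  have below : f (β t) ≤ f (sphPt (v (k + 1))) := neg_le_neg_iff.1 (hβ t).2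
  rw [hst, hfg] at above
  rw [hfg] at below
  exact (h.valley_lt_prev_peak k hk).not_ge (above.trans below)

variable (hf : ContDiff ℝ 1 f)
include hf

theorem exists_isForcedCritPt_of_negative
    (hp : fderiv ℝ f (sphPt (p k)) (sphPt (p k)) < 0)
    (hv : 0 < fderiv ℝ f (sphPt (v (k + 1))) (sphPt (v (k + 1)))) :
    ∃ q, IsForcedCritPt f (sphPt (p k)) (sphPt (v (k + 1))) q := by
  rcases exists_joinedIn_circle_or_isTrappedMax hf (norm_sphPt _) hp with
    ⟨x, hx, hpx, hjx⟩ | ⟨q, hq, htrap⟩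
  · rcases exists_joinedIn_circle_or_isTrappedMax hf.neg (norm_sphPt (v (k + 1)))
      (by simpa [fderiv_neg] using hv) with ⟨y, hy, hvy, hjy⟩ | ⟨q, hq, htrap⟩
    · exact absurd hjy (h.not_joinedIn_superlevel_and_sublevel hk hfg hx hy hpx
        (neg_lt_neg_iff.1 hvy) hjx)
    · exact ⟨q, ⟨hq, (isLocalMin_of_isLocalMax_neg htrap.isLocalMax).fderiv_eq_zero⟩,
        Or.inr (Or.inl htrap)⟩
  · exact ⟨q, ⟨hq, htrap.isLocalMax.fderiv_eq_zero⟩, Or.inl htrap⟩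

theorem exists_isForcedCritPt_of_positive (hfin : (critPts f).Finite)
    (hp : 0 < fderiv ℝ f (sphPt (p k)) (sphPt (p k)))
    (hv : fderiv ℝ f (sphPt (v (k + 1))) (sphPt (v (k + 1))) < 0) :
    ∃ q, IsForcedCritPt f (sphPt (p k)) (sphPt (v (k + 1))) q := by
  have hpK : p k < p K := h.peak_strictMonoOn (mem_Iic.2 hk.le) (mem_Iic.2 le_rfl) hk
  obtain ⟨q, hq, hsaddle⟩ := exists_saddle (l := f (sphPt (v (k + 1)))) hf hfin
    (sphPt_mem_disk (p k)) (sphPt_mem_disk (p K))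
    (strict_max_disk hf (by simpa only [hfg] using h.peak_strict_max hk) hp)
    (by simpa only [hfg] using h.level_peak_strictMonoOn (mem_Iic.2 hk.le) (mem_Iic.2 le_rfl) hk)
    (fun c hc => joinedIn_of_mapsTo_Icc hpK.le continuous_sphPt.continuousOn fun t ht =>
      ⟨sphPt_mem_disk t, hc.trans_le (by simpa only [hfg] using h.valley_succ_le_level hk ht)⟩)
    (fun x hx hlow hhigh => by
      obtain ⟨t, ht, rfl⟩ := exists_sphPt_eq (v 0) hx
      simp only [hfg] at hlow hhigh
      by_cases h0 : deriv g t = 0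
      · rw [h.eq_valley_succ_of_deriv_eq_zero hk ht h0 hlow hhigh]
        exact isRegularAbove_disk_of_strict_min
          (strict_min_disk hf (by simpa only [hfg] using h.valley_succ_strict_min hk) hv)
      · exact isRegularAbove_disk_of_deriv_ne_zero hf (by simpa only [hfg] using h0))
  exact ⟨q, hq, Or.inr (Or.inr hsaddle)⟩

omit hk in
theorem card_le_encard_critPts {S : Finset ℕ} (hS : ∀ k ∈ S, k < K)
    (hsign : ∀ k ∈ S,
      (0 < fderiv ℝ f (sphPt (p k)) (sphPt (p k)) ∧
        fderiv ℝ f (sphPt (v (k + 1))) (sphPt (v (k + 1))) < 0) ∨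
      (fderiv ℝ f (sphPt (p k)) (sphPt (p k)) < 0 ∧
        0 < fderiv ℝ f (sphPt (v (k + 1))) (sphPt (v (k + 1))))) :
    (S.card : ℕ∞) ≤ (critPts f).encard := by
  by_cases hfin : (critPts f).Finite
  swap
  · rw [Set.Infinite.encard_eq hfin]
    exact le_top
  have hforced : ∀ k ∈ S, ∃ q, IsForcedCritPt f (sphPt (p k)) (sphPt (v (k + 1))) q :=
    fun k hk => (hsign k hk).elim
      (fun hs => h.exists_isForcedCritPt_of_positive (hS k hk) hfg hf hfin hs.1 hs.2)
      (fun hs => h.exists_isForcedCritPt_of_negative (hS k hk) hfg hf hs.1 hs.2)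
  choose! q hq using hforced
  have hne : ∀ j ∈ S, ∀ k ∈ S, j < k → q j ≠ q k := fun j hj k hk hjk =>
    (hq j hj).ne hfin (norm_sphPt _) (norm_sphPt _)
      (by simpa only [hfg] using h.valley_lt_prev_peak j (hS j hj))
      (by simpa only [hfg] using h.peak_lt_valley_level hjk (hS k hk))
      (by simpa only [hfg] using h.valley_lt_prev_peak k (hS k hk)) (hq k hk)
  have hinj : InjOn q (S : Set ℕ) := fun j hj k hk hjk => by
    by_contra hjk'
    rcases Ne.lt_or_gt hjk' with hlt | hgt
    · exact hne j hj k hk hlt hjk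
    · exact hne k hk j hj hgt hjk.symm
  rw [← Set.encard_coe_eq_coe_finsetCard]
  exact Set.encard_le_encard_of_injOn (fun k hk => (hq k hk).1) hinj

end IsLadder

/-! ### Polar coordinates -/

theorem exists_int_of_sphPt_eq {a b : ℝ} (h : sphPt a = sphPt b) :
    ∃ k : ℤ, a = b + k * (2 * π) := by
  have hexp := congrArg toComplex h
  rw [toComplex_sphPt, toComplex_sphPt] at hexp
  obtain ⟨k, hk⟩ := Complex.exp_eq_exp_iff_exists_int.1 hexp
  exact ⟨k, by simpa using congrArg Complex.im hk⟩

theorem eq_of_sphPt_eq {g : ℝ → ℝ} (hg : Function.Periodic g (2 * π)) {a b : ℝ}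
    (h : sphPt a = sphPt b) : g a = g b := by
  obtain ⟨k, rfl⟩ := exists_int_of_sphPt_eq h
  exact hg.int_mul k b

theorem norm_smul_sphPt {r : ℝ} (hr : 0 ≤ r) (t : ℝ) : ‖r • sphPt t‖ = r := by
  rw [norm_smul, norm_sphPt, mul_one, Real.norm_of_nonneg hr]

theorem exists_smul_sphPt_eq (a : ℝ) (x : E2) :
    ∃ t ∈ Ico a (a + 2 * π), ‖x‖ • sphPt t = x := by
  obtain ⟨φ, hφ, -⟩ := exists_angle_chart 0
  obtain ⟨t, ht, h⟩ := exists_sphPt_eq a (norm_sphPt (φ x))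
  exact ⟨t, ht, by rw [h, hφ]⟩

theorem exists_contDiff_of_polar {H : ℝ → ℝ → ℝ} (hper : ∀ r, Function.Periodic (H r) (2 * π))
    (hH : ∀ r > 0, ∀ t, ContDiffAt ℝ ∞ (Function.uncurry H) (r, t)) {F : E2 → ℝ}
    (hF : ContDiffAt ℝ ∞ F 0) {ε : ℝ} (hε : 0 < ε)
    (hHF : ∀ r ∈ Ico 0 ε, ∀ t, H r t = F (r • sphPt t)) :
    ∃ f : E2 → ℝ, ContDiff ℝ ∞ f ∧ ∀ r ≥ 0, ∀ t, f (r • sphPt t) = H r t := by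
  obtain ⟨φ₀, polar₀, -⟩ := exists_angle_chart 0
  have f_polar : ∀ r ≥ 0, ∀ t, H ‖r • sphPt t‖ (φ₀ (r • sphPt t)) = H r t := fun r hr t => by
    rw [norm_smul_sphPt hr]
    rcases eq_or_lt_of_le hr with rfl | hpos
    · simp only [hHF 0 ⟨le_rfl, hε⟩, zero_smul]
    · have hangle := polar₀ (r • sphPt t)
      rw [norm_smul_sphPt hr] at hangle
      exact eq_of_sphPt_eq (hper r) (smul_right_injective E2 hpos.ne' hangle)
  refine ⟨fun x => H ‖x‖ (φ₀ x), contDiff_iff_contDiffAt.2 fun x => ?_, f_polar⟩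
  rcases eq_or_ne x 0 with rfl | hx
  · refine hF.congr_of_eventuallyEq ?_
    filter_upwards [ball_mem_nhds 0 hε] with y hy
    rw [hHF _ ⟨norm_nonneg y, mem_ball_zero_iff.1 hy⟩, polar₀]
  · obtain ⟨φ, polar, -, φ_smooth⟩ := exists_angle_chart (φ₀ x)
    have hφ : ContDiffAt ℝ ∞ φ x := by
      simpa only [polar₀] using φ_smooth ‖x‖ (norm_pos_iff.2 hx)
    refine ((hH _ (norm_pos_iff.2 hx) (φ x)).comp x
      ((contDiffAt_norm ℝ hx).prodMk hφ)).congr_of_eventuallyEq (Eventually.of_forall fun y => ?_)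
    have := f_polar ‖y‖ (norm_nonneg y) (φ y)
    rwa [polar] at this

theorem hasDerivAt_comp_radial {f : E2 → ℝ} {σ : ℝ → ℝ} {σ' r t : ℝ} (hσ : HasDerivAt σ σ' r)
    (hf : DifferentiableAt ℝ f (σ r • sphPt t)) :
    HasDerivAt (fun r => f (σ r • sphPt t)) (σ' * fderiv ℝ f (σ r • sphPt t) (sphPt t)) r := by
  have h := hf.hasFDerivAt.comp_hasDerivAt r (hσ.smul_const (sphPt t))
  rwa [map_smul, smul_eq_mul] at h

theorem hasDerivAt_comp_angular {f : E2 → ℝ} {r t : ℝ}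
    (hf : DifferentiableAt ℝ f (r • sphPt t)) :
    HasDerivAt (fun t => f (r • sphPt t))
      (r * fderiv ℝ f (r • sphPt t) (quarterTurn (sphPt t))) t := by
  have h := hf.hasFDerivAt.comp_hasDerivAt t ((hasDerivAt_sphPt t).const_smul r)
  rwa [map_smul, smul_eq_mul] at h

theorem eq_zero_of_apply_sphPt_eq_zero {L : E2 →L[ℝ] ℝ} {t : ℝ} (hr : L (sphPt t) = 0)
    (ht : L (quarterTurn (sphPt t)) = 0) : L = 0 := by
  refine ContinuousLinearMap.ext fun x => ?_
  set z := toComplex x * Complex.exp (-(t * Complex.I))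
  have hz : x = z.re • sphPt t + z.im • quarterTurn (sphPt t) := by
    refine toComplex.injective ?_
    rw [map_add, map_smul, map_smul, quarterTurn, toComplex.apply_symm_apply, toComplex_sphPt,
      Complex.real_smul, Complex.real_smul, ← mul_assoc, ← add_mul, Complex.re_add_im, mul_assoc,
      ← Complex.exp_add, neg_add_cancel, Complex.exp_zero, mul_one]
  rw [hz, map_add, map_smul, map_smul, hr, ht, smul_zero, smul_zero, add_zero,
    zero_apply]

/-! ### A collar of the unit circle -/

/-- The time coordinate of the collar `1 / 4 ≤ ‖x‖ ≤ 1`, a smooth function of the radius `r`. It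
vanishes on the disk of radius `1 / 4` and grows to `1` at the unit circle. -/
def collarTime (r : ℝ) : ℝ := expNegInvGlue (r - 1 / 4) / expNegInvGlue (3 / 4)

theorem contDiff_collarTime : ContDiff ℝ ∞ collarTime :=
  (expNegInvGlue.contDiff.comp (contDiff_id.sub contDiff_const)).div_const _

theorem collarTime_eq_zero {r : ℝ} (hr : r ≤ 1 / 4) : collarTime r = 0 := by
  rw [collarTime, expNegInvGlue.zero_of_nonpos (by linarith), zero_div]

theorem collarTime_nonneg (r : ℝ) : 0 ≤ collarTime r :=
  div_nonneg (expNegInvGlue.nonneg _) (expNegInvGlue.nonneg _)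

theorem collarTime_one : collarTime 1 = 1 := by
  rw [collarTime, show (1 : ℝ) - 1 / 4 = 3 / 4 by norm_num,
    div_self (expNegInvGlue.pos_of_pos (by norm_num)).ne']

theorem deriv_collarTime_eq_zero {r : ℝ} (hr : r ≤ 1 / 4) : deriv collarTime r = 0 :=
  IsLocalMin.deriv_eq_zero <| Eventually.of_forall fun s => by
    rw [collarTime_eq_zero hr]
    exact collarTime_nonneg s

theorem deriv_collarTime_pos {r : ℝ} (hr : 1 / 4 < r) : 0 < deriv collarTime r := by
  have hpos : 0 < r - 1 / 4 := by linarith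
  have h := (expNegInvGlue.hasDerivAt_polynomial_eval_inv_mul 1 (r - 1 / 4)).comp r
    ((hasDerivAt_id r).sub_const (1 / 4))
  have hT := h.div_const (expNegInvGlue (3 / 4))
  simp only [Polynomial.eval_one, one_mul, Polynomial.derivative_one, sub_zero, mul_one,
    Polynomial.eval_pow, Polynomial.eval_X] at hT
  rw [show collarTime = _ from rfl, HasDerivAt.deriv (f := collarTime) hT]
  exact div_pos (mul_pos (by positivity) (expNegInvGlue.pos_of_pos hpos))
    (expNegInvGlue.pos_of_pos (by norm_num))

theorem strictMonoOn_collarTime : StrictMonoOn collarTime (Ici (1 / 4)) :=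
  strictMonoOn_of_deriv_pos (convex_Ici _) contDiff_collarTime.continuous.continuousOn
    fun r hr => deriv_collarTime_pos (by rwa [interior_Ici] at hr)

/-- The radius, in the domain of the inner model, over which the collar is spread: the identity
for `r ≤ 1 / 8` and constantly `1` for `1 / 4 + η ≤ r`. -/
def collarRadius (η r : ℝ) : ℝ := r + (1 - r) * Real.smoothTransition ((r - 1 / 8) / (1 / 8 + η))

theorem contDiff_collarRadius (η : ℝ) : ContDiff ℝ ∞ (collarRadius η) :=
  contDiff_id.add <| (contDiff_const.sub contDiff_id).mul <|
    Real.smoothTransition.contDiff.comp <| (contDiff_id.sub contDiff_const).div_const _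

theorem collarRadius_of_le {η r : ℝ} (hη : 0 < η) (hr : r ≤ 1 / 8) : collarRadius η r = r := by
  rw [collarRadius, Real.smoothTransition.zero_of_nonpos, mul_zero, add_zero]
  exact div_nonpos_of_nonpos_of_nonneg (by linarith) (by linarith)

theorem collarRadius_of_ge {η r : ℝ} (hη : 0 < η) (hr : 1 / 4 + η ≤ r) :
    collarRadius η r = 1 := by
  rw [collarRadius, Real.smoothTransition.one_of_one_le, mul_one, add_sub_cancel]
  rw [le_div_iff₀ (by linarith)]
  linarith

theorem collarRadius_mem_Ioc {η r : ℝ} (hη : η ∈ Ioo 0 (3 / 4)) (hr : 0 < r) :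
    collarRadius η r ∈ Ioc 0 1 := by
  rcases le_total r 1 with hr1 | hr1
  · have hlower := mul_nonneg (sub_nonneg.2 hr1)
      (Real.smoothTransition.nonneg ((r - 1 / 8) / (1 / 8 + η)))
    have hupper := mul_le_mul_of_nonneg_left
      (Real.smoothTransition.le_one ((r - 1 / 8) / (1 / 8 + η))) (sub_nonneg.2 hr1)
    constructor <;> rw [collarRadius] <;> linarith
  · simp [collarRadius_of_ge hη.1 (show 1 / 4 + η ≤ r by linarith [hη.2])]

theorem hasDerivAt_collarRadius {η : ℝ} (hη : 0 < η) (r : ℝ) : ∃ s ≥ 0,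
    HasDerivAt (collarRadius η)
      (1 - Real.smoothTransition ((r - 1 / 8) / (1 / 8 + η)) + (1 - r) * s) r := by
  have hmono : Monotone fun r => Real.smoothTransition ((r - 1 / 8) / (1 / 8 + η)) :=
    Real.smoothTransition.monotone.comp fun x y hxy => by gcongr
  have hdiff : Differentiable ℝ fun r => Real.smoothTransition ((r - 1 / 8) / (1 / 8 + η)) :=
    (Real.smoothTransition.contDiff.comp
      ((contDiff_id.sub contDiff_const).div_const _)).differentiable one_ne_zero
  refine ⟨_, hmono.deriv_nonneg (x := r), ?_⟩
  convert! (hasDerivAt_id r).add (((hasDerivAt_id r).const_sub 1).mul (hdiff r).hasDerivAt) using 1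
  simp only [id]
  ring

theorem deriv_collarRadius_nonneg {η r : ℝ} (hη : 0 < η) (hr : r ≤ 1) :
    0 ≤ deriv (collarRadius η) r := by
  obtain ⟨s, hs, h⟩ := hasDerivAt_collarRadius hη r
  rw [h.deriv]
  exact add_nonneg (sub_nonneg.2 (Real.smoothTransition.le_one _))
    (mul_nonneg (sub_nonneg.2 hr) hs)

theorem deriv_collarRadius_pos {η r : ℝ} (hη : 0 < η) (hr : r ≤ 1 / 4) :
    0 < deriv (collarRadius η) r := by
  obtain ⟨s, hs, h⟩ := hasDerivAt_collarRadius hη r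
  have hlt : (r - 1 / 8) / (1 / 8 + η) < 1 := by
    rw [div_lt_one (by linarith)]
    linarith
  rw [h.deriv]
  exact add_pos_of_pos_of_nonneg (sub_pos.2 (Real.smoothTransition.lt_one_of_lt_one hlt))
    (mul_nonneg (by linarith) hs)

theorem deriv_collarRadius_of_ge {η r : ℝ} (hη : 0 < η) (hr : 1 / 4 + η ≤ r) :
    deriv (collarRadius η) r = 0 := by
  have heq : EqOn (collarRadius η) 1 (Ici (1 / 4 + η)) := fun s hs => collarRadius_of_ge hη hs
  have hdiff := ((contDiff_collarRadius η).differentiable (by simp) r)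
  rw [← hdiff.derivWithin (uniqueDiffOn_Ici _ r hr), derivWithin_congr heq (heq hr)]
  exact congrFun (derivWithin_const _ _) r

theorem exists_collar_transition {ε : ℝ} (hε : 0 < ε) : ∃ η ∈ Ioo (0 : ℝ) (3 / 4),
    ∀ r ∈ Ioo (1 / 4) (1 / 4 + η), 1 - ε < collarRadius η r ∧ collarTime r < ε := by
  have hS : Tendsto (fun η : ℝ => Real.smoothTransition (1 / 8 / (1 / 8 + η))) (𝓝 0) (𝓝 1) := by
    have : ContinuousAt (fun η : ℝ => Real.smoothTransition (1 / 8 / (1 / 8 + η))) 0 :=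
      Real.smoothTransition.continuous.continuousAt.comp
        (continuousAt_const.div (by fun_prop) (by norm_num))
    simpa [Real.smoothTransition.one] using this.tendsto
  have hT : Tendsto (fun η => collarTime (1 / 4 + η)) (𝓝 0) (𝓝 0) := by
    have : ContinuousAt (fun η => collarTime (1 / 4 + η)) 0 :=
      (contDiff_collarTime.continuous.comp (by fun_prop)).continuousAt
    simpa [collarTime_eq_zero] using this.tendsto
  obtain ⟨η, ⟨hSη, hTη⟩, hη⟩ := (((hS.eventually_const_lt (sub_lt_self 1 hε)).and
    (hT.eventually_lt_const hε)).filter_mono nhdsWithin_le_nhds |>.and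
    (Ioo_mem_nhdsGT (show (0 : ℝ) < 3 / 4 by norm_num))).exists
  refine ⟨η, hη, fun r hr => ⟨?_, (strictMonoOn_collarTime hr.1.le ?_ hr.2).trans hTη⟩⟩
  · have hmono : Real.smoothTransition (1 / 8 / (1 / 8 + η)) ≤
        Real.smoothTransition ((r - 1 / 8) / (1 / 8 + η)) :=
      Real.smoothTransition.monotone
        (div_le_div_of_nonneg_right (by linarith [hr.1]) (by linarith [hη.1]))
    have hr0 : 0 < r := by linarith [hr.1]
    rw [collarRadius]
    nlinarith [Real.smoothTransition.le_one ((r - 1 / 8) / (1 / 8 + η))]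
  · exact le_add_of_nonneg_right hη.1.le

theorem hasDerivAt_prodMk_left {B : ℝ × ℝ → ℝ} (hB : Differentiable ℝ B) (τ t : ℝ) :
    HasDerivAt (fun τ => B (τ, t)) (fderiv ℝ B (τ, t) (1, 0)) τ :=
  (hB (τ, t)).hasFDerivAt.comp_hasDerivAt τ ((hasDerivAt_id τ).prodMk (hasDerivAt_const τ t))

theorem hasDerivAt_prodMk_right {B : ℝ × ℝ → ℝ} (hB : Differentiable ℝ B) (τ t : ℝ) :
    HasDerivAt (fun t => B (τ, t)) (fderiv ℝ B (τ, t) (0, 1)) t :=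
  (hB (τ, t)).hasFDerivAt.comp_hasDerivAt t ((hasDerivAt_const t τ).prodMk (hasDerivAt_id t))

theorem fderiv_eq_zero_of_partials {B : ℝ × ℝ → ℝ} {z : ℝ × ℝ} (h₁ : fderiv ℝ B z (1, 0) = 0)
    (h₂ : fderiv ℝ B z (0, 1) = 0) : fderiv ℝ B z = 0 := by
  refine ContinuousLinearMap.ext fun w => ?_
  rw [show w = w.1 • ((1, 0) : ℝ × ℝ) + w.2 • (0, 1) by ext <;> simp, map_add, map_smul, map_smul,
    h₁, h₂, smul_zero, smul_zero, add_zero, zero_apply]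

/-- The data needed to glue a function `E` without critical points on the closed unit disk to a
family `B (τ, ·)` of functions on the circle, `τ ∈ [0, 1]`, along a collar: the family starts at the
restriction of `E` to the circle, and at the critical points of that restriction it moves in the
direction of the radial derivative of `E`. -/
structure IsCollarFamily (E : E2 → ℝ) (B : ℝ × ℝ → ℝ) : Prop where
  contDiffAt : ∀ x ∈ disk, ContDiffAt ℝ ∞ E x
  fderiv_ne_zero : ∀ x ∈ disk, fderiv ℝ E x ≠ 0
  contDiff : ContDiff ℝ ∞ B
  periodic : ∀ τ, Function.Periodic (fun t => B (τ, t)) (2 * π)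
  initial : ∀ t, B (0, t) = E (sphPt t)
  outward : ∀ t, fderiv ℝ B (0, t) (0, 1) = 0 →
    0 < fderiv ℝ E (sphPt t) (sphPt t) * fderiv ℝ B (0, t) (1, 0)

/-- The glued function in polar coordinates `r`, `t`. -/
def collarExtension (E : E2 → ℝ) (B : ℝ × ℝ → ℝ) (η r t : ℝ) : ℝ :=
  E (collarRadius η r • sphPt t) + (B (collarTime r, t) - B (0, t))

theorem fderiv_origin_of_eq_collarExtension {E f : E2 → ℝ} {B : ℝ × ℝ → ℝ} {η : ℝ} (hη : 0 < η)
    (hfE : ∀ r ≥ 0, ∀ t, f (r • sphPt t) = collarExtension E B η r t) :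
    fderiv ℝ f 0 = fderiv ℝ E 0 := by
  refine EventuallyEq.fderiv_eq ?_
  filter_upwards [ball_mem_nhds (0 : E2) (show (0 : ℝ) < 1 / 8 by norm_num)] with x hx
  rw [mem_ball_zero_iff] at hx
  obtain ⟨t, -, polar⟩ := exists_smul_sphPt_eq 0 x
  rw [← polar, hfE _ (norm_nonneg x), collarExtension, collarRadius_of_le hη hx.le,
    collarTime_eq_zero (by linarith), sub_self, add_zero]

/-- If the angular derivative at the point with polar coordinates `s`, `t` of `E`, moved along the
family `B` up to time `τ`, vanishes, then `E` grows radially there in the direction in which the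
family moves. This is what excludes critical points where the collar meets the domain of `E`. -/
def IsOutwardAt (E : E2 → ℝ) (B : ℝ × ℝ → ℝ) (s τ t : ℝ) : Prop :=
  s * fderiv ℝ E (s • sphPt t) (quarterTurn (sphPt t)) +
    (fderiv ℝ B (τ, t) (0, 1) - fderiv ℝ B (0, t) (0, 1)) = 0 →
  0 < fderiv ℝ E (s • sphPt t) (sphPt t) * fderiv ℝ B (τ, t) (1, 0)

namespace IsCollarFamily

variable {E : E2 → ℝ} {B : ℝ × ℝ → ℝ} (h : IsCollarFamily E B)
include h

theorem differentiableAt {s : ℝ} (hs : s ∈ Icc 0 1) (t : ℝ) :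
    DifferentiableAt ℝ E (s • sphPt t) :=
  ContDiffAt.differentiableAt (n := ∞) (h.contDiffAt _ <| by
    rw [mem_closedBall_zero_iff, norm_smul_sphPt hs.1]; exact hs.2) (by simp)

theorem fderiv_initial (t : ℝ) :
    fderiv ℝ B (0, t) (0, 1) = fderiv ℝ E (sphPt t) (quarterTurn (sphPt t)) := by
  have hB := hasDerivAt_prodMk_right (h.contDiff.differentiable (by simp)) 0 t
  have hE := hasDerivAt_comp_angular (f := E) (r := 1) (t := t) (h.differentiableAt (by simp) t)
  simp only [h.initial] at hB
  simp only [one_smul, one_mul] at hE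
  exact hB.unique hE

theorem exists_contDiff_eq_collarExtension {η : ℝ} (hη : η ∈ Ioo 0 (3 / 4)) :
    ∃ f : E2 → ℝ, ContDiff ℝ ∞ f ∧ ∀ r ≥ 0, ∀ t, f (r • sphPt t) = collarExtension E B η r t := by
  refine exists_contDiff_of_polar (F := E) (ε := 1 / 8) (fun r t => ?_) (fun r hr t => ?_)
    (h.contDiffAt 0 (by simp)) (by norm_num) fun r hr t => ?_
  · simp only [collarExtension, h.periodic _ t, periodic_sphPt t]
  · have hσ := collarRadius_mem_Ioc hη hr
    have hE : ContDiffAt ℝ ∞ E (collarRadius η r • sphPt t) :=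
      h.contDiffAt _ (by rw [mem_closedBall_zero_iff, norm_smul_sphPt hσ.1.le]; exact hσ.2)
    have hpolar : ContDiff ℝ ∞ fun z : ℝ × ℝ => collarRadius η z.1 • sphPt z.2 :=
      ((contDiff_collarRadius η).comp contDiff_fst).smul (contDiff_sphPt.comp contDiff_snd)
    have hcollar : ContDiff ℝ ∞ fun z : ℝ × ℝ => B (collarTime z.1, z.2) - B (0, z.2) :=
      (h.contDiff.comp ((contDiff_collarTime.comp contDiff_fst).prodMk contDiff_snd)).sub
        (h.contDiff.comp (contDiff_const.prodMk contDiff_snd))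
    exact (ContDiffAt.comp (r, t) hE hpolar.contDiffAt).add hcollar.contDiffAt
  · simp only [collarExtension, collarRadius_of_le hη.1 hr.2.le,
      collarTime_eq_zero (show r ≤ 1 / 4 by linarith [hr.2]), sub_self, add_zero]

section

variable {η : ℝ} (hη : η ∈ Ioo 0 (3 / 4)) {f : E2 → ℝ} (hf : Differentiable ℝ f)
  (hfE : ∀ r ≥ 0, ∀ t, f (r • sphPt t) = collarExtension E B η r t)
include hη hf hfE

theorem fderiv_radial {r : ℝ} (hr : 0 < r) (t : ℝ) : fderiv ℝ f (r • sphPt t) (sphPt t) =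
    deriv (collarRadius η) r * fderiv ℝ E (collarRadius η r • sphPt t) (sphPt t) +
      deriv collarTime r * fderiv ℝ B (collarTime r, t) (1, 0) := by
  have hσ := ((contDiff_collarRadius η).differentiable (by simp) r).hasDerivAt
  have hT := (contDiff_collarTime.differentiable (by simp) r).hasDerivAt
  have hB := (hasDerivAt_prodMk_left (h.contDiff.differentiable (by simp)) _ t).comp r hT
  have hE := hasDerivAt_comp_radial hσ
    (h.differentiableAt (Ioc_subset_Icc_self (collarRadius_mem_Ioc hη hr)) t)
  have hleft := hasDerivAt_comp_radial (hasDerivAt_id r) (hf (r • sphPt t))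
  have hright := (hE.add (hB.sub_const (B (0, t)))).congr_of_eventuallyEq
    (f₁ := fun r => f (r • sphPt t)) <| by
      filter_upwards [Ioi_mem_nhds hr] with s hs using hfE s (le_of_lt hs) t
  rw [← one_mul (fderiv ℝ f _ _), mul_comm (deriv collarTime r)]
  exact hleft.unique hright

theorem fderiv_angular {r : ℝ} (hr : 0 < r) (t : ℝ) :
    r * fderiv ℝ f (r • sphPt t) (quarterTurn (sphPt t)) =
    collarRadius η r * fderiv ℝ E (collarRadius η r • sphPt t) (quarterTurn (sphPt t)) +
      (fderiv ℝ B (collarTime r, t) (0, 1) - fderiv ℝ B (0, t) (0, 1)) := by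
  have hB := h.contDiff.differentiable (by simp)
  have hright := (hasDerivAt_comp_angular
    (h.differentiableAt (Ioc_subset_Icc_self (collarRadius_mem_Ioc hη hr)) t)).add
      ((hasDerivAt_prodMk_right hB (collarTime r) t).sub (hasDerivAt_prodMk_right hB 0 t))
  have hleft := hasDerivAt_comp_angular (r := r) (hf (r • sphPt t))
  simp only [hfE r hr.le] at hleft
  exact hleft.unique hright

theorem fderiv_boundary (t : ℝ) : fderiv ℝ f (sphPt t) (sphPt t) =
    deriv collarTime 1 * fderiv ℝ B (1, t) (1, 0) := by
  have := h.fderiv_radial hη hf hfE one_pos t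
  rwa [one_smul, deriv_collarRadius_of_ge hη.1 (by linarith [hη.2]), zero_mul, zero_add,
    collarTime_one] at this

end

theorem eventually_isOutwardAt (t : ℝ) :
    ∀ᶠ z : (ℝ × ℝ) × ℝ in 𝓝 ((1, 0), t), IsOutwardAt E B z.1.1 z.1.2 z.2 := by
  have hE : ContinuousAt (fun z : (ℝ × ℝ) × ℝ => fderiv ℝ E (z.1.1 • sphPt z.2)) ((1, 0), t) := by
    have hE' : ContinuousAt (fderiv ℝ E) (sphPt t) :=
      ((h.contDiffAt _ (sphPt_mem_disk t)).fderiv_right (m := ∞) (by simp)).continuousAt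
    refine ContinuousAt.comp' (g := fderiv ℝ E) (by simpa using hE') ?_
    exact ((continuous_fst.comp continuous_fst).smul
      (continuous_sphPt.comp continuous_snd)).continuousAt
  have hB : Continuous (fderiv ℝ B) := h.contDiff.continuous_fderiv (by simp)
  have hsph : Continuous fun z : (ℝ × ℝ) × ℝ => sphPt z.2 := continuous_sphPt.comp continuous_snd
  have hturn : Continuous fun z : (ℝ × ℝ) × ℝ => quarterTurn (sphPt z.2) := by
    unfold quarterTurn
    fun_prop
  have hangular : ContinuousAt (fun z : (ℝ × ℝ) × ℝ =>
      z.1.1 * fderiv ℝ E (z.1.1 • sphPt z.2) (quarterTurn (sphPt z.2)) +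
        (fderiv ℝ B (z.1.2, z.2) (0, 1) - fderiv ℝ B (0, z.2) (0, 1))) ((1, 0), t) :=
    (continuous_fst.fst.continuousAt.mul (hE.clm_apply hturn.continuousAt)).add
      (Continuous.continuousAt (by fun_prop))
  have hradial : ContinuousAt (fun z : (ℝ × ℝ) × ℝ =>
      fderiv ℝ E (z.1.1 • sphPt z.2) (sphPt z.2) * fderiv ℝ B (z.1.2, z.2) (1, 0)) ((1, 0), t) :=
    (hE.clm_apply hsph.continuousAt).mul (Continuous.continuousAt (by fun_prop))
  by_cases hcrit : fderiv ℝ B (0, t) (0, 1) = 0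
  · filter_upwards [hradial.eventually_const_lt (by simpa using h.outward t hcrit)] with z hz _
    exact hz
  · filter_upwards [hangular.eventually_ne (y := 0) (by simpa [h.fderiv_initial t] using hcrit)]
      with z hz hz0
    exact absurd hz0 hz

theorem exists_transition_width (t₀ : ℝ) : ∃ ε > 0, ∀ s ∈ Ioc (1 - ε) 1, ∀ τ ∈ Ico 0 ε,
    ∀ t ∈ Icc t₀ (t₀ + 2 * π), IsOutwardAt E B s τ t := by
  obtain ⟨ε, hε, hball⟩ := Metric.eventually_nhds_iff.1
    (isCompact_Icc.eventually_forall_of_forall_eventually (K := Icc t₀ (t₀ + 2 * π))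
      (x₀ := ((1, 0) : ℝ × ℝ)) (P := fun w t => IsOutwardAt E B w.1 w.2 t)
      fun t _ => h.eventually_isOutwardAt t)
  refine ⟨ε, hε, fun s hs τ hτ => hball (y := (s, τ)) ?_⟩
  rw [Prod.dist_eq, max_lt_iff, Real.dist_eq, Real.dist_eq, abs_lt, abs_lt]
  constructor <;> constructor <;> linarith [hs.1, hs.2, hτ.1, hτ.2]

theorem fderiv_eq_zero_of_collar {t₀ : ℝ} {ε η : ℝ} (hη : η ∈ Ioo 0 (3 / 4))
    (hwidth : ∀ s ∈ Ioc (1 - ε) 1, ∀ τ ∈ Ico 0 ε, ∀ t ∈ Icc t₀ (t₀ + 2 * π),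
      IsOutwardAt E B s τ t)
    (htrans : ∀ r ∈ Ioo (1 / 4) (1 / 4 + η), 1 - ε < collarRadius η r ∧ collarTime r < ε)
    {f : E2 → ℝ} (hf : Differentiable ℝ f)
    (hfE : ∀ r ≥ 0, ∀ t, f (r • sphPt t) = collarExtension E B η r t)
    {r t : ℝ} (hr : r ∈ Ioo 0 1) (ht : t ∈ Icc t₀ (t₀ + 2 * π))
    (hcrit : fderiv ℝ f (r • sphPt t) = 0) :
    1 / 4 < r ∧ fderiv ℝ B (collarTime r, t) = 0 := by
  have hσ := collarRadius_mem_Ioc hη hr.1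
  have hradial := h.fderiv_radial hη hf hfE hr.1 t
  have hangular := h.fderiv_angular hη hf hfE hr.1 t
  rw [hcrit, zero_apply] at hradial hangular
  rw [mul_zero] at hangular
  rcases le_or_gt r (1 / 4) with hr4 | hr4
  · have hr0 := deriv_collarRadius_pos hη.1 hr4
    rw [deriv_collarTime_eq_zero hr4, zero_mul, add_zero] at hradial
    rw [collarTime_eq_zero hr4, sub_self, add_zero] at hangular
    have hE := eq_zero_of_apply_sphPt_eq_zero ((mul_eq_zero.1 hradial.symm).resolve_left hr0.ne')
      ((mul_eq_zero.1 hangular.symm).resolve_left hσ.1.ne')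
    refine absurd hE (h.fderiv_ne_zero _ ?_)
    rw [mem_closedBall_zero_iff, norm_smul_sphPt hσ.1.le]
    exact hσ.2
  have hT := deriv_collarTime_pos hr4
  refine ⟨hr4, ?_⟩
  rcases lt_or_ge r (1 / 4 + η) with hrη | hrη
  · obtain ⟨hs, hτ⟩ := htrans r ⟨hr4, hrη⟩
    have hpos := mul_pos hT
      (hwidth _ ⟨hs, hσ.2⟩ _ ⟨collarTime_nonneg r, hτ⟩ t ht hangular.symm)
    have hnonneg := mul_nonneg (deriv_collarRadius_nonneg hη.1 hr.2.le)
      (sq_nonneg (fderiv ℝ E (collarRadius η r • sphPt t) (sphPt t)))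
    have hmul := congrArg (fderiv ℝ E (collarRadius η r • sphPt t) (sphPt t) * ·) hradial
    linarith
  · rw [deriv_collarRadius_of_ge hη.1 hrη, zero_mul, zero_add] at hradial
    rw [collarRadius_of_ge hη.1 hrη, one_smul, one_mul, h.fderiv_initial,
      add_sub_cancel] at hangular
    exact fderiv_eq_zero_of_partials ((mul_eq_zero.1 hradial.symm).resolve_left hT.ne')
      hangular.symm

theorem exists_extension (t₀ : ℝ) : ∃ f : E2 → ℝ, ContDiff ℝ ∞ f ∧
    (∀ t, f (sphPt t) = B (1, t)) ∧
    (∃ c > 0, ∀ t, fderiv ℝ f (sphPt t) (sphPt t) = c * fderiv ℝ B (1, t) (1, 0)) ∧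
    (critPts f).encard ≤
      {z ∈ Ioo (0 : ℝ) 1 ×ˢ Ico t₀ (t₀ + 2 * π) | fderiv ℝ B z = 0}.encard := by
  obtain ⟨ε, hε, hwidth⟩ := h.exists_transition_width t₀
  obtain ⟨η, hη, htrans⟩ := exists_collar_transition hε
  obtain ⟨f, hf, hfE⟩ := h.exists_contDiff_eq_collarExtension hη
  have hdiff := hf.differentiable (by simp)
  refine ⟨f, hf, fun t => ?_, ⟨_, deriv_collarTime_pos (by norm_num),
    h.fderiv_boundary hη hdiff hfE⟩, ?_⟩
  · have hη1 : 1 / 4 + η ≤ 1 := by linarith [hη.2]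
    simpa [collarExtension, collarRadius_of_ge hη.1 hη1, collarTime_one, h.initial]
      using hfE 1 zero_le_one t
  choose φ hφ polar using exists_smul_sphPt_eq t₀
  have hcollar : ∀ x ∈ critPts f, 1 / 4 < ‖x‖ ∧ fderiv ℝ B (collarTime ‖x‖, φ x) = 0 :=
    fun x ⟨hx, hcrit⟩ => by
      have hx0 : x ≠ 0 := by
        rintro rfl
        exact h.fderiv_ne_zero 0 (by simp) (fderiv_origin_of_eq_collarExtension hη.1 hfE ▸ hcrit)
      exact h.fderiv_eq_zero_of_collar hη hwidth htrans hdiff hfE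
        ⟨norm_pos_iff.2 hx0, mem_ball_zero_iff.1 hx⟩ (Ico_subset_Icc_self (hφ x))
        ((polar x).symm ▸ hcrit)
  refine encard_le_encard_of_injOn (f := fun x => (collarTime ‖x‖, φ x)) (fun x hx => ?_)
    fun x hx y hy hxy => ?_
  · have hx1 : ‖x‖ < 1 := mem_ball_zero_iff.1 hx.1
    obtain ⟨hx4, hB⟩ := hcollar x hx
    refine ⟨⟨⟨?_, ?_⟩, hφ x⟩, hB⟩
    · simpa [collarTime_eq_zero] using strictMonoOn_collarTime self_mem_Ici hx4.le hx4
    · simpa [collarTime_one] using strictMonoOn_collarTime hx4.le (by norm_num) hx1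
  · obtain ⟨htime_eq, hangle⟩ := Prod.mk.inj hxy
    rw [← polar x, ← polar y, hangle,
      strictMonoOn_collarTime.injOn (hcollar x hx).1.le (hcollar y hy).1.le htime_eq]

end IsCollarFamily

/-! ### A model without critical points -/

theorem inner_sphPt_sphPt (a b : ℝ) : ⟪sphPt a, sphPt b⟫ = Real.cos (b - a) := by
  rw [EuclideanSpace.inner_eq_star_dotProduct]
  simp [sphPt, dotProduct, Fin.sum_univ_two, Real.cos_sub]

theorem quarterTurn_sphPt (t : ℝ) : quarterTurn (sphPt t) = sphPt (t + π / 2) := by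
  refine toComplex.injective ?_
  rw [quarterTurn, toComplex.apply_symm_apply, toComplex_sphPt, toComplex_sphPt,
    Complex.ofReal_add, add_mul, Complex.exp_add, mul_comm Complex.I]
  simp [Complex.exp_pi_div_two_mul_I]

/-- The projective coordinate `w / (1 - c * u)`, where `u` and `w` are the orthonormal coordinates
of the plane with first axis in the direction `μ`. On the unit circle it has one maximum and one
minimum, at the angles `μ ± arccos c`, and it has no critical points in the disk. -/
def perspective (μ c : ℝ) (x : E2) : ℝ := ⟪sphPt (μ + π / 2), x⟫ / (1 - c * ⟪sphPt μ, x⟫)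

section

variable {μ c : ℝ} (hc : |c| < 1)
include hc

theorem one_sub_mul_inner_pos {x : E2} (hx : x ∈ disk) : 0 < 1 - c * ⟪sphPt μ, x⟫ := by
  have hinner : |⟪sphPt μ, x⟫| ≤ 1 := by
    simpa [norm_sphPt] using (abs_real_inner_le_norm (sphPt μ) x).trans
      (mul_le_of_le_one_right (norm_nonneg _) (mem_closedBall_zero_iff.1 hx))
  have := (abs_mul c ⟪sphPt μ, x⟫).trans_lt
    ((mul_le_of_le_one_right (abs_nonneg c) hinner).trans_lt hc)
  linarith [le_abs_self (c * ⟪sphPt μ, x⟫)]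

theorem contDiffAt_perspective {x : E2} (hx : x ∈ disk) : ContDiffAt ℝ ∞ (perspective μ c) x :=
  (contDiffAt_const.inner ℝ contDiffAt_id).div
    (contDiffAt_const.sub (contDiffAt_const.mul (contDiffAt_const.inner ℝ contDiffAt_id)))
    (one_sub_mul_inner_pos hc hx).ne'

theorem fderiv_perspective_apply {x : E2} (hx : x ∈ disk) (y : E2) :
    fderiv ℝ (perspective μ c) x y =
      (⟪sphPt (μ + π / 2), y⟫ * (1 - c * ⟪sphPt μ, x⟫) +
        c * ⟪sphPt μ, y⟫ * ⟪sphPt (μ + π / 2), x⟫) / (1 - c * ⟪sphPt μ, x⟫) ^ 2 := by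
  have hline (z : E2) : HasDerivAt (fun s : ℝ => ⟪z, x + s • y⟫) ⟪z, y⟫ 0 := by
    simp only [inner_add_right, inner_smul_right]
    simpa using ((hasDerivAt_id (0 : ℝ)).mul_const ⟪z, y⟫).const_add ⟪z, x⟫
  have hpos := one_sub_mul_inner_pos (μ := μ) hc hx
  have hquot := (hline (sphPt (μ + π / 2))).div (((hline (sphPt μ)).const_mul c).const_sub 1)
    (by simpa using hpos.ne')
  have hderiv := ((contDiffAt_perspective (μ := μ) hc hx).differentiableAt
    (by simp)).hasFDerivAt.hasLineDerivAt y
  rw [hderiv.unique hquot]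
  simp only [zero_smul, add_zero]
  ring

theorem fderiv_perspective_ne_zero {x : E2} (hx : x ∈ disk) :
    fderiv ℝ (perspective μ c) x ≠ 0 := fun hzero => by
  have h := fderiv_perspective_apply (μ := μ) hc hx (sphPt (μ + π / 2))
  have hpos := one_sub_mul_inner_pos (μ := μ) hc hx
  rw [hzero, zero_apply, inner_sphPt_sphPt, inner_sphPt_sphPt, sub_self, add_sub_cancel_left,
    Real.cos_zero, Real.cos_pi_div_two, mul_zero, zero_mul, add_zero, one_mul] at h
  exact (div_pos hpos (pow_pos hpos 2)).ne h

theorem fderiv_perspective_radial (t : ℝ) : fderiv ℝ (perspective μ c) (sphPt t) (sphPt t) =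
    Real.sin (t - μ) / (1 - c * Real.cos (t - μ)) ^ 2 := by
  rw [fderiv_perspective_apply hc (sphPt_mem_disk t), inner_sphPt_sphPt, inner_sphPt_sphPt,
    ← sub_sub, Real.cos_sub_pi_div_two]
  ring

theorem fderiv_perspective_angular (t : ℝ) :
    fderiv ℝ (perspective μ c) (sphPt t) (quarterTurn (sphPt t)) =
    (Real.cos (t - μ) - c) / (1 - c * Real.cos (t - μ)) ^ 2 := by
  rw [fderiv_perspective_apply hc (sphPt_mem_disk t), quarterTurn_sphPt]
  simp only [inner_sphPt_sphPt]
  rw [add_sub_add_right_eq_sub, ← sub_sub, Real.cos_sub_pi_div_two, add_sub_right_comm,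
    Real.cos_add_pi_div_two]
  congr 1
  linear_combination -c * Real.sin_sq_add_cos_sq (t - μ)

end

theorem cos_lt_cos_of_mem_Ioo {x h : ℝ} (hx : x ∈ Ioo (-h) h) (hh : h ≤ π) :
    Real.cos h < Real.cos x := by
  rw [← Real.cos_abs x]
  exact Real.cos_lt_cos_of_nonneg_of_le_pi (abs_nonneg x) hh (abs_lt.2 hx)

theorem cos_lt_cos_of_mem_Ioo_two_pi_sub {x h : ℝ} (hx : x ∈ Ioo h (2 * π - h)) (hh : 0 ≤ h) :
    Real.cos x < Real.cos h := by
  have := cos_lt_cos_of_mem_Ioo (x := π - x) (h := π - h)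
    ⟨by linarith [hx.2], by linarith [hx.1]⟩ (by linarith)
  rwa [Real.cos_pi_sub, Real.cos_pi_sub, neg_lt_neg_iff] at this

/-- A function without critical points on the closed unit disk whose restriction to the unit circle
increases from its minimum at the angle `b` to its maximum at the angle `m` and decreases on the
complementary arc, and which grows in the directions away from the origin at the maximum and towards
it at the minimum. -/
structure IsModel (E : E2 → ℝ) (b m : ℝ) : Prop where
  contDiffAt : ∀ x ∈ disk, ContDiffAt ℝ ∞ E x
  fderiv_ne_zero : ∀ x ∈ disk, fderiv ℝ E x ≠ 0
  deriv_pos : ∀ t ∈ Ioo b m, 0 < deriv (fun t => E (sphPt t)) t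
  deriv_neg : ∀ t ∈ Ioo m (b + 2 * π), deriv (fun t => E (sphPt t)) t < 0
  radial_min : fderiv ℝ E (sphPt b) (sphPt b) < 0
  radial_max : 0 < fderiv ℝ E (sphPt m) (sphPt m)

theorem isModel_perspective (μ : ℝ) {h : ℝ} (h0 : 0 < h) (hπ : h < π) :
    IsModel (perspective μ (Real.cos h)) (μ - h) (μ + h) := by
  have hc : |Real.cos h| < 1 := by
    refine abs_lt.2 ⟨?_, ?_⟩
    · rw [← Real.cos_pi]
      exact Real.cos_lt_cos_of_nonneg_of_le_pi h0.le le_rfl hπ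
    · rw [← Real.cos_zero]
      exact Real.cos_lt_cos_of_nonneg_of_le_pi le_rfl hπ.le h0
  have hden (t : ℝ) : 0 < (1 - Real.cos h * Real.cos (t - μ)) ^ 2 := by
    have := one_sub_mul_inner_pos (μ := μ) hc (sphPt_mem_disk t)
    rw [inner_sphPt_sphPt] at this
    exact pow_pos this 2
  have hderiv (t : ℝ) := (deriv_comp_sphPt ((contDiffAt_perspective (μ := μ) hc
    (sphPt_mem_disk t)).differentiableAt (by simp))).trans (fderiv_perspective_angular hc t)
  have hsin := Real.sin_pos_of_pos_of_lt_pi h0 hπ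
  refine ⟨fun x hx => contDiffAt_perspective hc hx, fun x hx => fderiv_perspective_ne_zero hc hx,
    fun t ht => ?_, fun t ht => ?_, ?_, ?_⟩
  · rw [hderiv]
    exact div_pos (sub_pos.2 (cos_lt_cos_of_mem_Ioo
      ⟨by linarith [ht.1], by linarith [ht.2]⟩ hπ.le)) (hden t)
  · rw [hderiv]
    exact div_neg_of_neg_of_pos (sub_neg.2 (cos_lt_cos_of_mem_Ioo_two_pi_sub
      ⟨by linarith [ht.1], by linarith [ht.2]⟩ h0.le)) (hden t)
  · rw [fderiv_perspective_radial hc]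
    exact div_neg_of_neg_of_pos (by simpa using hsin) (hden _)
  · rw [fderiv_perspective_radial hc]
    exact div_pos (by simpa using hsin) (hden _)

theorem IsModel.comp {E : E2 → ℝ} {b m : ℝ} (hE : IsModel E b m) {W : ℝ → ℝ}
    (hW : ContDiff ℝ ∞ W) (hW' : ∀ x, 0 < deriv W x) : IsModel (W ∘ E) b m := by
  have hfderiv : ∀ x ∈ disk, fderiv ℝ (W ∘ E) x = deriv W (E x) • fderiv ℝ E x := fun x hx =>
    ((hW.differentiable (by simp) _).hasDerivAt.comp_hasFDerivAt x
      ((hE.contDiffAt x hx).differentiableAt (by simp)).hasFDerivAt).fderiv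
  have hderiv (t : ℝ) : deriv (fun t => (W ∘ E) (sphPt t)) t =
      deriv W (E (sphPt t)) * deriv (fun t => E (sphPt t)) t := by
    have hd := (hE.contDiffAt _ (sphPt_mem_disk t)).differentiableAt (by simp)
    rw [deriv_comp_sphPt hd, deriv_comp_sphPt, hfderiv _ (sphPt_mem_disk t)]
    · rfl
    · exact (hW.differentiable (by simp) _).comp _ hd
  refine ⟨fun x hx => hW.contDiffAt.comp x (hE.contDiffAt x hx), fun x hx => ?_, fun t ht => ?_,
    fun t ht => ?_, ?_, ?_⟩
  · rw [hfderiv x hx]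
    exact smul_ne_zero (hW' _).ne' (hE.fderiv_ne_zero x hx)
  · rw [hderiv]
    exact mul_pos (hW' _) (hE.deriv_pos t ht)
  · rw [hderiv]
    exact mul_neg_of_pos_of_neg (hW' _) (hE.deriv_neg t ht)
  · rw [hfderiv _ (sphPt_mem_disk b)]
    exact mul_neg_of_pos_of_neg (hW' _) hE.radial_min
  · rw [hfderiv _ (sphPt_mem_disk m)]
    exact mul_pos (hW' _) hE.radial_max

/-! ### Interpolation -/

theorem exists_monotone_contDiff_interpolation {x y : ℕ → ℝ} (n : ℕ)
    (hx : StrictMonoOn x (Iic n)) (hy : StrictMonoOn y (Iic n)) :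
    ∃ W : ℝ → ℝ, ContDiff ℝ ∞ W ∧ Monotone W ∧ (∀ i ≤ n, W (x i) = y i) ∧
      ∀ s ≥ x n, W s = y n := by
  induction n with
  | zero =>
    refine ⟨fun _ => y 0, contDiff_const, monotone_const, fun i hi => ?_, fun _ _ => rfl⟩
    rw [Nat.le_zero.1 hi]
  | succ n ih =>
    obtain ⟨W, smooth, mono, interp, const⟩ :=
      ih (hx.mono (Iic_subset_Iic.2 n.le_succ)) (hy.mono (Iic_subset_Iic.2 n.le_succ))
    have hxn : 0 < x (n + 1) - x n := sub_pos.2 (hx n.le_succ self_mem_Iic n.lt_succ_self)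
    have hyn : 0 < y (n + 1) - y n := sub_pos.2 (hy n.le_succ self_mem_Iic n.lt_succ_self)
    refine ⟨fun s => W s + (y (n + 1) - y n) *
        Real.smoothTransition ((s - x n) / (x (n + 1) - x n)),
      smooth.add (contDiff_const.mul (Real.smoothTransition.contDiff.comp
        ((contDiff_id.sub contDiff_const).div_const _))),
      mono.add ((Real.smoothTransition.monotone.comp fun a b hab => ?_).const_mul hyn.le),
      fun i hi => ?_, fun s hs => ?_⟩
    · gcongr
    · beta_reduce
      rcases hi.eq_or_lt with rfl | hi
      · rw [const _ (sub_pos.1 hxn).le, div_self hxn.ne', Real.smoothTransition.one]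
        ring
      · have hin : i ≤ n := Nat.lt_succ_iff.1 hi
        rw [interp i hin, Real.smoothTransition.zero_of_nonpos, mul_zero, add_zero]
        exact div_nonpos_of_nonpos_of_nonneg
          (sub_nonpos.2 (hx.monotoneOn (mem_Iic.2 hi.le) n.le_succ hin)) hxn.le
    · beta_reduce
      rw [const _ ((sub_pos.1 hxn).le.trans hs), Real.smoothTransition.one_of_one_le]
      · ring
      · rw [le_div_iff₀ hxn]
        linarith

theorem exists_deriv_pos_interpolation {x y : ℕ → ℝ} {n : ℕ}
    (hx : StrictMonoOn x (Iic n)) (hy : StrictMonoOn y (Iic n)) :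
    ∃ W : ℝ → ℝ, ContDiff ℝ ∞ W ∧ (∀ s, 0 < deriv W s) ∧ ∀ i ≤ n, W (x i) = y i := by
  have hslope : ∀ᶠ ε : ℝ in 𝓝[>] 0, ∀ i ∈ Finset.range n,
      y i - ε * x i < y (i + 1) - ε * x (i + 1) := by
    refine (Filter.eventually_all_finset _).2 fun i hi => nhdsWithin_le_nhds ?_
    have hi := Finset.mem_range.1 hi
    refine ContinuousAt.eventually_lt (f := fun ε => y i - ε * x i)
      (g := fun ε => y (i + 1) - ε * x (i + 1)) (by fun_prop) (by fun_prop) ?_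
    simpa using hy (mem_Iic.2 hi.le) (mem_Iic.2 hi) i.lt_succ_self
  obtain ⟨ε, hlt, hε⟩ := (hslope.and self_mem_nhdsWithin).exists
  obtain ⟨W, smooth, mono, interp, -⟩ := exists_monotone_contDiff_interpolation n hx
    (y := fun i => y i - ε * x i)
    (strictMonoOn_Iic_nat fun i hi => hlt i (Finset.mem_range.2 hi))
  refine ⟨fun s => W s + ε * s, smooth.add (contDiff_const.mul contDiff_id), fun s => ?_,
    fun i hi => ?_⟩
  · have hderiv := ((smooth.differentiable (by simp) s).hasDerivAt).add
      ((hasDerivAt_id s).const_mul ε)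
    rw [HasDerivAt.deriv (f := fun s => W s + ε * s) hderiv, mul_one]
    exact add_pos_of_nonneg_of_pos mono.deriv_nonneg hε
  · simp only [interp i hi, sub_add_cancel]

/-- The sequence `a 0, b 0, a 1, b 1, …`. -/
def interleave (a b : ℕ → ℝ) (i : ℕ) : ℝ := if Even i then a (i / 2) else b (i / 2)

theorem interleave_two_mul (a b : ℕ → ℝ) (k : ℕ) : interleave a b (2 * k) = a k := by
  simp [interleave]

theorem interleave_two_mul_add_one (a b : ℕ → ℝ) (k : ℕ) : interleave a b (2 * k + 1) = b k := by
  rw [interleave, if_neg (by simp), show (2 * k + 1) / 2 = k by omega]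

theorem strictMonoOn_interleave {a b : ℕ → ℝ} {K : ℕ} (hab : ∀ k ≤ K, a k < b k)
    (hba : ∀ k < K, b k < a (k + 1)) : StrictMonoOn (interleave a b) (Iic (2 * K + 1)) := by
  refine strictMonoOn_Iic_nat fun i hi => ?_
  obtain ⟨k, rfl | rfl⟩ := Nat.even_or_odd' i
  · rw [interleave_two_mul, interleave_two_mul_add_one]
    exact hab k (by omega)
  · rw [interleave_two_mul_add_one, show 2 * k + 1 + 1 = 2 * (k + 1) by ring, interleave_two_mul]
    exact hba k (by omega)

theorem IsModel.strictMonoOn {E : E2 → ℝ} {b m : ℝ} (hE : IsModel E b m) :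
    StrictMonoOn (fun t => E (sphPt t)) (Icc b m) :=
  strictMonoOn_of_deriv_pos (convex_Icc b m)
    (fun t _ => ((hE.contDiffAt _ (sphPt_mem_disk t)).continuousAt.comp
      continuous_sphPt.continuousAt).continuousWithinAt)
    fun t ht => hE.deriv_pos t (by rwa [interior_Icc] at ht)

theorem exists_isModel_interpolation {v p x y : ℕ → ℝ} {K : ℕ} (hvp : ∀ k ≤ K, v k < p k)
    (hpv : ∀ k < K, p k < v (k + 1)) (hK : p K < v 0 + 2 * π) (hxy : ∀ k ≤ K, x k < y k)
    (hyx : ∀ k < K, y k < x (k + 1)) :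
    ∃ E, IsModel E (v 0) (p K) ∧ ∀ k ≤ K, E (sphPt (v k)) = x k ∧ E (sphPt (p k)) = y k := by
  have hangles := strictMonoOn_interleave hvp hpv
  have hmem : ∀ i ∈ Iic (2 * K + 1), interleave v p i ∈ Icc (v 0) (p K) := fun i hi => by
    rw [← interleave_two_mul v p 0, ← interleave_two_mul_add_one v p K]
    exact ⟨hangles.monotoneOn (Nat.zero_le _) hi (Nat.zero_le i),
      hangles.monotoneOn hi self_mem_Iic hi⟩
  have hlt : v 0 < p K := by
    have := hangles (mem_Iic.2 (Nat.zero_le _)) self_mem_Iic (Nat.succ_pos (2 * K))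
    rwa [interleave_two_mul_add_one, ← Nat.mul_zero 2, interleave_two_mul] at this
  have hmodel := isModel_perspective ((v 0 + p K) / 2) (h := (p K - v 0) / 2) (by linarith)
    (by linarith)
  rw [show (v 0 + p K) / 2 - (p K - v 0) / 2 = v 0 by ring,
    show (v 0 + p K) / 2 + (p K - v 0) / 2 = p K by ring] at hmodel
  obtain ⟨W, smooth, pos, interp⟩ := exists_deriv_pos_interpolation
    (hmodel.strictMonoOn.comp hangles hmem) (strictMonoOn_interleave hxy hyx)
  refine ⟨_, hmodel.comp smooth pos, fun k hk => ⟨?_, ?_⟩⟩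
  · simpa [interleave_two_mul] using interp (2 * k) (by omega)
  · simpa [interleave_two_mul_add_one] using interp (2 * k + 1) (by omega)

/-! ### Guides -/

namespace IsLadder

variable {g : ℝ → ℝ} {K : ℕ} {v p : ℕ → ℝ}

/-- The smallest critical value of a ladder on `[p k, v (k + 1)]` for `k < K`, and the value at the
last peak for `k = K`. -/
def floorLevel (g : ℝ → ℝ) (K : ℕ) (v p : ℕ → ℝ) (k : ℕ) : ℝ :=
  if k < K then g (v (k + 1)) else g (p K)

theorem exists_level_gap (h : IsLadder g K v p) :
    ∃ δ > 0, 4 * δ < floorLevel g K v p 0 - g (v 0) ∧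
      ∀ k < K, 4 * δ < floorLevel g K v p (k + 1) - g (p k) ∧ 4 * δ < g (p k) - g (v (k + 1)) := by
  have small : ∀ {c : ℝ}, 0 < c → ∀ᶠ δ : ℝ in 𝓝[>] 0, 4 * δ < c := fun hc =>
    nhdsWithin_le_nhds (ContinuousAt.eventually_lt (f := fun δ : ℝ => 4 * δ) (by fun_prop)
      continuousAt_const (by simpa using hc))
  have hbottom : 0 < floorLevel g K v p 0 - g (v 0) := by
    rw [floorLevel, sub_pos]
    split_ifs with hK
    · exact h.valley_lt_valley 0 hK
    · obtain rfl : K = 0 := by omega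
      exact h.strictMonoOn_Icc le_rfl (left_mem_Icc.2 (h.valley_lt_peak 0 le_rfl).le)
        (right_mem_Icc.2 (h.valley_lt_peak 0 le_rfl).le) (h.valley_lt_peak 0 le_rfl)
  have hfloor : ∀ k < K, 0 < floorLevel g K v p (k + 1) - g (p k) := fun k hk => by
    rw [floorLevel, sub_pos]
    split_ifs with hk'
    · exact h.peak_lt_second_valley k hk'
    · obtain rfl : K = k + 1 := by omega
      exact h.peak_lt_peak k hk
  obtain ⟨δ, hδ, hpos⟩ := ((small hbottom).and ((Filter.eventually_all_finset
    (Finset.range K)).2 fun k hk => (small (hfloor k (Finset.mem_range.1 hk))).and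
      (small (sub_pos.2 (h.valley_lt_prev_peak k (Finset.mem_range.1 hk)))))
    |>.and self_mem_nhdsWithin).exists
  exact ⟨δ, hpos, hδ.1, fun k hk => hδ.2 k (Finset.mem_range.2 hk)⟩

theorem exists_guide_levels (h : IsLadder g K v p) {posV posP : ℕ → Prop} (h0 : posV 0) :
    ∃ x y : ℕ → ℝ, (∀ k ≤ K, x k < y k) ∧ (∀ k < K, y k < x (k + 1)) ∧
      (∀ k ≤ K, posV k → g (v k) < x k) ∧ (∀ k ≤ K, ¬posV k → x k < g (v k)) ∧
      (∀ k < K, ¬posP k → posV (k + 1) → g (p k) < y k) ∧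
      (∀ k ≤ K, k = K ∨ posP k ∨ ¬posV (k + 1) → y k < g (p k)) := by
  classical
  obtain ⟨δ, hδ, hbottom, hgap⟩ := h.exists_level_gap
  let z : ℕ → ℝ := fun k => if k = K then g (p K) - 2 * δ else
    if posV (k + 1) then if posP k then g (v (k + 1)) else g (p k) else g (v (k + 1)) - 3 * δ
  have hz : ∀ k ≤ K, floorLevel g K v p k - 3 * δ ≤ z k ∧ z k ≤ g (p k) := fun k hk => by
    have := hgap k
    grind [floorLevel]
  refine ⟨fun | 0 => g (v 0) + δ | k + 1 => z k + 2 * δ, fun k => z k + δ, ?_, ?_, ?_, ?_, ?_, ?_⟩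
  · rintro (_ | k) hk
    · linarith [hz 0 hk]
    · linarith [hz (k + 1) hk, hz k (by omega), hgap k hk]
  · intro k _
    dsimp only
    linarith
  · rintro (_ | k) hk hV
    · linarith
    · have := hgap k hk
      grind
  · rintro (_ | k) hk hV
    · exact absurd h0 hV
    · grind
  · intro k hk _ _
    grind
  · intro k hk hkP
    have := hgap k
    grind

end IsLadder

/-- `E` is a critical-point-free model for the extension of a ladder `g` whose valley `v k` is
marked positive iff `posV k` and whose peak `p k` is marked positive iff `posP k`: it rises exactly
between the two extreme nodes, and at each node the increment `g - E` has the sign that the marking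
prescribes for the radial derivative, except at a negative peak followed by a negative valley,
where it is positive. -/
structure IsGuide (g : ℝ → ℝ) (K : ℕ) (v p : ℕ → ℝ) (posV posP : ℕ → Prop) (E : E2 → ℝ) : Prop
    extends IsModel E (v 0) (p K) where
  lt_valley : ∀ k ≤ K, posV k → g (v k) < E (sphPt (v k))
  valley_lt : ∀ k ≤ K, ¬posV k → E (sphPt (v k)) < g (v k)
  lt_peak : ∀ k < K, ¬posP k → posV (k + 1) → g (p k) < E (sphPt (p k))
  peak_lt : ∀ k ≤ K, k = K ∨ posP k ∨ ¬posV (k + 1) → E (sphPt (p k)) < g (p k)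

theorem IsLadder.exists_isGuide {g : ℝ → ℝ} {K : ℕ} {v p : ℕ → ℝ} (h : IsLadder g K v p)
    {posV posP : ℕ → Prop} (h0 : posV 0) : ∃ E, IsGuide g K v p posV posP E := by
  obtain ⟨x, y, hxy, hyx, lt_valley, valley_lt, lt_peak, peak_lt⟩ :=
    h.exists_guide_levels (posP := posP) h0
  obtain ⟨E, model, interp⟩ := exists_isModel_interpolation h.valley_lt_peak
    (fun k hk => h.peak_lt_valley k hk.le) (h.closing ▸ h.peak_lt_valley K le_rfl) hxy hyx
  exact ⟨E, { model with
    lt_valley := fun k hk hV => (lt_valley k hk hV).trans_eq (interp k hk).1.symm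
    valley_lt := fun k hk hV => (interp k hk).1.trans_lt (valley_lt k hk hV)
    lt_peak := fun k hk hP hV => (lt_peak k hk hP hV).trans_eq (interp k hk.le).2.symm
    peak_lt := fun k hk hP => (interp k hk).2.trans_lt (peak_lt k hk hP) }⟩

/-! ### Plateaus at peaks -/

theorem exists_periodic_cutoff {a : ℝ} {C U : Set ℝ} (hC : IsCompact C) (hU : IsOpen U)
    (hCU : C ⊆ U) (hUa : U ⊆ Ioo a (a + 2 * π)) :
    ∃ q : ℝ → ℝ, ContDiff ℝ ∞ q ∧ Function.Periodic q (2 * π) ∧ (∀ t, q t ∈ Icc 0 1) ∧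
      (∀ t ∈ C, q t = 1) ∧ ∀ t ∈ Ico a (a + 2 * π), q t ≠ 0 → t ∈ U := by
  have hdisj : Disjoint (sphPt '' (Icc a (a + 2 * π) \ U)) (sphPt '' C) := by
    rw [disjoint_left]
    rintro _ ⟨s, hs, rfl⟩ ⟨t, ht, heq⟩
    obtain ⟨k, rfl⟩ := exists_int_of_sphPt_eq heq
    have hlt := hUa (hCU ht)
    have hk : |(k : ℝ)| < 1 := by
      rw [abs_lt]
      constructor <;> nlinarith [hs.1.1, hs.1.2, hlt.1, hlt.2, Real.pi_pos]
    obtain rfl : k = 0 := Int.abs_lt_one_iff.1 (by exact_mod_cast hk)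
    exact hs.2 (hCU (by simpa using ht))
  obtain ⟨χ, zero, one, mem⟩ := exists_contMDiffMap_zero_one_of_isClosed
    (n := (⊤ : ℕ∞)) (modelWithCornersSelf ℝ E2)
    ((isCompact_Icc.diff hU).image continuous_sphPt).isClosed
    (hC.image continuous_sphPt).isClosed hdisj
  refine ⟨fun t => χ (sphPt t), χ.contMDiff.contDiff.comp contDiff_sphPt,
    fun t => congrArg χ (periodic_sphPt t), fun t => mem _,
    fun t ht => one (mem_image_of_mem _ ht), fun t ht hq => ?_⟩
  by_contra hU
  exact hq (zero (mem_image_of_mem _ ⟨Ico_subset_Icc_self ht, hU⟩))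

theorem eventually_mul_lt_of_isCompact {s : Set ℝ} (hs : IsCompact s) {a b : ℝ → ℝ}
    (ha : Continuous a) (hb : Continuous b) (hpos : ∀ t ∈ s, 0 < b t) :
    ∀ᶠ ε : ℝ in 𝓝 0, ∀ t ∈ s, ε * a t < b t := by
  refine hs.eventually_forall_of_forall_eventually (P := fun ε t => ε * a t < b t) fun t ht => ?_
  refine ContinuousAt.eventually_lt (f := fun z : ℝ × ℝ => z.1 * a z.2) (g := fun z => b z.2)
    (by fun_prop) (by fun_prop) ?_
  simpa using hpos t ht

/-- `q` is a smooth `2π`-periodic cutoff around the peaks `p k` with `k ∈ B` of a ladder `g`, equal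
to `1` on the balls of radius `d` and supported in the balls of radius `2 * d`. On these balls `g`
dominates `G`, and `ε` is so small that perturbations of relative size `ε` involving `G` and `q`
neither create a critical point of `g` off the inner ball nor spoil the concavity of `g` on it. -/
structure IsPlateau (g G : ℝ → ℝ) (v p : ℕ → ℝ) (B : Finset ℕ) (d ε : ℝ) (q : ℝ → ℝ) : Prop where
  radius_pos : 0 < d
  contDiff : ContDiff ℝ ∞ q
  periodic : Function.Periodic q (2 * π)
  mem_Icc : ∀ t, q t ∈ Icc 0 1
  eq_one : ∀ k ∈ B, ∀ t ∈ closedBall (p k) d, q t = 1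
  exists_mem_ball : ∀ t ∈ Ico (v 0) (v 0 + 2 * π), q t ≠ 0 → ∃ k ∈ B, t ∈ ball (p k) (2 * d)
  mem_Ioo : ∀ k ∈ B, ∀ t ∈ ball (p k) (2 * d), t ∈ Ioo (v k) (v (k + 1))
  lt : ∀ k ∈ B, ∀ t ∈ ball (p k) (2 * d), G t < g t
  slope_lt : ∀ k ∈ B, ∀ t ∈ ball (p k) (2 * d) \ closedBall (p k) d,
    ε * (|deriv G t| + |deriv q t * (g t - G t)|) < |deriv g t|
  curvature_lt : ∀ k ∈ B, ∀ t ∈ closedBall (p k) d, ε * |deriv (deriv G) t| < -deriv (deriv g) t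

namespace IsLadder

variable {g G : ℝ → ℝ} {K : ℕ} {v p : ℕ → ℝ} (h : IsLadder g K v p)

include h in
theorem Ioo_valley_subset {k : ℕ} (hk : k ≤ K) :
    Ioo (v k) (v (k + 1)) ⊆ Ioo (v 0) (v 0 + 2 * π) := by
  rw [← h.closing]
  exact Ioo_subset_Ioo (h.valley_strictMonoOn.monotoneOn (by simp) (by simp; omega) k.zero_le)
    (h.valley_strictMonoOn.monotoneOn (by simp; omega) (by simp) (by omega))

include h in
theorem deriv_ne_zero {k : ℕ} (hk : k ≤ K) {t : ℝ} (ht : t ∈ Ioo (v k) (v (k + 1)))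
    (hne : t ≠ p k) : deriv g t ≠ 0 := by
  rcases hne.lt_or_gt with hlt | hgt
  · exact (h.deriv_pos k hk t ⟨ht.1, hlt⟩).ne'
  · exact (h.deriv_neg k hk t ⟨hgt, ht.2⟩).ne

variable {B : Finset ℕ} (hB : ∀ k ∈ B, k < K)
include h hB

theorem exists_plateau_radius (hG : Continuous G) (hlt : ∀ k ∈ B, G (p k) < g (p k)) :
    ∃ d > 0, ∀ k ∈ B, ∀ t ∈ closedBall (p k) (2 * d),
      t ∈ Ioo (v k) (v (k + 1)) ∧ G t < g t ∧ deriv (deriv g) t < 0 := by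
  have hnear : ∀ k ∈ B, ∀ᶠ d : ℝ in 𝓝[>] 0, closedBall (p k) (2 * d) ⊆
      {t | t ∈ Ioo (v k) (v (k + 1)) ∧ G t < g t ∧ deriv (deriv g) t < 0} := fun k hk => by
    have hkK := (hB k hk).le
    have hd2 := (contDiff_infty_deriv h.contDiff_deriv).continuous
    have hU := Filter.inter_mem (Ioo_mem_nhds (h.valley_lt_peak k hkK) (h.peak_lt_valley k hkK))
      ((hG.continuousAt.eventually_lt h.contDiff.continuous.continuousAt (hlt k hk)).and
        (hd2.continuousAt.eventually_lt continuousAt_const (h.deriv2_peak k hkK)))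
    obtain ⟨r, hr, hball⟩ := Metric.nhds_basis_closedBall.mem_iff.1 hU
    filter_upwards [Ioc_mem_nhdsGT (half_pos hr)] with d hd
    exact (closedBall_subset_closedBall (by linarith [hd.2])).trans hball
  obtain ⟨d, hd, hpos⟩ :=
    (((Filter.eventually_all_finset B).2 hnear).and self_mem_nhdsWithin).exists
  exact ⟨d, hpos, fun k hk t ht => hd k hk ht⟩

theorem exists_perturbation_bound (hG : ContDiff ℝ ∞ G) {q : ℝ → ℝ} (hq : Continuous (deriv q))
    {d : ℝ} (hd : 0 < d) (hball : ∀ k ∈ B, ∀ t ∈ closedBall (p k) (2 * d),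
      t ∈ Ioo (v k) (v (k + 1)) ∧ G t < g t ∧ deriv (deriv g) t < 0) :
    ∃ ε > 0, (∀ k ∈ B, ∀ t ∈ closedBall (p k) (2 * d) \ ball (p k) d,
        ε * (|deriv G t| + |deriv q t * (g t - G t)|) < |deriv g t|) ∧
      ∀ k ∈ B, ∀ t ∈ closedBall (p k) d, ε * |deriv (deriv G) t| < -deriv (deriv g) t := by
  have hg' := h.contDiff_deriv
  have hG' := contDiff_infty_deriv hG
  have slope : ∀ k ∈ B, ∀ᶠ ε in 𝓝 0, ∀ t ∈ closedBall (p k) (2 * d) \ ball (p k) d,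
      ε * (|deriv G t| + |deriv q t * (g t - G t)|) < |deriv g t| := fun k hk =>
    eventually_mul_lt_of_isCompact ((isCompact_closedBall _ _).diff isOpen_ball)
      (hG'.continuous.abs.add (hq.mul (h.contDiff.continuous.sub hG.continuous)).abs)
      hg'.continuous.abs fun t ht => abs_pos.2 (h.deriv_ne_zero (hB k hk).le (hball k hk t ht.1).1
        fun heq => ht.2 (heq ▸ mem_ball_self hd))
  have curvature : ∀ k ∈ B, ∀ᶠ ε in 𝓝 0, ∀ t ∈ closedBall (p k) d,
      ε * |deriv (deriv G) t| < -deriv (deriv g) t := fun k hk =>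
    eventually_mul_lt_of_isCompact (isCompact_closedBall _ _)
      (contDiff_infty_deriv hG').continuous.abs (contDiff_infty_deriv hg').continuous.neg
      fun t ht => neg_pos.2 (hball k hk t (closedBall_subset_closedBall (by linarith) ht)).2.2
  have small := (Filter.eventually_all_finset B).2 fun k hk => (slope k hk).and (curvature k hk)
  obtain ⟨ε, hε, hpos⟩ := ((small.filter_mono nhdsWithin_le_nhds).and
    (self_mem_nhdsWithin (s := Ioi 0))).exists
  exact ⟨ε, hpos, fun k hk => (hε k hk).1, fun k hk => (hε k hk).2⟩

theorem exists_isPlateau (hG : ContDiff ℝ ∞ G) (hlt : ∀ k ∈ B, G (p k) < g (p k)) :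
    ∃ d, ∃ ε > 0, ∃ q, IsPlateau g G v p B d ε q := by
  obtain ⟨d, hd, hball⟩ := h.exists_plateau_radius hB hG.continuous hlt
  have hcompact : IsCompact (⋃ k ∈ B, closedBall (p k) d) :=
    B.isCompact_biUnion fun k _ => isCompact_closedBall (p k) d
  have hsub : (⋃ k ∈ B, ball (p k) (2 * d)) ⊆ Ioo (v 0) (v 0 + 2 * π) :=
    iUnion₂_subset fun k hk t ht =>
      h.Ioo_valley_subset (hB k hk).le (hball k hk t (ball_subset_closedBall ht)).1
  obtain ⟨q, smooth, periodic, mem_Icc, one, support⟩ := exists_periodic_cutoff hcompact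
    (isOpen_biUnion fun k _ => isOpen_ball)
    (iUnion₂_mono fun k _ => closedBall_subset_ball (by linarith)) hsub
  obtain ⟨ε, hε, hslope, hcurvature⟩ := h.exists_perturbation_bound hB hG
    (contDiff_infty_deriv smooth).continuous hd hball
  exact ⟨d, ε, hε, q, {
    radius_pos := hd
    contDiff := smooth
    periodic := periodic
    mem_Icc := mem_Icc
    eq_one := fun k hk t ht => one t (mem_biUnion hk ht)
    exists_mem_ball := fun t ht hq => by simpa using support t ht hq
    mem_Ioo := fun k hk t ht => (hball k hk t (ball_subset_closedBall ht)).1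
    lt := fun k hk t ht => (hball k hk t (ball_subset_closedBall ht)).2.1
    slope_lt := fun k hk t ht => hslope k hk t
      ⟨ball_subset_closedBall ht.1, fun hc => ht.2 (ball_subset_closedBall hc)⟩
    curvature_lt := hcurvature }⟩

end IsLadder

/-! ### Blending two boundary functions -/

/-- Adding a multiple `q * ψ τ`, `0 ≤ q ≤ 1`, to the weight `τ` produces a path of weights from `0`
to `1` that overshoots `1` by at most `ε` and, for `q = 1`, arrives at `1` with slope `-1`. -/
structure IsOvershoot (ε : ℝ) (ψ : ℝ → ℝ) : Prop where
  contDiff : ContDiff ℝ ∞ ψ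
  zero : ψ 0 = 0
  one : ψ 1 = 0
  deriv_zero : 0 ≤ deriv ψ 0
  deriv_one : deriv ψ 1 = -2
  strictAntiOn_deriv : StrictAntiOn (deriv ψ) (Icc 0 1)
  mem_Icc : ∀ τ ∈ Icc 0 1, ψ τ ∈ Icc 0 ε

theorem exists_isOvershoot {ε : ℝ} (hε : 0 < ε) : ∃ ψ, IsOvershoot ε ψ := by
  obtain ⟨N, hN⟩ := exists_nat_one_div_lt (half_pos hε)
  obtain ⟨c, hc, hcN, hcε⟩ : ∃ c : ℝ, 0 < c ∧ c * (N + 1) = 2 ∧ c < ε :=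
    ⟨2 / (N + 1), by positivity, div_mul_cancel₀ _ (by positivity), by
      rw [div_lt_iff₀ (by positivity)] at hN ⊢
      linarith⟩
  have hderiv : deriv (fun τ => c * (τ - τ ^ (N + 2))) =
      fun τ => c * (1 - (N + 2) * τ ^ (N + 1)) := by
    funext τ
    refine HasDerivAt.deriv ((((hasDerivAt_id τ).sub (hasDerivAt_pow (N + 2) τ)).const_mul c)
      |>.congr_deriv ?_)
    push_cast
    simp
  refine ⟨fun τ => c * (τ - τ ^ (N + 2)), by fun_prop, by simp, by simp, ?_, ?_, ?_, ?_⟩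
  · simpa [hderiv] using hc.le
  · simp only [hderiv, one_pow]
    linarith
  · intro a ha b _ hab
    simp only [hderiv]
    have := pow_lt_pow_left₀ hab ha.1 N.succ_ne_zero
    gcongr
  · intro τ hτ
    have hpow : τ ^ (N + 2) ≤ τ := pow_le_of_le_one hτ.1 hτ.2 (by simp)
    have hpos : 0 ≤ τ ^ (N + 2) := pow_nonneg hτ.1 _
    exact ⟨by nlinarith, by nlinarith [hτ.2]⟩

theorem IsOvershoot.weight_mem_Icc {ε : ℝ} {ψ : ℝ → ℝ} (h : IsOvershoot ε ψ) {q τ : ℝ}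
    (hq : q ∈ Icc 0 1) (hτ : τ ∈ Ioo 0 1) (hcrit : 1 + q * deriv ψ τ = 0) :
    τ + q * ψ τ ∈ Icc 1 (1 + ε) := by
  have hqpos : 0 < q := hq.1.lt_of_ne (by rintro rfl; simp at hcrit)
  have hderiv (s : ℝ) : HasDerivAt (fun s => s + q * ψ s) (1 + q * deriv ψ s) s :=
    (hasDerivAt_id s).add ((h.contDiff.differentiable (by simp) s).hasDerivAt.const_mul q)
  have hanti : StrictAntiOn (fun s => s + q * ψ s) (Icc τ 1) :=
    strictAntiOn_of_deriv_neg (convex_Icc τ 1)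
      (fun s _ => (hderiv s).continuousAt.continuousWithinAt) fun s hs => by
        rw [interior_Icc] at hs
        rw [(hderiv s).deriv, ← hcrit]
        gcongr
        exact h.strictAntiOn_deriv (Ioo_subset_Icc_self hτ) ⟨hτ.1.le.trans hs.1.le, hs.2.le⟩ hs.1
  have hone := hanti ⟨le_rfl, hτ.2.le⟩ ⟨hτ.2.le, le_rfl⟩ hτ.2
  have hψ := h.mem_Icc τ (Ioo_subset_Icc_self hτ)
  have hmul : q * ψ τ ≤ ψ τ := mul_le_of_le_one_left hψ.1 hq.2
  simp only [h.one, mul_zero, add_zero] at hone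
  exact ⟨hone.le, by linarith [hψ.2, hτ.2]⟩

/-- The homotopy from `G` to `g` whose weight at time `τ` and angle `t` is `τ + q t * ψ τ`. -/
def blend (g G q ψ : ℝ → ℝ) (z : ℝ × ℝ) : ℝ :=
  G z.2 + (z.1 + q z.2 * ψ z.1) * (g z.2 - G z.2)

section

variable {g G q ψ : ℝ → ℝ} (hg : ContDiff ℝ ∞ g) (hG : ContDiff ℝ ∞ G) (hq : ContDiff ℝ ∞ q)
  (hψ : ContDiff ℝ ∞ ψ)
include hg hG hq hψ

theorem contDiff_blend : ContDiff ℝ ∞ (blend g G q ψ) := by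
  unfold blend
  fun_prop

theorem fderiv_blend_left (τ t : ℝ) :
    fderiv ℝ (blend g G q ψ) (τ, t) (1, 0) = (1 + q t * deriv ψ τ) * (g t - G t) := by
  have hblend := hasDerivAt_prodMk_left
    ((contDiff_blend hg hG hq hψ).differentiable (by simp)) τ t
  refine hblend.unique ?_
  have hweight := (hasDerivAt_id τ).add
    ((hψ.differentiable (by simp) τ).hasDerivAt.const_mul (q t))
  exact (hweight.mul_const (g t - G t)).const_add (G t)

theorem fderiv_blend_right (τ t : ℝ) : fderiv ℝ (blend g G q ψ) (τ, t) (0, 1) =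
    (τ + q t * ψ τ) * deriv g t + (1 - (τ + q t * ψ τ)) * deriv G t +
      deriv q t * ψ τ * (g t - G t) := by
  have hblend := hasDerivAt_prodMk_right
    ((contDiff_blend hg hG hq hψ).differentiable (by simp)) τ t
  refine hblend.unique ?_
  have hasDerivAt {f : ℝ → ℝ} (hf : ContDiff ℝ ∞ f) : HasDerivAt f (deriv f t) t :=
    (hf.differentiable (by simp) t).hasDerivAt
  refine ((hasDerivAt hG).add ((((hasDerivAt hq).mul_const (ψ τ)).const_add τ).mul
    ((hasDerivAt hg).sub (hasDerivAt hG)))).congr_deriv ?_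
  simp only [Pi.sub_apply]
  ring

end

section

variable {g G q ψ : ℝ → ℝ} {K : ℕ} {v p : ℕ → ℝ} {B : Finset ℕ} {d ε : ℝ}

theorem IsPlateau.strictAntiOn_combination (hg : ContDiff ℝ ∞ g) (hG : ContDiff ℝ ∞ G)
    (hq : IsPlateau g G v p B d ε q) {k : ℕ} (hk : k ∈ B) {w : ℝ} (hw : w ∈ Icc 1 (1 + ε)) :
    StrictAntiOn (fun t => w * deriv g t + (1 - w) * deriv G t) (closedBall (p k) d) := by
  have hderiv (t : ℝ) : HasDerivAt (fun t => w * deriv g t + (1 - w) * deriv G t)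
      (w * deriv (deriv g) t + (1 - w) * deriv (deriv G) t) t :=
    (((contDiff_infty_deriv hg).differentiable (by simp) t).hasDerivAt.const_mul w).add
      (((contDiff_infty_deriv hG).differentiable (by simp) t).hasDerivAt.const_mul (1 - w))
  refine strictAntiOn_of_deriv_neg (convex_closedBall _ _)
    (fun t _ => (hderiv t).continuousAt.continuousWithinAt) fun t ht => ?_
  have hcurv := hq.curvature_lt k hk t (interior_subset ht)
  rw [(hderiv t).deriv]
  have hG'' : (1 - w) * deriv (deriv G) t ≤ ε * |deriv (deriv G) t| :=
    calc (1 - w) * deriv (deriv G) t ≤ (w - 1) * |deriv (deriv G) t| := by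
          rw [← neg_sub, neg_mul, ← mul_neg]
          gcongr
          · exact sub_nonneg.2 hw.1
          · exact neg_le_abs _
      _ ≤ ε * |deriv (deriv G) t| := by
          gcongr
          linarith [hw.2]
  have hε : 0 ≤ ε * |deriv (deriv G) t| :=
    mul_nonneg (by linarith [hw.1.trans hw.2]) (abs_nonneg _)
  nlinarith [hw.1]

variable (hg : ContDiff ℝ ∞ g) (hG : ContDiff ℝ ∞ G) (hψ : IsOvershoot ε ψ)
include hg hG hψ

theorem eq_of_fderiv_blend_eq_zero (hq : ContDiff ℝ ∞ q) (hq0 : ∀ t, 0 ≤ q t) {τ t : ℝ}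
    (hqt : q t = 0) (hcrit : fderiv ℝ (blend g G q ψ) (τ, t) = 0) :
    g t = G t ∧ τ * deriv g t + (1 - τ) * deriv G t = 0 := by
  have hq' : deriv q t = 0 :=
    IsLocalMin.deriv_eq_zero (Filter.Eventually.of_forall fun s => hqt.trans_le (hq0 s))
  have hτ := fderiv_blend_left hg hG hq hψ.contDiff τ t
  have ht := fderiv_blend_right hg hG hq hψ.contDiff τ t
  simp only [hcrit, hqt, hq', zero_apply, zero_mul, add_zero, one_mul] at hτ ht
  exact ⟨sub_eq_zero.1 hτ.symm, ht.symm⟩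

theorem IsPlateau.weight_of_fderiv_blend_eq_zero (hq : IsPlateau g G v p B d ε q) {k : ℕ}
    (hk : k ∈ B) {τ t : ℝ} (ht : t ∈ ball (p k) (2 * d))
    (hcrit : fderiv ℝ (blend g G q ψ) (τ, t) = 0) : 1 + q t * deriv ψ τ = 0 := by
  have hτ := fderiv_blend_left hg hG hq.contDiff hψ.contDiff τ t
  rw [hcrit, zero_apply, eq_comm] at hτ
  exact (mul_eq_zero.1 hτ).resolve_right (sub_pos.2 (hq.lt k hk t ht)).ne'

theorem IsPlateau.mem_closedBall_of_fderiv_blend_eq_zero (hq : IsPlateau g G v p B d ε q) {k : ℕ}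
    (hk : k ∈ B) {τ t : ℝ} (hτ : τ ∈ Ioo 0 1) (ht : t ∈ ball (p k) (2 * d))
    (hcrit : fderiv ℝ (blend g G q ψ) (τ, t) = 0) : t ∈ closedBall (p k) d := by
  by_contra hout
  obtain ⟨hP1, hPε⟩ := hψ.weight_mem_Icc (hq.mem_Icc t) hτ
    (hq.weight_of_fderiv_blend_eq_zero hg hG hψ hk ht hcrit)
  obtain ⟨hψ0, hψε⟩ := hψ.mem_Icc τ (Ioo_subset_Icc_self hτ)
  have hslope := hq.slope_lt k hk t ⟨ht, hout⟩
  have hdt := fderiv_blend_right hg hG hq.contDiff hψ.contDiff τ t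
  rw [hcrit, zero_apply] at hdt
  set P := τ + q t * ψ τ
  have hsplit : P * deriv g t = (P - 1) * deriv G t - ψ τ * (deriv q t * (g t - G t)) := by
    linarith
  have : |deriv g t| ≤ ε * (|deriv G t| + |deriv q t * (g t - G t)|) :=
    calc |deriv g t| ≤ P * |deriv g t| := le_mul_of_one_le_left (abs_nonneg _) hP1
      _ = |(P - 1) * deriv G t - ψ τ * (deriv q t * (g t - G t))| := by
        rw [← hsplit, abs_mul, abs_of_nonneg (zero_le_one.trans hP1)]
      _ ≤ (P - 1) * |deriv G t| + ψ τ * |deriv q t * (g t - G t)| := by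
        refine (abs_sub _ _).trans_eq ?_
        rw [abs_mul, abs_mul (ψ τ), abs_of_nonneg (sub_nonneg.2 hP1), abs_of_nonneg hψ0]
      _ ≤ ε * (|deriv G t| + |deriv q t * (g t - G t)|) := by
        rw [mul_add]
        gcongr
        linarith
  exact this.not_gt hslope

theorem IsPlateau.subsingleton_fderiv_blend_eq_zero (hq : IsPlateau g G v p B d ε q) {k : ℕ}
    (hk : k ∈ B) : {z ∈ Ioo (0 : ℝ) 1 ×ˢ closedBall (p k) d |
      fderiv ℝ (blend g G q ψ) z = 0}.Subsingleton := by
  have hcrit : ∀ z ∈ Ioo (0 : ℝ) 1 ×ˢ closedBall (p k) d, fderiv ℝ (blend g G q ψ) z = 0 →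
      deriv ψ z.1 = -1 ∧ z.1 + ψ z.1 ∈ Icc 1 (1 + ε) ∧
        (z.1 + ψ z.1) * deriv g z.2 + (1 - (z.1 + ψ z.1)) * deriv G z.2 = 0 := by
    rintro ⟨τ, t⟩ ⟨hτ, ht⟩ hcrit
    have hq1 : q t = 1 := hq.eq_one k hk t ht
    have hq' : deriv q t = 0 := IsLocalMax.deriv_eq_zero
      (Filter.Eventually.of_forall fun s => (hq.mem_Icc s).2.trans_eq hq1.symm)
    have hweight := hq.weight_of_fderiv_blend_eq_zero hg hG hψ hk
      (closedBall_subset_ball (by linarith [hq.radius_pos]) ht) hcrit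
    have hmem := hψ.weight_mem_Icc (hq.mem_Icc t) hτ hweight
    have hdt := fderiv_blend_right hg hG hq.contDiff hψ.contDiff τ t
    simp only [hcrit, hq1, hq', zero_apply, zero_mul, add_zero, one_mul] at hweight hmem hdt
    exact ⟨by linarith, hmem, hdt.symm⟩
  rintro ⟨τ, t⟩ ⟨hz, hcz⟩ ⟨τ', t'⟩ ⟨hz', hcz'⟩
  obtain ⟨hψτ, hw, hdt⟩ := hcrit _ hz hcz
  obtain ⟨hψτ', -, hdt'⟩ := hcrit _ hz' hcz'
  obtain rfl : τ = τ' := hψ.strictAntiOn_deriv.injOn (Ioo_subset_Icc_self hz.1)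
    (Ioo_subset_Icc_self hz'.1) (hψτ.trans hψτ'.symm)
  exact congrArg (Prod.mk τ) ((hq.strictAntiOn_combination hg hG hk hw).injOn hz.2 hz'.2
    (hdt.trans hdt'.symm))

end

/-! ### Extending a ladder -/

theorem encard_le_card_of_subsingleton {α ι : Type*} {s : Set α} {S : Finset ι} (R : α → ι → Prop)
    (hR : ∀ x ∈ s, ∃ i ∈ S, R x i) (huniq : ∀ i ∈ S, {x ∈ s | R x i}.Subsingleton) :
    s.encard ≤ S.card :=
  calc s.encard ≤ (⋃ i ∈ S, {x ∈ s | R x i}).encard := encard_le_encard fun x hx => by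
        obtain ⟨i, hi, hxi⟩ := hR x hx
        exact mem_biUnion hi ⟨hx, hxi⟩
    _ ≤ ∑ i ∈ S, {x ∈ s | R x i}.encard := S.set_encard_biUnion_le _
    _ ≤ S.card • 1 := S.sum_le_card_nsmul _ _ fun i hi =>
        encard_le_one_iff_subsingleton.2 (huniq i hi)
    _ = S.card := by rw [nsmul_one]

theorem IsModel.contDiff {E : E2 → ℝ} {b m : ℝ} (hE : IsModel E b m) :
    ContDiff ℝ ∞ fun t => E (sphPt t) :=
  contDiff_iff_contDiffAt.2 fun t =>
    (hE.contDiffAt _ (sphPt_mem_disk t)).comp t contDiff_sphPt.contDiffAt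

theorem IsModel.sphPt_eq_of_deriv_eq_zero {E : E2 → ℝ} {b m : ℝ} (hE : IsModel E b m) {t : ℝ}
    (ht : deriv (fun t => E (sphPt t)) t = 0) : sphPt t = sphPt b ∨ sphPt t = sphPt m := by
  have hderiv (t : ℝ) := deriv_comp_sphPt
    ((hE.contDiffAt _ (sphPt_mem_disk t)).differentiableAt (by simp))
  obtain ⟨s, ⟨hbs, hsb⟩, hst⟩ := exists_sphPt_eq b (norm_sphPt t)
  have hs : deriv (fun t => E (sphPt t)) s = 0 := by
    rw [hderiv, hst, ← hderiv, ht]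
  rw [← hst]
  rcases hbs.eq_or_lt with rfl | hbs
  · exact .inl rfl
  rcases lt_trichotomy s m with hsm | rfl | hsm
  · exact absurd hs (hE.deriv_pos s ⟨hbs, hsm⟩).ne'
  · exact .inr rfl
  · exact absurd hs (hE.deriv_neg s ⟨hsm, hsb⟩).ne

/-- The indices `k` of the pairs of consecutive nodes `p k`, `v (k + 1)` of a ladder that are both
marked negative. -/
def negativePairs (K : ℕ) (posV posP : ℕ → Prop) : Finset ℕ :=
  open Classical in (Finset.range K).filter fun k => ¬posP k ∧ ¬posV (k + 1)

/-- The indices `k` of the pairs of consecutive nodes `p k`, `v (k + 1)` of a ladder that are marked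
by the same sign. -/
def equalPairs (K : ℕ) (posV posP : ℕ → Prop) : Finset ℕ :=
  open Classical in (Finset.range K).filter fun k => posP k ↔ posV (k + 1)

theorem mem_negativePairs {K k : ℕ} {posV posP : ℕ → Prop} :
    k ∈ negativePairs K posV posP ↔ k < K ∧ ¬posP k ∧ ¬posV (k + 1) := by
  simp [negativePairs]

theorem mem_equalPairs {K k : ℕ} {posV posP : ℕ → Prop} :
    k ∈ equalPairs K posV posP ↔ k < K ∧ (posP k ↔ posV (k + 1)) := by
  simp [equalPairs]

section

variable {g : ℝ → ℝ} {K : ℕ} {v p : ℕ → ℝ} {posV posP : ℕ → Prop} {E : E2 → ℝ}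
  (h : IsLadder g K v p)
include h

theorem IsLadder.Icc_peak_valley_subset {k : ℕ} (hk : k < K) :
    Icc (p k) (v (k + 1)) ⊆ Ioo (v 0) (p K) := Icc_subset_Ioo
  ((h.valley_strictMonoOn.monotoneOn (mem_Iic.2 (by omega)) (mem_Iic.2 (by omega))
    k.zero_le).trans_lt (h.valley_lt_peak k hk.le))
  ((h.valley_lt_peak (k + 1) hk).trans_le
    (h.peak_strictMonoOn.monotoneOn hk (mem_Iic.2 le_rfl) hk))

theorem IsLadder.exists_mem_Ioo_of_deriv_neg {t : ℝ} (ht : t ∈ Ico (v 0) (v 0 + 2 * π))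
    (hg' : deriv g t < 0) : ∃ k ≤ K, t ∈ Ioo (p k) (v (k + 1)) := by
  obtain ⟨k, hk, hvt, htv⟩ := exists_mem_Ico_succ ht.1 (h.closing ▸ ht.2)
  replace hk := Nat.le_of_lt_succ hk
  refine ⟨k, hk, ?_, htv⟩
  by_contra! htp
  rcases hvt.eq_or_lt with rfl | hvt
  · exact hg'.ne (h.deriv_valley k hk)
  rcases htp.eq_or_lt with rfl | htp
  · exact hg'.ne (h.deriv_peak k hk)
  · exact hg'.not_gt (h.deriv_pos k hk t ⟨hvt, htp⟩)

variable (hE : IsGuide g K v p posV posP E)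
include hE

theorem IsGuide.mem_Ioo_of_crossing (h0 : posV 0) {τ t : ℝ} (hτ : τ ∈ Ioo 0 1)
    (ht : t ∈ Ico (v 0) (v 0 + 2 * π)) (heq : g t = E (sphPt t))
    (hcrit : τ * deriv g t + (1 - τ) * deriv (fun t => E (sphPt t)) t = 0) :
    t ∈ Ioo (v 0) (p K) := by
  refine ⟨ht.1.lt_of_ne' ?_, ?_⟩
  · rintro rfl
    exact (hE.lt_valley 0 K.zero_le h0).ne heq
  · rcases lt_trichotomy t (p K) with hlt | rfl | hlt
    · exact hlt
    · exact absurd heq (hE.peak_lt K le_rfl (.inl rfl)).ne'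
    · have hg' := h.deriv_neg K le_rfl t ⟨hlt, h.closing ▸ ht.2⟩
      nlinarith [hE.deriv_neg t ⟨hlt, ht.2⟩, hτ.1, hτ.2]

theorem IsGuide.exists_pair_of_crossing (h0 : posV 0) {τ t : ℝ} (hτ : τ ∈ Ioo 0 1)
    (ht : t ∈ Ico (v 0) (v 0 + 2 * π)) (heq : g t = E (sphPt t))
    (hcrit : τ * deriv g t + (1 - τ) * deriv (fun t => E (sphPt t)) t = 0) :
    ∃ k < K, posP k ∧ posV (k + 1) ∧ t ∈ Ioo (p k) (v (k + 1)) := by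
  have htK := hE.mem_Ioo_of_crossing h h0 hτ ht heq hcrit
  obtain ⟨k, hk, hpt, htv⟩ := h.exists_mem_Ioo_of_deriv_neg ht
    (by nlinarith [hE.deriv_pos t htK, hτ.1, hτ.2])
  have hkK : k < K := hk.lt_of_ne fun hkK => (hkK ▸ hpt).not_gt htK.2
  have hsub := (h.Icc_peak_valley_subset hkK).trans Ioo_subset_Icc_self
  have hp : p k ∈ Icc (p k) (v (k + 1)) := left_mem_Icc.2 (hpt.trans htv).le
  have hv : v (k + 1) ∈ Icc (p k) (v (k + 1)) := right_mem_Icc.2 (hpt.trans htv).le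
  have ht : t ∈ Icc (p k) (v (k + 1)) := ⟨hpt.le, htv.le⟩
  have hE_lt : E (sphPt (p k)) < g (p k) :=
    calc E (sphPt (p k)) < E (sphPt t) := hE.strictMonoOn (hsub hp) (hsub ht) hpt
      _ = g t := heq.symm
      _ < g (p k) := h.strictAntiOn_Icc hk hp ht hpt
  have lt_hE : g (v (k + 1)) < E (sphPt (v (k + 1))) :=
    calc g (v (k + 1)) < g t := h.strictAntiOn_Icc hk ht hv htv
      _ = E (sphPt t) := heq
      _ < E (sphPt (v (k + 1))) := hE.strictMonoOn (hsub ht) (hsub hv) htv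
  have hV : posV (k + 1) := by
    by_contra hV
    exact (hE.valley_lt (k + 1) hkK hV).not_gt lt_hE
  have hP : posP k := by
    by_contra hP
    exact (hE.lt_peak k hkK hP hV).not_gt hE_lt
  exact ⟨k, hkK, hP, hV, hpt, htv⟩

theorem IsGuide.subsingleton_crossing {k : ℕ} (hk : k < K) :
    {z : ℝ × ℝ | z.2 ∈ Ioo (p k) (v (k + 1)) ∧ g z.2 = E (sphPt z.2) ∧
      z.1 * deriv g z.2 + (1 - z.1) * deriv (fun t => E (sphPt t)) z.2 = 0}.Subsingleton := by
  have hsub := Ioo_subset_Icc_self.trans (h.Icc_peak_valley_subset hk)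
  have hanti : StrictAntiOn (fun t => g t - E (sphPt t)) (Ioo (p k) (v (k + 1))) :=
    fun s hs t ht hst => sub_lt_sub
      (h.strictAntiOn_Icc hk.le (Ioo_subset_Icc_self hs) (Ioo_subset_Icc_self ht) hst)
      (hE.strictMonoOn (Ioo_subset_Icc_self (hsub hs)) (Ioo_subset_Icc_self (hsub ht)) hst)
  rintro ⟨τ, t⟩ ⟨ht, heq, hcrit⟩ ⟨τ', t'⟩ ⟨ht', heq', hcrit'⟩
  obtain rfl : t = t' := hanti.injOn ht ht' ((sub_eq_zero.2 heq).trans (sub_eq_zero.2 heq').symm)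
  have hslope : deriv g t - deriv (fun t => E (sphPt t)) t ≠ 0 :=
    (sub_neg.2 ((h.deriv_neg k hk.le t ht).trans (hE.deriv_pos t (hsub ht)))).ne
  rw [mul_right_cancel₀ hslope (by linear_combination hcrit - hcrit' : τ * _ = τ' * _)]

variable {q ψ : ℝ → ℝ} {d ε : ℝ} (hψ : IsOvershoot ε ψ)
  (hq : IsPlateau g (fun t => E (sphPt t)) v p (negativePairs K posV posP) d ε q)
include hψ hq

theorem IsGuide.encard_fderiv_blend_eq_zero_le (h0 : posV 0) :
    {z ∈ Ioo (0 : ℝ) 1 ×ˢ Ico (v 0) (v 0 + 2 * π) |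
      fderiv ℝ (blend g (fun t => E (sphPt t)) q ψ) z = 0}.encard ≤
    (equalPairs K posV posP).card := by
  have crossing {z : ℝ × ℝ} (hqz : q z.2 = 0) := eq_of_fderiv_blend_eq_zero h.contDiff
    hE.contDiff hψ hq.contDiff (fun t => (hq.mem_Icc t).1) (τ := z.1) hqz
  refine encard_le_card_of_subsingleton (fun z k =>
    (k ∈ negativePairs K posV posP ∧ z.2 ∈ closedBall (p k) d) ∨
    (posP k ∧ z.2 ∈ Ioo (p k) (v (k + 1)) ∧ q z.2 = 0)) ?_ ?_
  · rintro z ⟨⟨hτ, ht⟩, hcrit⟩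
    by_cases hqz : q z.2 = 0
    · obtain ⟨heq, hcomb⟩ := crossing hqz hcrit
      obtain ⟨k, hk, hP, hV, hpv⟩ := hE.exists_pair_of_crossing h h0 hτ ht heq hcomb
      exact ⟨k, mem_equalPairs.2 ⟨hk, iff_of_true hP hV⟩, .inr ⟨hP, hpv, hqz⟩⟩
    · obtain ⟨k, hk, hball⟩ := hq.exists_mem_ball z.2 ht hqz
      obtain ⟨hkK, hP, hV⟩ := mem_negativePairs.1 hk
      exact ⟨k, mem_equalPairs.2 ⟨hkK, iff_of_false hP hV⟩, .inl ⟨hk,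
        hq.mem_closedBall_of_fderiv_blend_eq_zero h.contDiff hE.contDiff hψ hk hτ hball hcrit⟩⟩
  · rintro k hk z ⟨⟨⟨hτ, -⟩, hcrit⟩, hz⟩ z' ⟨⟨⟨hτ', -⟩, hcrit'⟩, hz'⟩
    rcases hz with ⟨hkB, hz⟩ | ⟨hP, hz, hqz⟩ <;> rcases hz' with ⟨hkB', hz'⟩ | ⟨hP', hz', hqz'⟩
    · exact hq.subsingleton_fderiv_blend_eq_zero h.contDiff hE.contDiff hψ hkB
        ⟨⟨hτ, hz⟩, hcrit⟩ ⟨⟨hτ', hz'⟩, hcrit'⟩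
    · exact absurd hP' (mem_negativePairs.1 hkB).2.1
    · exact absurd hP (mem_negativePairs.1 hkB').2.1
    · exact hE.subsingleton_crossing h (mem_equalPairs.1 hk).1
        ⟨hz, crossing hqz hcrit⟩ ⟨hz', crossing hqz' hcrit'⟩

theorem IsGuide.isCollarFamily_blend (h0 : posV 0) :
    IsCollarFamily E (blend g (fun t => E (sphPt t)) q ψ) where
  contDiffAt := hE.contDiffAt
  fderiv_ne_zero := hE.fderiv_ne_zero
  contDiff := contDiff_blend h.contDiff hE.contDiff hq.contDiff hψ.contDiff
  periodic τ t := by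
    simp only [blend, h.periodic t, hq.periodic t, periodic_sphPt t]
  initial t := by simp [blend, hψ.zero]
  outward t ht := by
    rw [fderiv_blend_right h.contDiff hE.contDiff hq.contDiff hψ.contDiff, hψ.zero] at ht
    rw [fderiv_blend_left h.contDiff hE.contDiff hq.contDiff hψ.contDiff, mul_left_comm]
    refine mul_pos (by linarith [mul_nonneg (hq.mem_Icc t).1 hψ.deriv_zero]) ?_
    rcases hE.sphPt_eq_of_deriv_eq_zero (t := t) (by simpa using ht) with hsph | hsph <;>
      rw [hsph, eq_of_sphPt_eq h.periodic hsph]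
    · exact mul_pos_of_neg_of_neg hE.radial_min (sub_neg.2 (hE.lt_valley 0 K.zero_le h0))
    · exact mul_pos hE.radial_max (sub_pos.2 (hE.peak_lt K le_rfl (.inl rfl)))

end

theorem IsLadder.eq_of_peak_mem_Ioo {g : ℝ → ℝ} {K : ℕ} {v p : ℕ → ℝ} (h : IsLadder g K v p)
    {j k : ℕ} (hj : j ≤ K) (hk : k ≤ K) (hmem : p k ∈ Ioo (v j) (v (j + 1))) : k = j := by
  have hjk := (h.valley_strictMonoOn.lt_iff_lt (mem_Iic.2 (by omega)) (mem_Iic.2 (by omega))).1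
    (hmem.1.trans (h.peak_lt_valley k hk))
  have hkj := (h.valley_strictMonoOn.lt_iff_lt (mem_Iic.2 (by omega)) (mem_Iic.2 (by omega))).1
    ((h.valley_lt_peak k hk).trans hmem.2)
  omega

theorem IsLadder.valley_notMem_Ioo {g : ℝ → ℝ} {K : ℕ} {v p : ℕ → ℝ} (h : IsLadder g K v p)
    {j k : ℕ} (hj : j ≤ K) (hk : k ≤ K) : v k ∉ Ioo (v j) (v (j + 1)) := fun hmem => by
  have hjk := (h.valley_strictMonoOn.lt_iff_lt (mem_Iic.2 (by omega)) (mem_Iic.2 (by omega))).1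
    hmem.1
  have hkj := (h.valley_strictMonoOn.lt_iff_lt (mem_Iic.2 (by omega)) (mem_Iic.2 (by omega))).1
    hmem.2
  omega

section

variable {g G q : ℝ → ℝ} {K : ℕ} {v p : ℕ → ℝ} {B : Finset ℕ} {d ε : ℝ}
  (h : IsLadder g K v p) (hB : ∀ k ∈ B, k < K) (hq : IsPlateau g G v p B d ε q)
include h hB hq

theorem IsPlateau.valley_eq_zero {k : ℕ} (hk : k ≤ K) : q (v k) = 0 := by
  by_contra hqk
  have hv0 := h.valley_strictMonoOn.monotoneOn (mem_Iic.2 (by omega)) (mem_Iic.2 (by omega))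
    k.zero_le
  have hvK := h.valley_strictMonoOn (mem_Iic.2 (by omega)) (mem_Iic.2 le_rfl)
    (Nat.lt_succ_of_le hk)
  obtain ⟨j, hj, hball⟩ := hq.exists_mem_ball (v k) ⟨hv0, h.closing ▸ hvK⟩ hqk
  exact h.valley_notMem_Ioo (hB j hj).le hk (hq.mem_Ioo j hj _ hball)

theorem IsPlateau.peak_eq_zero {k : ℕ} (hk : k ≤ K) (hkB : k ∉ B) : q (p k) = 0 := by
  by_contra hqk
  have hmem := Ioo_subset_Ico_self (h.Ioo_valley_subset hk
    ⟨h.valley_lt_peak k hk, h.peak_lt_valley k hk⟩)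
  obtain ⟨j, hj, hball⟩ := hq.exists_mem_ball (p k) hmem hqk
  exact hkB (h.eq_of_peak_mem_Ioo (hB j hj).le hk (hq.mem_Ioo j hj _ hball) ▸ hj)

end

/-- The function `f` extends the boundary function `g`, and its radial derivative at each node of
the ladder is positive at positive peaks and negative valleys and negative at the other nodes. -/
structure IsLadderExtension (g : ℝ → ℝ) (K : ℕ) (v p : ℕ → ℝ) (posV posP : ℕ → Prop)
    (f : E2 → ℝ) : Prop where
  contDiff : ContDiff ℝ ∞ f
  eq_boundary : ∀ t, f (sphPt t) = g t
  valley_neg : ∀ k ≤ K, posV k → fderiv ℝ f (sphPt (v k)) (sphPt (v k)) < 0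
  valley_pos : ∀ k ≤ K, ¬posV k → 0 < fderiv ℝ f (sphPt (v k)) (sphPt (v k))
  peak_pos : ∀ k ≤ K, posP k → 0 < fderiv ℝ f (sphPt (p k)) (sphPt (p k))
  peak_neg : ∀ k ≤ K, ¬posP k → fderiv ℝ f (sphPt (p k)) (sphPt (p k)) < 0

theorem IsLadder.exists_isLadderExtension {g : ℝ → ℝ} {K : ℕ} {v p : ℕ → ℝ}
    (h : IsLadder g K v p) {posV posP : ℕ → Prop} (h0 : posV 0) (hK : posP K) :
    ∃ f, IsLadderExtension g K v p posV posP f ∧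
      (critPts f).encard ≤ (equalPairs K posV posP).card := by
  obtain ⟨E, hE⟩ := h.exists_isGuide (posP := posP) h0
  have hB : ∀ k ∈ negativePairs K posV posP, k < K := fun k hk => (mem_negativePairs.1 hk).1
  obtain ⟨d, ε, hε, q, hq⟩ := h.exists_isPlateau hB hE.contDiff fun k hk =>
    hE.peak_lt k (hB k hk).le (.inr (.inr (mem_negativePairs.1 hk).2.2))
  obtain ⟨ψ, hψ⟩ := exists_isOvershoot hε
  obtain ⟨f, hf, hfB, ⟨c, hc, hradial⟩, hcard⟩ :=
    (hE.isCollarFamily_blend h hψ hq h0).exists_extension (v 0)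
  have radial (t : ℝ) : fderiv ℝ f (sphPt t) (sphPt t) =
      c * ((1 - 2 * q t) * (g t - E (sphPt t))) := by
    rw [hradial, fderiv_blend_left h.contDiff hE.contDiff hq.contDiff hψ.contDiff, hψ.deriv_one]
    ring
  have radial_of_eq_zero {t : ℝ} (hqt : q t = 0) :
      fderiv ℝ f (sphPt t) (sphPt t) = c * (g t - E (sphPt t)) := by simp [radial, hqt]
  refine ⟨f, ⟨hf, fun t => ?_, fun k hk hV => ?_, fun k hk hV => ?_, fun k hk hP => ?_,
    fun k hk hP => ?_⟩, hcard.trans (hE.encard_fderiv_blend_eq_zero_le h hψ hq h0)⟩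
  · simp [hfB, blend, hψ.one]
  · rw [radial_of_eq_zero (hq.valley_eq_zero h hB hk)]
    exact mul_neg_of_pos_of_neg hc (sub_neg.2 (hE.lt_valley k hk hV))
  · rw [radial_of_eq_zero (hq.valley_eq_zero h hB hk)]
    exact mul_pos hc (sub_pos.2 (hE.valley_lt k hk hV))
  · rw [radial_of_eq_zero (hq.peak_eq_zero h hB hk fun hkB => (mem_negativePairs.1 hkB).2.1 hP)]
    exact mul_pos hc (sub_pos.2 (hE.peak_lt k hk (.inr (.inl hP))))
  · have hkK : k < K := hk.lt_of_ne fun hkK => hP (hkK ▸ hK)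
    by_cases hV : posV (k + 1)
    · rw [radial_of_eq_zero
        (hq.peak_eq_zero h hB hk fun hkB => (mem_negativePairs.1 hkB).2.2 hV)]
      exact mul_neg_of_pos_of_neg hc (sub_neg.2 (hE.lt_peak k hkK hP hV))
    · rw [radial, hq.eq_one k (mem_negativePairs.2 ⟨hkK, hP, hV⟩) _
        (mem_closedBall_self hq.radius_pos.le)]
      have := hE.peak_lt k hk (.inr (.inr hV))
      exact mul_neg_of_pos_of_neg hc (by linarith)

/-! ### The invariant of a ladder -/

theorem IsLadderExtension.card_equalPairs_le {g : ℝ → ℝ} {K : ℕ} {v p : ℕ → ℝ}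
    {posV posP : ℕ → Prop} {f : E2 → ℝ} (h : IsLadder g K v p)
    (hf : IsLadderExtension g K v p posV posP f) :
    ((equalPairs K posV posP).card : ℕ∞) ≤ (critPts f).encard := by
  refine h.card_le_encard_critPts hf.eq_boundary (hf.contDiff.of_le (by simp))
    (fun k hk => (mem_equalPairs.1 hk).1) fun k hk => ?_
  obtain ⟨hkK, hPV⟩ := mem_equalPairs.1 hk
  by_cases hP : posP k
  · exact .inl ⟨hf.peak_pos k hkK.le hP, hf.valley_neg (k + 1) hkK (hPV.1 hP)⟩
  · exact .inr ⟨hf.peak_neg k hkK.le hP, hf.valley_pos (k + 1) hkK (hPV.not.1 hP)⟩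

namespace Ribbon

variable {n : ℕ} {a : Ribbon n}

/-- The node with index `i` exists and is marked `+1`. -/
def IsPositive (a : Ribbon n) (i : ℕ) : Prop := ∃ hi : i < n, a.ν ⟨i, hi⟩ = 1

theorem isPositive_val (i : Fin n) : a.IsPositive i ↔ a.ν i = 1 := by
  simp [IsPositive]

theorem nu_eq_nu_iff (i j : Fin n) : a.ν i = a.ν j ↔ (a.IsPositive i ↔ a.IsPositive j) := by
  rw [isPositive_val, isPositive_val]
  rcases a.nu_sign i with hi | hi <;> rcases a.nu_sign j with hj | hj <;> simp [hi, hj]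

theorem nu_mul_pos_iff (i : Fin n) (r : ℝ) :
    0 < (a.ν i : ℝ) * r ↔ (a.IsPositive i → 0 < r) ∧ (¬a.IsPositive i → r < 0) := by
  rw [isPositive_val]
  rcases a.nu_sign i with hi | hi <;> simp [hi]

theorem nu_mul_neg_iff (i : Fin n) (r : ℝ) :
    (a.ν i : ℝ) * r < 0 ↔ (a.IsPositive i → r < 0) ∧ (¬a.IsPositive i → 0 < r) := by
  rw [isPositive_val]
  rcases a.nu_sign i with hi | hi <;> simp [hi]

theorem fderiv_ne_zero_of_mem_sphere {f : E2 → ℝ} (hf : Differentiable ℝ f)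
    (hfg : ∀ t, f (sphPt t) = a.g t)
    (hnode : ∀ i, fderiv ℝ f (sphPt (a.θ i)) (sphPt (a.θ i)) ≠ 0) {x : E2}
    (hx : x ∈ sphere (0 : E2) 1) : fderiv ℝ f x ≠ 0 := fun hzero => by
  obtain ⟨t, ht, rfl⟩ := exists_sphPt_eq 0 (mem_sphere_zero_iff_norm.1 hx)
  have hg' := deriv_comp_sphPt (hf (sphPt t))
  simp only [hfg, hzero, zero_apply] at hg'
  obtain ⟨i, rfl⟩ := a.crit_only t (by simpa using ht) hg'
  exact hnode i (by rw [hzero, zero_apply])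

/-- The condition on the radial derivative of an extension at the node with index `i`. -/
def HasMarkedSign (a : Ribbon n) (f : E2 → ℝ) (i : Fin n) : Prop :=
  (deriv (deriv a.g) (a.θ i) < 0 →
    0 < (a.ν i : ℝ) * ⟪gradient f (sphPt (a.θ i)), sphPt (a.θ i)⟫) ∧
  (0 < deriv (deriv a.g) (a.θ i) →
    (a.ν i : ℝ) * ⟪gradient f (sphPt (a.θ i)), sphPt (a.θ i)⟫ < 0)

theorem HasMarkedSign.fderiv_ne_zero {f : E2 → ℝ} {i : Fin n} (hf : a.HasMarkedSign f i) :
    fderiv ℝ f (sphPt (a.θ i)) (sphPt (a.θ i)) ≠ 0 := fun hzero => by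
  have hinner : ⟪gradient f (sphPt (a.θ i)), sphPt (a.θ i)⟫ = 0 := by
    rw [inner_gradient_left, hzero]
  rcases (a.node_nondeg i).lt_or_gt with hneg | hpos
  · simpa [hinner] using hf.1 hneg
  · simpa [hinner] using hf.2 hpos

section

variable {K : ℕ} (hn : n = 2 * K + 2) (h : IsLadder a.g K a.valley a.peak) {f : E2 → ℝ}
include h

theorem hasMarkedSign_valley_iff {k : ℕ} (hk : k ≤ K) (hkn : 2 * k < n) :
    a.HasMarkedSign f ⟨2 * k, hkn⟩ ↔
      (a.IsPositive (2 * k) → fderiv ℝ f (sphPt (a.valley k)) (sphPt (a.valley k)) < 0) ∧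
      (¬a.IsPositive (2 * k) → 0 < fderiv ℝ f (sphPt (a.valley k)) (sphPt (a.valley k))) := by
  have hpos := h.deriv2_valley k hk
  rw [valley, angle_of_lt hkn] at hpos ⊢
  rw [HasMarkedSign, nu_mul_neg_iff, inner_gradient_left]
  exact ⟨fun hf => hf.2 hpos, fun hf => ⟨fun hneg => absurd hpos hneg.not_gt, fun _ => hf⟩⟩

theorem hasMarkedSign_peak_iff {k : ℕ} (hk : k ≤ K) (hkn : 2 * k + 1 < n) :
    a.HasMarkedSign f ⟨2 * k + 1, hkn⟩ ↔
      (a.IsPositive (2 * k + 1) → 0 < fderiv ℝ f (sphPt (a.peak k)) (sphPt (a.peak k))) ∧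
      (¬a.IsPositive (2 * k + 1) → fderiv ℝ f (sphPt (a.peak k)) (sphPt (a.peak k)) < 0) := by
  have hneg := h.deriv2_peak k hk
  rw [peak, angle_of_lt hkn] at hneg ⊢
  rw [HasMarkedSign, nu_mul_pos_iff, inner_gradient_left]
  exact ⟨fun hf => hf.1 hneg, fun hf => ⟨fun _ => hf, fun hpos => absurd hpos hneg.not_gt⟩⟩

include hn

theorem isExtension_iff_isLadderExtension :
    IsExtension a f ↔ IsLadderExtension a.g K a.valley a.peak
      (fun k => a.IsPositive (2 * k)) (fun k => a.IsPositive (2 * k + 1)) f := by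
  constructor
  · rintro ⟨hf, hfg, -, hnode⟩
    have valley_sign (k : ℕ) (hk : k ≤ K) :=
      (hasMarkedSign_valley_iff h hk (by omega)).1 (hnode ⟨2 * k, by omega⟩)
    have peak_sign (k : ℕ) (hk : k ≤ K) :=
      (hasMarkedSign_peak_iff h hk (by omega)).1 (hnode ⟨2 * k + 1, by omega⟩)
    exact ⟨hf, hfg, fun k hk => (valley_sign k hk).1, fun k hk => (valley_sign k hk).2,
      fun k hk => (peak_sign k hk).1, fun k hk => (peak_sign k hk).2⟩
  · intro hf
    have hnode : ∀ i, a.HasMarkedSign f i := by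
      rintro ⟨i, hi⟩
      obtain ⟨k, rfl | rfl⟩ := i.even_or_odd'
      · exact (hasMarkedSign_valley_iff h (by omega) hi).2
          ⟨hf.valley_neg k (by omega), hf.valley_pos k (by omega)⟩
      · exact (hasMarkedSign_peak_iff h (by omega) hi).2
          ⟨hf.peak_pos k (by omega), hf.peak_neg k (by omega)⟩
    exact ⟨hf.contDiff, hf.eq_boundary, fun x hx => fderiv_ne_zero_of_mem_sphere
      (hf.contDiff.differentiable (by simp)) hf.eq_boundary
      (fun i => (hnode i).fderiv_ne_zero) hx, hnode⟩

theorem gammaR_eq_card_equalPairs (hmin : a.IsPositive 0) (hmax : a.IsPositive (2 * K + 1)) :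
    gammaR a = (equalPairs K (fun k => a.IsPositive (2 * k))
      (fun k => a.IsPositive (2 * k + 1))).card := by
  refine le_antisymm ?_ (le_sInf ?_)
  · obtain ⟨f, hf, hcard⟩ := h.exists_isLadderExtension (posV := fun k => a.IsPositive (2 * k))
      (posP := fun k => a.IsPositive (2 * k + 1)) hmin hmax
    exact le_trans (sInf_le ⟨f, (isExtension_iff_isLadderExtension hn h).2 hf, rfl⟩) hcard
  · rintro _ ⟨f, hf, rfl⟩
    exact ((isExtension_iff_isLadderExtension hn h).1 hf).card_equalPairs_le h

end

theorem card_filter_nu_eq_nu {K : ℕ} (hn : n = 2 * K + 2) :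
    ((Finset.Icc 1 (n / 2 - 1)).filter fun k : ℕ =>
      a.ν ⟨(2 * k - 1) % n, Nat.mod_lt _ a.n_pos⟩ = a.ν ⟨(2 * k) % n, Nat.mod_lt _ a.n_pos⟩).card =
    (equalPairs K (fun k => a.IsPositive (2 * k)) (fun k => a.IsPositive (2 * k + 1))).card := by
  have mem_iff {k : ℕ} (hk : k < K) :
      a.ν ⟨(2 * (k + 1) - 1) % n, Nat.mod_lt _ a.n_pos⟩ =
        a.ν ⟨(2 * (k + 1)) % n, Nat.mod_lt _ a.n_pos⟩ ↔
      (a.IsPositive (2 * k + 1) ↔ a.IsPositive (2 * (k + 1))) := by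
    rw [nu_eq_nu_iff]
    dsimp only
    rw [Nat.mod_eq_of_lt (by omega), Nat.mod_eq_of_lt (by omega)]
    rfl
  refine Finset.card_nbij' (· - 1) (· + 1) (fun k hk => ?_) (fun k hk => ?_) (fun k hk => ?_)
    fun _ _ => rfl
  · obtain ⟨hk, hnu⟩ := Finset.mem_filter.1 hk
    obtain ⟨k, rfl⟩ := Nat.exists_eq_add_of_le' (Finset.mem_Icc.1 hk).1
    have hkK : k < K := by
      have := (Finset.mem_Icc.1 hk).2
      omega
    exact mem_equalPairs.2 ⟨hkK, (mem_iff hkK).1 hnu⟩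
  · obtain ⟨hkK, hP⟩ := mem_equalPairs.1 hk
    exact Finset.mem_filter.2 ⟨Finset.mem_Icc.2 (by grind), (mem_iff hkK).2 hP⟩
  · exact Nat.sub_add_cancel (Finset.mem_Icc.1 (Finset.mem_filter.1 hk).1).1

end Ribbon

end

/-- Let `a` be a ladder with `n ≥ 4` nodes (its levels, listed in increasing order, realize
the zig-zag permutation `(1, 3, 2, 5, 4, …, n−2, n)`), whose value-minimal node `p 1` and
value-maximal node `p n` are positive. Then `γ(a)` equals the number of indices
`k ∈ {1, …, n/2 − 1}` with `ν (p (2k)) = ν (p (2k+1))` (1-indexed). -/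
theorem stmt_19 (n : ℕ) (hn : 4 ≤ n) (a : Ribbon n)
    (hladder : StrictMono (fun j : Fin n => a.g (a.θ (zigFin n j))))
    (hmin : a.ν ⟨0, by omega⟩ = 1) (hmax : a.ν ⟨n - 1, by omega⟩ = 1) :
    gammaR a = ((((Finset.Icc 1 (n / 2 - 1)).filter (fun k : ℕ =>
      a.ν ⟨(2 * k - 1) % n, Nat.mod_lt _ (by omega)⟩ =
        a.ν ⟨(2 * k) % n, Nat.mod_lt _ (by omega)⟩)).card : ℕ) : ℕ∞) := by
  obtain ⟨m, hm⟩ := a.n_even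
  obtain ⟨K, rfl⟩ := Nat.exists_eq_add_of_le' (show 1 ≤ m by omega)
  have hnK : n = 2 * K + 2 := by omega
  have ladder : IsLadder a.g K a.valley a.peak := Ribbon.isLadder hnK (by omega) hladder
  have positive_min : a.IsPositive 0 := ⟨by omega, hmin⟩
  have positive_max : a.IsPositive (2 * K + 1) := by
    subst hnK
    exact ⟨by omega, hmax⟩
  rw [Ribbon.gammaR_eq_card_equalPairs hnK ladder positive_min positive_max,
    Ribbon.card_filter_nu_eq_nu hnK]
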